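/- arXiv:1303.1551 — 3 statements merged into one kernel-verified Lean document; each statement's English description precedes it below -/
import Mathlib

section
/- Let T be a finite tree with at least 2 vertices that is automorphism-free, and suppose T is minimal, i.e., there is no leaf l of T such that the tree T \ l obtained by deleting l is also automorphism-free. Then T is isomorphic (as a graph) to the tree E7. -/
open SimpleGraph

/-- A graph is automorphism-free if its only automorphism is the trivial (identity) one. -/
def AutFree {V : Type*} (G : SimpleGraph V) : Prop :=
  ∀ φ : G ≃g G, ∀ v : V, φ v = v

/-- A leaf of a graph is a vertex of degree one. -/
def IsLeaf {V : Type*} (G : SimpleGraph V) (l : V) : Prop :=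
  (G.neighborSet l).ncard = 1

/-- The tree `E7`: a vertex of degree three (vertex 0) with three disjoint
paths of lengths 1, 2, and 3 attached (the spider with legs 1, 2, 3). -/
def E7 : SimpleGraph (Fin 7) :=
  SimpleGraph.fromEdgeSet {s(0, 1), s(0, 2), s(2, 3), s(0, 4), s(4, 5), s(5, 6)}

/-!
For a vertex `c` and a neighbor `b`, let the branch at `c` towards `b` be the component of `b` after
the edge `cb` is removed. Inside every branch with at least two vertices there is a leaf `l` such
that any automorphism of `T \ l` fixing both ends of the edge `cb` also fixes the neighbor of `l`,
hence extends to an automorphism of `T`: always descend into a child branch of least order. By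
minimality `T \ l` does have a nontrivial automorphism, which therefore moves `c` or `b`; and since
it permutes the centroids of `T \ l`, it can only do so in a few ways. Let `T` have `n` vertices and
let `c` be a centroid.

* No branch at `c` has `n / 2` vertices, and at most one has `(n - 1) / 2`: otherwise, deleting `l`
  from each of two such halves in turn copies every half into the other one shifted by one vertex,
  so by induction on the distance both are paths, and then `T` is a path, which has a reversal.
* Taking `l` in the whole tree rooted at `c` moves `c`, so a branch with `m = (n - 1) / 2` vertices
  exists. Taking `l` in it fixes `c` and yields a second branch with `m - 1` vertices, and the
  single remaining vertex must be a leaf at `c`.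
* Deleting this leaf exchanges `c` with the root of the largest branch, which again forces the two
  large branches to be paths. Taking `l` in the second one finally gives `m = 3`.
-/

namespace AsymmetricTree

variable {V : Type*} {G : SimpleGraph V} {r u v w x y l c b b₁ b₂ t e : V} {f : Equiv.Perm V}
  {A B S : Set V} {k : ℕ}

/-! ### Branches of a tree -/

theorem exists_dist_add_one (hG : G.Connected) (h : x ≠ y) :
    ∃ z, G.Adj z y ∧ G.dist x y = G.dist x z + 1 := by
  obtain ⟨p, hp⟩ := hG.exists_walk_length_eq_dist y x
  cases p with
  | nil => exact absurd rfl h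
  | @cons _ z _ hyz p =>
    refine ⟨z, hyz.symm, ?_⟩
    have h_le : G.dist x z ≤ p.length := dist_comm (G := G) ▸ dist_le p
    have h_tri : G.dist x y ≤ G.dist x z + G.dist z y := hG.dist_triangle
    rw [dist_eq_one_iff_adj.2 hyz.symm] at h_tri
    rw [Walk.length_cons, dist_comm] at hp
    omega

theorem length_eq_dist_of_isPath (hG : G.IsAcyclic) {p : G.Walk x y} (hp : p.IsPath) :
    p.length = G.dist x y := by
  obtain ⟨q, hq, h_length⟩ := p.reachable.exists_path_of_dist
  have := hG.subsingleton_path x y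
  obtain rfl : p = q := congrArg Subtype.val (Subsingleton.elim (⟨p, hp⟩ : G.Path x y) ⟨q, hq⟩)
  exact h_length

theorem dist_induce (hG : G.IsAcyclic) {s : Set V} (hs : (G.induce s).Connected) (x y : s) :
    (G.induce s).dist x y = G.dist (x : V) y := by
  obtain ⟨p, hp, h_length⟩ := hs.exists_path_of_dist x y
  have h_map := length_eq_dist_of_isPath hG
    (hp.map (f := (Embedding.induce s).toHom) Subtype.val_injective)
  rw [← h_length, ← Walk.length_map]
  exact h_map

theorem dist_map_iso {W : Type*} {H : SimpleGraph W} (φ : G ≃g H) (hG : G.Connected) (x y : V) :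
    H.dist (φ x) (φ y) = G.dist x y := by
  have hH : H.Connected := φ.connected_iff.1 hG
  obtain ⟨p, hp⟩ := hG.exists_walk_length_eq_dist x y
  obtain ⟨q, hq⟩ := hH.exists_walk_length_eq_dist (φ x) (φ y)
  apply le_antisymm
  · simpa [hp] using dist_le (p.map φ.toHom)
  · simpa [hq] using dist_le (q.map φ.symm.toHom)

/-- The vertices `x` such that `v` lies on a geodesic from `r` to `x`. In a tree rooted at `r` these
are the descendants of `v`, including `v` itself; if `r` and `v` are adjacent, they form the side of
`v` when the edge between `r` and `v` is removed. -/
def branch (G : SimpleGraph V) (r v : V) : Set V :=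
  {x | G.dist r x = G.dist r v + G.dist v x}

theorem mem_branch : x ∈ branch G r v ↔ G.dist r x = G.dist r v + G.dist v x :=
  Iff.rfl

theorem self_mem_branch : v ∈ branch G r v := by
  simp [branch]

theorem branch_self : branch G r r = Set.univ := by
  simp [branch]

theorem mem_branch_of_adj (h : G.Adj u v) : x ∈ branch G u v ↔ G.dist u x = G.dist v x + 1 := by
  rw [mem_branch, dist_eq_one_iff_adj.2 h, add_comm]

theorem branch_subset_branch (hG : G.Connected) (h : w ∈ branch G r v) :
    branch G r w ⊆ branch G r v := fun x hx => by
  have h₁ : G.dist v x ≤ G.dist v w + G.dist w x := hG.dist_triangle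
  have h₂ : G.dist r x ≤ G.dist r v + G.dist v x := hG.dist_triangle
  simp only [mem_branch] at *
  omega

theorem exists_adj_mem_branch (hG : G.Connected) (hx : x ∈ branch G r v) (h : x ≠ v) :
    ∃ w, G.Adj v w ∧ w ∈ branch G r v ∧ x ∈ branch G r w := by
  obtain ⟨w, hwv, hw⟩ := exists_dist_add_one hG h
  have h₁ : G.dist r w ≤ G.dist r v + G.dist v w := hG.dist_triangle
  have h₂ : G.dist r x ≤ G.dist r w + G.dist w x := hG.dist_triangle
  rw [dist_comm, dist_comm (u := x)] at hw
  have hvw := dist_eq_one_iff_adj.2 hwv.symm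
  refine ⟨w, hwv.symm, ?_, ?_⟩ <;> simp only [mem_branch] at * <;> omega

theorem exists_dist_eq_mem_branch (hG : G.Connected) {j : ℕ} (hj : j ≤ G.dist r x) :
    ∃ z, G.dist r z = j ∧ x ∈ branch G r z := by
  induction hj using Nat.decreasingInduction with
  | self => exact ⟨x, rfl, self_mem_branch⟩
  | of_succ j _ ih =>
    obtain ⟨z, hz, hxz⟩ := ih
    have h_ne : r ≠ z := by rintro rfl; simp at hz
    obtain ⟨y, hyz, hy⟩ := exists_dist_add_one hG h_ne
    refine ⟨y, by omega, branch_subset_branch hG ?_ hxz⟩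
    simp only [mem_branch, hy, dist_eq_one_iff_adj.2 hyz]

theorem eq_of_mem_branch (hG : G.IsTree) (h : G.dist r v = G.dist r w) (hv : x ∈ branch G r v)
    (hw : x ∈ branch G r w) : v = w := by
  have exists_geodesic : ∀ z, x ∈ branch G r z →
      ∃ p : G.Walk r x, p.IsPath ∧ p.getVert (G.dist r z) = z := fun z hz => by
    obtain ⟨p, hp⟩ := hG.connected.exists_walk_length_eq_dist r z
    obtain ⟨q, hq⟩ := hG.connected.exists_walk_length_eq_dist z x
    refine ⟨p.append q, Walk.isPath_of_length_eq_dist _ ?_, by simp [Walk.getVert_append, hp]⟩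
    rw [Walk.length_append, hp, hq, hz]
  obtain ⟨p, hp, hpv⟩ := exists_geodesic v hv
  obtain ⟨q, hq, hqw⟩ := exists_geodesic w hw
  rw [← hpv, ← hqw, h, (hG.existsUnique_path r x).unique hp hq]

theorem disjoint_branch (hG : G.IsTree) (h : G.dist r v = G.dist r w) (hne : v ≠ w) :
    Disjoint (branch G r v) (branch G r w) :=
  Set.disjoint_left.2 fun _ hv hw => hne (eq_of_mem_branch hG h hv hw)

theorem eq_of_adj_of_dist_add_one (hG : G.IsTree) (hv : G.Adj v x) (hw : G.Adj w x)
    (hrv : G.dist r x = G.dist r v + 1) (hrw : G.dist r x = G.dist r w + 1) : v = w :=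
  eq_of_mem_branch hG (r := r) (x := x) (by omega)
    (by rw [mem_branch, hrv, dist_eq_one_iff_adj.2 hv])
    (by rw [mem_branch, hrw, dist_eq_one_iff_adj.2 hw])

theorem compl_branch (hG : G.IsTree) (h : G.Adj u v) : (branch G u v)ᶜ = branch G v u := by
  ext x
  have := hG.dist_eq_dist_add_one_of_adj x h
  rw [dist_comm, dist_comm (v := v)] at this
  rw [Set.mem_compl_iff, mem_branch_of_adj h, mem_branch_of_adj h.symm]
  omega

theorem notMem_branch (hG : G.IsTree) (h : G.Adj u v) : u ∉ branch G u v := by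
  rw [← Set.mem_compl_iff, compl_branch hG h]
  exact self_mem_branch

theorem ncard_branch_inter_add_ncard_branch_inter [Finite V] (hG : G.IsTree) (h : G.Adj u v)
    (S : Set V) : (branch G u v ∩ S).ncard + (branch G v u ∩ S).ncard = S.ncard := by
  rw [← compl_branch hG h, Set.inter_comm, Set.inter_comm (branch G u v)ᶜ, ← Set.sdiff_eq,
    Set.ncard_inter_add_ncard_sdiff_eq_ncard]

theorem ncard_branch_add_ncard_branch [Finite V] (hG : G.IsTree) (h : G.Adj u v) :
    (branch G u v).ncard + (branch G v u).ncard = Nat.card V := by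
  simpa using ncard_branch_inter_add_ncard_branch_inter hG h Set.univ

theorem branch_ssubset_branch (hG : G.IsTree) (hb : G.Adj v w) (hu : G.Adj v u) (h : w ≠ u) :
    branch G v w ⊂ branch G u v := by
  refine LE.le.ssubset_of_mem_notMem ?_ self_mem_branch (notMem_branch hG hb)
  rw [← compl_branch hG hu, Set.subset_compl_iff_disjoint_right]
  refine disjoint_branch hG ?_ h
  rw [dist_eq_one_iff_adj.2 hb, dist_eq_one_iff_adj.2 hu]

theorem dist_add_dist_of_mem_support (hG : G.Connected) {p : G.Walk x y}
    (hp : p.length = G.dist x y) (hv : v ∈ p.support) : G.dist x y = G.dist x v + G.dist v y := by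
  obtain ⟨q, q', rfl⟩ := p.mem_support_iff_exists_append.1 hv
  rw [Walk.length_append] at hp
  have h₁ : G.dist x y ≤ G.dist x v + G.dist v y := hG.dist_triangle
  have h₂ := dist_le q
  have h₃ := dist_le q'
  omega

theorem mem_branch_of_mem_support (hG : G.Connected) (hx : x ∈ branch G r v) {p : G.Walk v x}
    (hp : p.length = G.dist v x) (hy : y ∈ p.support) : y ∈ branch G r v := by
  have h₁ := dist_add_dist_of_mem_support hG hp hy
  have h₂ : G.dist r x ≤ G.dist r y + G.dist y x := hG.dist_triangle
  have h₃ : G.dist r y ≤ G.dist r v + G.dist v y := hG.dist_triangle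
  simp only [mem_branch] at *
  omega

theorem dist_of_mem_branch_of_mem_branch (hG : G.IsTree) (h : G.Adj u v) (hx : x ∈ branch G v u)
    (hy : y ∈ branch G u v) : G.dist x y = G.dist x u + 1 + G.dist v y := by
  obtain ⟨p, hp⟩ := hG.connected.exists_walk_length_eq_dist u x
  obtain ⟨q, hq⟩ := hG.connected.exists_walk_length_eq_dist v y
  have h_disjoint : ∀ z ∈ p.support, z ∉ q.support := fun z hzp hzq => by
    have hzv := mem_branch_of_mem_support hG.connected hy hq hzq
    rw [← compl_branch hG h.symm] at hzv
    exact hzv (mem_branch_of_mem_support hG.connected hx hp hzp)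
  have h_path : (p.reverse.append (.cons h q)).IsPath := by
    rw [Walk.isPath_def, Walk.support_append, Walk.support_cons, List.tail_cons,
      Walk.support_reverse, List.nodup_append']
    refine ⟨List.nodup_reverse.2 (p.isPath_of_length_eq_dist hp).support_nodup,
      (q.isPath_of_length_eq_dist hq).support_nodup, fun z hz => h_disjoint z (by simpa using hz)⟩
  rw [← length_eq_dist_of_isPath hG.isAcyclic h_path, dist_comm, ← hp, ← hq]
  simp only [Walk.length_append, Walk.length_reverse, Walk.length_cons]
  omega

theorem exists_adj_mem_branch_self (hG : G.Connected) (h : x ≠ v) :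
    ∃ w, G.Adj v w ∧ x ∈ branch G v w := by
  obtain ⟨w, hvw, -, hxw⟩ := exists_adj_mem_branch hG (r := v) (branch_self ▸ Set.mem_univ x) h
  exact ⟨w, hvw, hxw⟩

theorem dist_add_one_of_adj_of_mem_branch (h : G.Adj v w) (hw : w ∈ branch G r v) :
    G.dist r w = G.dist r v + 1 := by
  rw [mem_branch.1 hw, dist_eq_one_iff_adj.2 h]

theorem branch_ssubset_branch_of_mem (hG : G.Connected) (h : G.Adj v w) (hw : w ∈ branch G r v) :
    branch G r w ⊂ branch G r v := by
  refine (branch_subset_branch hG hw).ssubset_of_mem_notMem self_mem_branch fun hv => ?_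
  have := mem_branch.1 hv
  rw [dist_add_one_of_adj_of_mem_branch h hw] at this
  omega

theorem eq_of_adj_of_mem_branch (hG : G.Connected) (hb : G.Adj c b) (hw : G.Adj c w)
    (h : b ∈ branch G c w) : b = w := by
  rw [mem_branch_of_adj hw, dist_eq_one_iff_adj.2 hb] at h
  exact (hG.dist_eq_zero_iff.1 (by omega)).symm

theorem insert_branch_eq [Finite V] (hG : G.IsTree) (hb : G.Adj c b) (hw : G.Adj c w) (h : w ≠ b)
    (h_card : (branch G b c).ncard ≤ (branch G c w).ncard + 1) :
    insert c (branch G c w) = branch G b c := by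
  refine Set.eq_of_subset_of_ncard_le ?_ ?_
  · exact Set.insert_subset self_mem_branch (branch_ssubset_branch hG hw hb h).subset
  · rwa [Set.ncard_insert_of_notMem (notMem_branch hG hw)]

theorem notMem_branch_of_mem_branch (hG : G.IsTree) (hb : G.Adj c b) (hw : G.Adj c w) (h : w ≠ b)
    (hx : x ∈ branch G c b) : x ∉ branch G c w :=
  Set.disjoint_right.1 (disjoint_branch hG
    ((dist_eq_one_iff_adj.2 hw).trans (dist_eq_one_iff_adj.2 hb).symm) h) hx

theorem mem_branch_of_adj_of_ne (hG : G.IsTree) (hw : G.Adj v w) (hu : G.Adj v u) (h : w ≠ u) :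
    w ∈ branch G u v :=
  (branch_ssubset_branch hG hw hu h).subset self_mem_branch

theorem eq_or_eq_of_insert_branch_eq (hG : G.IsTree) (h₁ : G.Adj c b₁) (h₂ : G.Adj c b₂)
    (h : insert c (branch G c b₂) = branch G b₁ c) (hw : G.Adj c w) : w = b₁ ∨ w = b₂ := by
  refine or_iff_not_imp_left.2 fun hwb => ?_
  have hw_mem := mem_branch_of_adj_of_ne hG hw h₁ hwb
  rw [← h] at hw_mem
  exact eq_of_adj_of_mem_branch hG.connected hw h₂ (hw_mem.resolve_left hw.ne')

/-! ### Automorphisms after deleting a leaf -/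

theorem eq_of_isLeaf_of_adj (hl : IsLeaf G l) (hx : G.Adj l x) (hy : G.Adj l y) : x = y := by
  obtain ⟨z, hz⟩ := Set.ncard_eq_one.1 hl
  have eq_z : ∀ {u}, G.Adj l u → u = z := fun {u} hu => hz.subset hu
  rw [eq_z hx, eq_z hy]

theorem exists_adj_of_isLeaf (hl : IsLeaf G l) : ∃ q, G.Adj l q :=
  Set.nonempty_of_ncard_ne_zero (hl.trans_ne one_ne_zero)

theorem branch_eq_singleton_of_isLeaf (hG : G.Connected) (hl : IsLeaf G l) (h : r ≠ l) :
    branch G r l = {l} := by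
  refine Set.eq_singleton_iff_unique_mem.2 ⟨self_mem_branch, fun x hx => ?_⟩
  by_contra h_ne
  obtain ⟨w, hlw, hw, -⟩ := exists_adj_mem_branch hG hx h_ne
  obtain ⟨z, hzl, hz⟩ := exists_dist_add_one hG h
  rw [mem_branch, eq_of_isLeaf_of_adj hl hlw hzl.symm, dist_eq_one_iff_adj.2 hzl.symm] at hw
  omega

theorem isLeaf_of_branch_eq_singleton (hG : G.IsTree) (h : r ≠ l) (hl : branch G r l = {l}) :
    IsLeaf G l := by
  obtain ⟨q, hql, hq⟩ := exists_dist_add_one hG.connected h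
  refine Set.ncard_eq_one.2 ⟨q, Set.eq_singleton_iff_unique_mem.2 ⟨hql.symm, fun z hz => ?_⟩⟩
  rcases hG.dist_eq_dist_add_one_of_adj r hz with hrz | hrz
  · exact eq_of_adj_of_dist_add_one hG hz.symm hql hrz hq
  · have hz' : z ∈ branch G r l := by rw [mem_branch, hrz, dist_eq_one_iff_adj.2 hz]
    exact absurd (hl.subset hz') (G.ne_of_adj hz).symm

/-- The permutation `f` extends an automorphism of `G` with the leaf `l` deleted by `f l = l`.
Preservation of adjacency is encoded as preservation of the distances of `G`, which agree with
those of the smaller tree. -/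
structure IsDeletionAut (G : SimpleGraph V) (l : V) (f : Equiv.Perm V) : Prop where
  apply_self : f l = l
  dist_apply : ∀ {x y}, x ≠ l → y ≠ l → G.dist (f x) (f y) = G.dist x y

namespace IsDeletionAut

theorem apply_eq_leaf_iff (hf : IsDeletionAut G l f) : f x = l ↔ x = l := by
  rw [← f.apply_eq_iff_eq (x := x), hf.apply_self]

theorem apply_ne (hf : IsDeletionAut G l f) (hx : x ≠ l) : f x ≠ l :=
  hf.apply_eq_leaf_iff.not.2 hx

theorem adj_apply (hf : IsDeletionAut G l f) (hx : x ≠ l) (hy : y ≠ l) :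
    G.Adj (f x) (f y) ↔ G.Adj x y := by
  rw [← dist_eq_one_iff_adj, hf.dist_apply hx hy, dist_eq_one_iff_adj]

theorem image_branch (hf : IsDeletionAut G l f) (hr : r ≠ l) (hv : v ≠ l) :
    f '' (branch G r v \ {l}) = branch G (f r) (f v) \ {l} := by
  ext y
  obtain ⟨x, rfl⟩ := f.surjective y
  rw [f.injective.mem_set_image, Set.mem_sdiff, Set.mem_sdiff, Set.mem_singleton_iff,
    Set.mem_singleton_iff, hf.apply_eq_leaf_iff]
  refine and_congr_left fun hx => ?_
  rw [mem_branch, mem_branch, hf.dist_apply hr hx, hf.dist_apply hr hv, hf.dist_apply hv hx]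

theorem ncard_branch_diff (hf : IsDeletionAut G l f) (hr : r ≠ l) (hv : v ≠ l) :
    (branch G (f r) (f v) \ {l}).ncard = (branch G r v \ {l}).ncard := by
  rw [← hf.image_branch hr hv, Set.ncard_image_of_injective _ f.injective]

theorem eq_of_autFree {q : V} (hf : IsDeletionAut G l f) (hG : AutFree G) (hl : IsLeaf G l)
    (hq : G.Adj l q) (hfq : f q = q) (x : V) : f x = x := by
  have adj_leaf_iff : ∀ y, G.Adj l y ↔ y = q := fun y =>
    ⟨fun hy => eq_of_isLeaf_of_adj hl hy hq, fun hy => hy ▸ hq⟩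
  have adj_leaf_apply : ∀ y, G.Adj l (f y) ↔ G.Adj l y := fun y => by
    rw [adj_leaf_iff, adj_leaf_iff, ← f.apply_eq_iff_eq (x := y), hfq]
  refine hG ⟨f, fun {x y} => ?_⟩ x
  by_cases hx : x = l
  · rw [hx, hf.apply_self, adj_leaf_apply]
  by_cases hy : y = l
  · rw [hy, hf.apply_self, G.adj_comm, adj_leaf_apply, G.adj_comm]
  exact hf.adj_apply hx hy

end IsDeletionAut

theorem connected_induce_of_isLeaf [Finite V] (hG : G.Connected) (hl : IsLeaf G l) :
    (G.induce {x | x ≠ l}).Connected := by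
  have := Fintype.ofFinite (G.neighborSet l)
  refine hG.induce_compl_singleton_of_degree_eq_one (v := l) ?_
  rw [← G.card_neighborSet_eq_degree, ← Nat.card_eq_fintype_card]
  exact hl

theorem isDeletionAut_ofSubtype [Finite V] [DecidableEq V] (hG : G.IsTree) (hl : IsLeaf G l)
    (φ : G.induce {x | x ≠ l} ≃g G.induce {x | x ≠ l}) :
    IsDeletionAut G l (Equiv.Perm.ofSubtype (p := (· ≠ l)) φ.toEquiv) where
  apply_self := Equiv.Perm.ofSubtype_apply_of_not_mem _ (by simp)
  dist_apply {x y} hx hy := by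
    have h_conn := connected_induce_of_isLeaf hG.connected hl
    have apply_eq : ∀ {z} (hz : z ≠ l),
        Equiv.Perm.ofSubtype (p := (· ≠ l)) φ.toEquiv z = (φ ⟨z, hz⟩ : V) := fun hz =>
      Equiv.Perm.ofSubtype_apply_of_mem (p := (· ≠ l)) φ.toEquiv hz
    rw [apply_eq hx, apply_eq hy, ← dist_induce hG.isAcyclic h_conn, dist_map_iso φ h_conn,
      dist_induce hG.isAcyclic h_conn]

/-- An automorphism-free tree that loses automorphism-freeness whenever a leaf is deleted. The tree
may be infinite or have a single vertex. -/
structure IsMinimalAutFreeTree (G : SimpleGraph V) : Prop where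
  isTree : G.IsTree
  autFree : AutFree G
  not_autFree_delete : ∀ l, IsLeaf G l → ¬ AutFree (G.induce {x | x ≠ l})

theorem IsMinimalAutFreeTree.exists_isDeletionAut [Finite V] (hG : IsMinimalAutFreeTree G)
    (hl : IsLeaf G l) : ∃ f, IsDeletionAut G l f ∧ ∀ q, G.Adj l q → f q ≠ q := by
  classical
  have h_aut := hG.not_autFree_delete l hl
  simp only [AutFree, not_forall] at h_aut
  obtain ⟨φ, x, hx⟩ := h_aut
  have hf := isDeletionAut_ofSubtype hG.isTree hl φ
  refine ⟨_, hf, fun q hq hfq => hx (Subtype.ext ?_)⟩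
  rw [← hf.eq_of_autFree hG.autFree hl hq hfq x]
  exact (Equiv.Perm.ofSubtype_apply_of_mem _ x.2).symm

theorem IsDeletionAut.apply_eq_of_ncard_branch_le [Finite V] (hG : G.IsTree)
    (hf : IsDeletionAut G l f) (hr : r ≠ l) (hfr : f r = r) (hw : w ≠ l) (hl : l ∈ branch G r w)
    (h : (branch G r w).ncard ≤ (branch G r (f w)).ncard) : f w = w := by
  by_contra h_ne
  have h_dist : G.dist r (f w) = G.dist r w := by
    rw [← hf.dist_apply hr hw, hfr]
  have hl' : l ∉ branch G r (f w) :=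
    Set.disjoint_right.1 (disjoint_branch hG h_dist h_ne) hl
  have h_card := hf.ncard_branch_diff hr hw
  rw [hfr, Set.sdiff_singleton_eq_self hl'] at h_card
  have := Set.ncard_sdiff_singleton_add_one hl
  omega

theorem exists_leaf_fixing_neighbor [Finite V] (hG : G.IsTree) (h : 2 ≤ (branch G r v).ncard) :
    ∃ l ∈ branch G r v, l ≠ v ∧ IsLeaf G l ∧ ∀ q, G.Adj l q →
      ∀ f, IsDeletionAut G l f → f r = r → f v = v → f q = q := by
  -- Descend into a child branch of least order. Without `l` it is smaller than all its siblings, so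
  -- an automorphism of `G` with `l` deleted that fixes `r` and `v` maps it to itself.
  induction h_card : (branch G r v).ncard using Nat.strong_induction_on generalizing v with
  | _ n ih =>
  obtain ⟨x, hx, hxv⟩ := Set.exists_ne_of_one_lt_ncard h v
  obtain ⟨w₀, hw₀⟩ := exists_adj_mem_branch hG.connected hx hxv
  obtain ⟨w, ⟨hvw, hw⟩, h_min⟩ := Set.exists_min_image {w | G.Adj v w ∧ w ∈ branch G r v}
    (fun w => (branch G r w).ncard) (Set.toFinite _) ⟨w₀, hw₀.1, hw₀.2.1⟩
  have hrw : G.dist r w = G.dist r v + 1 := dist_add_one_of_adj_of_mem_branch hvw hw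
  have ne_of_mem : ∀ {y}, y ∈ branch G r w → r ≠ y ∧ v ≠ y := fun {y} hy => by
    constructor <;> rintro rfl <;> rw [mem_branch, hrw] at hy
    · rw [dist_self] at hy; omega
    · omega
  rcases lt_or_ge (branch G r w).ncard 2 with h_lt | h_ge
  · have h_pos : 0 < (branch G r w).ncard := (Set.nonempty_of_mem self_mem_branch).ncard_pos
    obtain ⟨w', hw'⟩ := Set.ncard_eq_one.1 (by omega : (branch G r w).ncard = 1)
    obtain rfl : w = w' := hw'.subset self_mem_branch
    have h_leaf := isLeaf_of_branch_eq_singleton hG (ne_of_mem self_mem_branch).1 hw'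
    refine ⟨w, hw, hvw.ne', h_leaf, fun q hq f _ _ hfv => ?_⟩
    rwa [eq_of_isLeaf_of_adj h_leaf hq hvw.symm]
  · obtain ⟨l, hl, hlw, h_leaf, h_fix⟩ := ih _
      (h_card ▸ Set.ncard_lt_ncard (branch_ssubset_branch_of_mem hG.connected hvw hw)) h_ge rfl
    obtain ⟨hrl, hvl⟩ := ne_of_mem hl
    refine ⟨l, branch_subset_branch hG.connected hw hl, hvl.symm, h_leaf,
      fun q hq f hf hfr hfv => h_fix q hq f hf hfr ?_⟩
    refine hf.apply_eq_of_ncard_branch_le hG hrl hfr hlw.symm hl (h_min _ ⟨?_, ?_⟩)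
    · rwa [← hfv, hf.adj_apply hvl hlw.symm]
    · rw [mem_branch, ← hfr, ← hfv, hf.dist_apply hrl hlw.symm, hf.dist_apply hrl hvl,
        hf.dist_apply hvl hlw.symm, mem_branch.1 hw]

theorem IsMinimalAutFreeTree.exists_isDeletionAut_of_branch [Finite V]
    (hG : IsMinimalAutFreeTree G) (h : 2 ≤ (branch G r v).ncard) :
    ∃ l ∈ branch G r v, l ≠ v ∧ IsLeaf G l ∧
      ∃ f, IsDeletionAut G l f ∧ (f r = r → f v ≠ v) := by
  obtain ⟨l, hl, hlv, h_leaf, h_fix⟩ := exists_leaf_fixing_neighbor hG.isTree h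
  obtain ⟨f, hf, h_ne⟩ := hG.exists_isDeletionAut h_leaf
  obtain ⟨q, hq⟩ := exists_adj_of_isLeaf h_leaf
  exact ⟨l, hl, hlv, h_leaf, f, hf, fun hfr hfv => h_ne q hq (h_fix q hq f hf hfr hfv)⟩

/-! ### Centroids -/

/-- The vertex `c` is a centroid for the set `S` of marked vertices: no component of `G` with `c`
removed contains more than half of `S`. The centroids of the whole tree are those for `Set.univ`,
and `S = {l}ᶜ` gives the centroids of the tree with the leaf `l` deleted. -/
def IsCentroid (G : SimpleGraph V) (S : Set V) (c : V) : Prop :=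
  ∀ b, G.Adj c b → 2 * (branch G c b ∩ S).ncard ≤ S.ncard

theorem exists_isCentroid [Finite V] [Nonempty V] (hG : G.IsTree) (S : Set V) :
    ∃ c, IsCentroid G S c := by
  by_contra! h
  simp only [IsCentroid, not_forall, not_le] at h
  obtain ⟨v, hv, h_lt⟩ := h (Classical.arbitrary V)
  obtain ⟨⟨u, c⟩, ⟨huc, hc⟩, h_min⟩ := Set.exists_min_image
    {p : V × V | G.Adj p.1 p.2 ∧ S.ncard < 2 * (branch G p.1 p.2 ∩ S).ncard}
    (fun p => (branch G p.1 p.2).ncard) (Set.toFinite _) ⟨(_, v), hv, h_lt⟩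
  obtain ⟨b, hcb, hb⟩ := h c
  rcases eq_or_ne b u with rfl | hbu
  · have := ncard_branch_inter_add_ncard_branch_inter hG hcb S
    dsimp only at hc
    omega
  · exact (Set.ncard_lt_ncard (branch_ssubset_branch hG hcb huc.symm hbu)).not_ge
      (h_min (c, b) ⟨hcb, hb⟩)

theorem disjoint_branch_of_mem_branch (hG : G.IsTree) {b' : V} (hcb : G.Adj c b) (hub : G.Adj u b')
    (hu : u ∈ branch G c b) (hc : c ∈ branch G u b') :
    Disjoint (branch G b c) (branch G b' u) := by
  refine Set.disjoint_left.2 fun x hx hx' => ?_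
  have h₁ := dist_of_mem_branch_of_mem_branch hG hcb hx hu
  have h₂ := dist_of_mem_branch_of_mem_branch hG hub hx' hc
  rw [dist_comm (u := x) (v := u), dist_comm (u := x) (v := c)] at *
  omega

theorem IsCentroid.eq_or_adj [Finite V] (hG : G.IsTree) (hc : IsCentroid G S c)
    (hu : IsCentroid G S u) (hS : ∀ b, G.Adj c b → u ∈ branch G c b → b ∈ S) :
    c = u ∨ G.Adj c u ∧ 2 * (branch G c u ∩ S).ncard = S.ncard := by
  refine or_iff_not_imp_left.2 fun h_ne => ?_
  obtain ⟨b, hcb, hub⟩ := exists_adj_mem_branch_self hG.connected (Ne.symm h_ne)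
  obtain ⟨b', hub', hcb'⟩ := exists_adj_mem_branch_self hG.connected h_ne
  have h_b := ncard_branch_inter_add_ncard_branch_inter hG hcb S
  have h_b' := ncard_branch_inter_add_ncard_branch_inter hG hub' S
  have hc_le := hc b hcb
  have hu_le := hu b' hub'
  have h_disj := disjoint_branch_of_mem_branch hG hcb hub' hub hcb'
  have hb_mem : b ∈ branch G b' u := by
    by_contra hb
    have h_lt : ((branch G b c ∩ S) ∪ (branch G b' u ∩ S)).ncard < S.ncard :=
      Set.ncard_lt_ncard ⟨by simp, fun h_sub => by
        have := h_sub (hS b hcb hub)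
        simp [hb, notMem_branch hG hcb.symm] at this⟩
    rw [Set.ncard_union_eq (h_disj.mono Set.inter_subset_left Set.inter_subset_left)] at h_lt
    omega
  have h_dist := dist_of_mem_branch_of_mem_branch hG hub' hb_mem hcb'
  rw [dist_comm, dist_eq_one_iff_adj.2 hcb] at h_dist
  obtain rfl : b = u := hG.connected.dist_eq_zero_iff.1 (by omega)
  obtain rfl : b' = c := hG.connected.dist_eq_zero_iff.1 (by omega)
  exact ⟨hcb, by omega⟩

namespace IsDeletionAut

theorem isCentroid_apply (hf : IsDeletionAut G l f) (hG : G.Connected)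
    (hl : IsLeaf G l) (hcl : c ≠ l) (hc : IsCentroid G {l}ᶜ c) : IsCentroid G {l}ᶜ (f c) := by
  intro b hb
  obtain ⟨b, rfl⟩ := f.surjective b
  rcases eq_or_ne b l with rfl | hbl
  · simp [hf.apply_self, branch_eq_singleton_of_isLeaf hG hl (hf.apply_ne hcl)]
  · rw [← Set.sdiff_eq, hf.ncard_branch_diff hcl hbl]
    exact hc b ((hf.adj_apply hcl hbl).1 hb)

theorem apply_eq_or_swap [Finite V] (hf : IsDeletionAut G l f) (hG : G.IsTree)
    (hl : IsLeaf G l) (hcl : c ≠ l)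
    (hc : ∀ b, G.Adj c b → 2 * (branch G c b \ {l}).ncard < Nat.card V) :
    f c = c ∨ G.Adj c (f c) ∧ f (f c) = c ∧
      2 * (branch G c (f c) \ {l}).ncard + 1 = Nat.card V := by
  have h_card : ({l}ᶜ : Set V).ncard + 1 = Nat.card V := by
    rw [add_comm, ← Set.ncard_singleton l, Set.ncard_add_ncard_compl]
  have h_cent : IsCentroid G {l}ᶜ c := fun b hb => by
    have := hc b hb
    rw [← Set.sdiff_eq]
    omega
  have h_cent' := hf.isCentroid_apply hG.connected hl hcl h_cent
  have hfcl := hf.apply_ne hcl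
  have ne_leaf : ∀ {x y}, x ≠ l → y ≠ l → ∀ b, G.Adj x b → y ∈ branch G x b →
      b ∈ ({l}ᶜ : Set V) := by
    rintro x y hx hy b - hyb rfl
    rw [branch_eq_singleton_of_isLeaf hG.connected hl hx] at hyb
    exact hy hyb
  refine or_iff_not_imp_left.2 fun h_ne => ?_
  obtain ⟨h_adj, h_half⟩ := (h_cent.eq_or_adj hG h_cent' (ne_leaf hcl hfcl)).resolve_left
    (Ne.symm h_ne)
  have h_cent'' := hf.isCentroid_apply hG.connected hl hfcl h_cent'
  obtain ⟨h_adj', h_half'⟩ :=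
    (h_cent'.eq_or_adj hG h_cent'' (ne_leaf hfcl (hf.apply_ne hfcl))).resolve_left
      fun h => h_ne (f.injective h.symm)
  refine ⟨h_adj, ?_, by rw [Set.sdiff_eq, h_half, h_card]⟩
  by_contra h_ne'
  have h_lt : (branch G (f c) (f (f c)) ∩ {l}ᶜ).ncard < (branch G c (f c) ∩ {l}ᶜ).ncard :=
    Set.ncard_lt_ncard (LE.le.ssubset_of_mem_notMem
      (Set.inter_subset_inter_left _ (branch_ssubset_branch hG h_adj' h_adj.symm h_ne').subset)
      ⟨self_mem_branch, hfcl⟩ fun h => notMem_branch hG h_adj' h.1)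
  omega

end IsDeletionAut

/-! ### Paths and narrow branches -/

theorem adj_iff_of_injective_dist (hG : G.Connected) (he : Function.Injective (G.dist e)) :
    G.Adj x y ↔ G.dist e x = G.dist e y + 1 ∨ G.dist e y = G.dist e x + 1 := by
  have adj_of_dist : ∀ {x y}, G.dist e y = G.dist e x + 1 → G.Adj x y := fun {x y} h => by
    obtain ⟨z, hzy, hz⟩ := exists_dist_add_one hG (x := e) (y := y) (by rintro rfl; simp at h)
    rwa [he (by omega : G.dist e x = G.dist e z)]
  refine ⟨fun h => ?_, fun h => h.elim (fun h => (adj_of_dist h).symm) adj_of_dist⟩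
  have h_ne : G.dist e x ≠ G.dist e y := he.ne h.ne
  have := h.diff_dist_adj (u := e)
  omega

theorem not_autFree_of_injective_dist [Finite V] [Nontrivial V] (hG : G.Connected)
    (he : Function.Injective (G.dist e)) : ¬ AutFree G := by
  obtain ⟨d, hd⟩ := Finite.exists_max (G.dist e)
  have exists_reflection : ∀ x, ∃ y, G.dist e y + G.dist e x = G.dist e d := fun x => by
    obtain ⟨y, hy, -⟩ := exists_dist_eq_mem_branch hG (Nat.sub_le (G.dist e d) (G.dist e x))
    have := hd x
    exact ⟨y, by omega⟩
  choose g hg using exists_reflection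
  have g_invol : Function.Involutive g := fun x => he (by have := hg x; have := hg (g x); omega)
  intro h
  have h_fix := h ⟨g_invol.toPerm, fun {x y} => by
    rw [Function.Involutive.coe_toPerm, adj_iff_of_injective_dist hG he,
      adj_iff_of_injective_dist hG he]
    have := hg x
    have := hg y
    omega⟩ e
  obtain ⟨x, hx⟩ := exists_ne e
  have hge := hg e
  rw [show g e = e from h_fix, dist_self] at hge
  have := hd x
  have := hG.pos_dist_of_ne hx.symm
  omega

theorem exists_injective_dist [Finite V] (hG : G.IsTree) (h : G.Adj u v)
    (hv : (branch G u v).InjOn (G.dist v)) (hu : (branch G v u).InjOn (G.dist u)) :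
    ∃ e, Function.Injective (G.dist e) := by
  obtain ⟨e, he, h_max⟩ :=
    Set.exists_max_image (branch G u v) (G.dist v) (Set.toFinite _) ⟨v, self_mem_branch⟩
  have dist_near : ∀ x ∈ branch G u v, G.dist e x + G.dist v x = G.dist e v := fun x hx => by
    obtain ⟨z, hz, hez⟩ := exists_dist_eq_mem_branch hG.connected (h_max x hx)
    have hzu : z ∈ branch G u v := by
      have h₁ : G.dist u e ≤ G.dist u z + G.dist z e := hG.connected.dist_triangle
      have h₂ : G.dist u z ≤ G.dist u v + G.dist v z := hG.connected.dist_triangle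
      rw [mem_branch] at *
      omega
    obtain rfl := hv hzu hx hz
    rw [dist_comm (u := e), dist_comm (u := e), hez, add_comm]
  have dist_far : ∀ x ∉ branch G u v, x ∈ branch G v u ∧ G.dist e x = G.dist e v + 1 + G.dist u x :=
    fun x hx => by
      rw [← Set.mem_compl_iff, compl_branch hG h] at hx
      exact ⟨hx, dist_of_mem_branch_of_mem_branch hG h.symm he hx⟩
  refine ⟨e, fun x y hxy => ?_⟩
  by_cases hx : x ∈ branch G u v <;> by_cases hy : y ∈ branch G u v
  · have := dist_near x hx
    have := dist_near y hy
    exact hv hx hy (by omega)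
  · have := dist_near x hx
    have := dist_far y hy
    omega
  · have := dist_far x hx
    have := dist_near y hy
    omega
  · obtain ⟨hx, hex⟩ := dist_far x hx
    obtain ⟨hy, hey⟩ := dist_far y hy
    exact hu hx hy (by omega)

theorem not_autFree_of_injOn_dist [Finite V] (hG : G.IsTree) (h : G.Adj u v)
    (hv : (branch G u v).InjOn (G.dist v)) (hu : (branch G v u).InjOn (G.dist u)) :
    ¬ AutFree G := by
  have : Nontrivial V := ⟨u, v, h.ne⟩
  obtain ⟨e, he⟩ := exists_injective_dist hG h hv hu
  exact not_autFree_of_injective_dist hG.connected he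

theorem not_autFree_of_isLeaf_of_isLeaf (hx : IsLeaf G x) (hy : IsLeaf G y) (hne : x ≠ y)
    (hcx : G.Adj c x) (hcy : G.Adj c y) : ¬ AutFree G := by
  classical
  have adj_x : ∀ z, G.Adj x z ↔ z = c := fun z =>
    ⟨fun h => eq_of_isLeaf_of_adj hx h hcx.symm, fun h => h ▸ hcx.symm⟩
  have adj_y : ∀ z, G.Adj y z ↔ z = c := fun z =>
    ⟨fun h => eq_of_isLeaf_of_adj hy h hcy.symm, fun h => h ▸ hcy.symm⟩
  have adj_x' : ∀ z, G.Adj z x ↔ z = c := fun z => (G.adj_comm z x).trans (adj_x z)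
  have adj_y' : ∀ z, G.Adj z y ↔ z = c := fun z => (G.adj_comm z y).trans (adj_y z)
  intro h
  refine hne (Eq.symm ?_)
  simpa using h ⟨Equiv.swap x y, fun {a b} => by
    simp only [Equiv.swap_apply_def]
    split_ifs <;> simp_all [hcx.ne', hcy.ne']⟩ x

/-- At most one vertex of `A` lies at each distance `≤ k` from `r`. For all `k` at once, and `A` a
branch with root `r`, this says that the branch is a path starting at `r`. -/
def NarrowUpTo (G : SimpleGraph V) (r : V) (A : Set V) (k : ℕ) : Prop :=
  ∀ ⦃x⦄, x ∈ A → ∀ ⦃y⦄, y ∈ A → G.dist r x = G.dist r y → G.dist r x ≤ k → x = y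

namespace NarrowUpTo

theorem zero (hG : G.Connected) : NarrowUpTo G r A 0 := fun x _ y _ hxy hx => by
  rw [Nat.le_zero] at hx
  rw [← hG.dist_eq_zero_iff.1 hx, ← hG.dist_eq_zero_iff.1 (hxy.symm.trans hx)]

theorem of_ncard_lt_two [Finite V] (h : A.ncard < 2) : NarrowUpTo G r A k :=
  fun _ hx _ hy _ _ => (Set.ncard_le_one).1 (Nat.le_of_lt_succ h) _ hx _ hy

theorem mono (h : NarrowUpTo G r A k) (hBA : B ⊆ A) : NarrowUpTo G r B k :=
  fun _ hx _ hy => h (hBA hx) (hBA hy)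

theorem injOn (h : ∀ k, NarrowUpTo G r A k) : A.InjOn (G.dist r) :=
  fun _ hx _ hy hxy => h _ hx hy hxy le_rfl

theorem insert (hcb : G.Adj c b) (h : NarrowUpTo G b (branch G c b) k) :
    NarrowUpTo G c (insert c (branch G c b)) (k + 1) := by
  rintro x (rfl | hx) y (rfl | hy) hxy hxk
  · rfl
  · rw [mem_branch_of_adj hcb, ← hxy, dist_self] at hy
    omega
  · rw [mem_branch_of_adj hcb, hxy, dist_self] at hx
    omega
  · have hx' := (mem_branch_of_adj hcb).1 hx
    have hy' := (mem_branch_of_adj hcb).1 hy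
    exact h hx hy (by omega) (by omega)

theorem apply_branch (hf : IsDeletionAut G l f) (hr : r ≠ l) (hv : v ≠ l)
    (h : NarrowUpTo G v (branch G r v \ {l}) k) :
    NarrowUpTo G (f v) (branch G (f r) (f v) \ {l}) k := by
  rw [← hf.image_branch hr hv]
  rintro _ ⟨x, ⟨hx, hxl⟩, rfl⟩ _ ⟨y, ⟨hy, hyl⟩, rfl⟩ hxy hxk
  rw [hf.dist_apply hv hxl] at hxk
  rw [hf.dist_apply hv hxl, hf.dist_apply hv hyl] at hxy
  rw [h ⟨hx, hxl⟩ ⟨hy, hyl⟩ hxy hxk]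

end NarrowUpTo

/-! ### The branches at the centroid -/

namespace IsMinimalAutFreeTree

theorem narrowUpTo_of_two_mul_ncard_eq [Finite V] (hG : IsMinimalAutFreeTree G) (hcb : G.Adj c b)
    (h_half : 2 * (branch G c b).ncard = Nat.card V) (h : NarrowUpTo G b (branch G c b) k) :
    NarrowUpTo G c (branch G b c) (k + 1) := by
  have h_sum := ncard_branch_add_ncard_branch hG.isTree hcb
  rcases lt_or_ge (branch G c b).ncard 2 with h_lt | h_ge
  · exact NarrowUpTo.of_ncard_lt_two (by omega)
  obtain ⟨l, hl, hlb, h_leaf, f, hf, h_ne⟩ := hG.exists_isDeletionAut_of_branch h_ge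
  have hcl : c ≠ l := (ne_of_mem_of_not_mem hl (notMem_branch hG.isTree hcb)).symm
  have h_diff := Set.ncard_sdiff_singleton_add_one hl
  have h_lt : ∀ w, G.Adj c w → 2 * (branch G c w \ {l}).ncard < Nat.card V := fun w hw => by
    rcases eq_or_ne w b with rfl | hwb
    · omega
    · have := Set.ncard_lt_ncard (branch_ssubset_branch hG.isTree hw hcb hwb)
      have := Set.ncard_sdiff_singleton_le (branch G c w) l
      omega
  have hfc : f c = c := (hf.apply_eq_or_swap hG.isTree h_leaf hcl h_lt).resolve_right (by omega)
  have hfb : f b ≠ b := h_ne hfc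
  have h_adj : G.Adj c (f b) := by rwa [← hfc, hf.adj_apply hcl hlb.symm]
  have hl' := notMem_branch_of_mem_branch hG.isTree hcb h_adj hfb hl
  have h_card := hf.ncard_branch_diff hcl hlb.symm
  rw [hfc, Set.sdiff_singleton_eq_self hl'] at h_card
  have h_narrow := (h.mono Set.sdiff_subset).apply_branch hf hcl hlb.symm
  rw [hfc, Set.sdiff_singleton_eq_self hl'] at h_narrow
  rw [← insert_branch_eq hG.isTree hcb h_adj hfb (by omega)]
  exact h_narrow.insert h_adj

theorem two_mul_ncard_branch_ne [Finite V] (hG : IsMinimalAutFreeTree G) (hcb : G.Adj c b) :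
    2 * (branch G c b).ncard ≠ Nat.card V := fun h_half => by
  have h_half' : 2 * (branch G b c).ncard = Nat.card V := by
    have := ncard_branch_add_ncard_branch hG.isTree hcb
    omega
  have h_narrow : ∀ k, NarrowUpTo G b (branch G c b) k ∧ NarrowUpTo G c (branch G b c) k := by
    intro k
    induction k with
    | zero => exact ⟨.zero hG.isTree.connected, .zero hG.isTree.connected⟩
    | succ k ih =>
      exact ⟨hG.narrowUpTo_of_two_mul_ncard_eq hcb.symm h_half' ih.2,
        hG.narrowUpTo_of_two_mul_ncard_eq hcb h_half ih.1⟩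
  exact not_autFree_of_injOn_dist hG.isTree hcb (NarrowUpTo.injOn fun k => (h_narrow k).1)
    (NarrowUpTo.injOn fun k => (h_narrow k).2) hG.autFree

theorem narrowUpTo_of_two_mul_ncard_add_one_eq [Finite V] (hG : IsMinimalAutFreeTree G)
    (h₁ : G.Adj c b₁) (h₂ : G.Adj c b₂) (h_ne : b₁ ≠ b₂)
    (h_half₁ : 2 * (branch G c b₁).ncard + 1 = Nat.card V)
    (h_half₂ : 2 * (branch G c b₂).ncard + 1 = Nat.card V)
    (h : NarrowUpTo G b₂ (branch G c b₂) k) : NarrowUpTo G b₁ (branch G c b₁) (k + 1) := by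
  rcases lt_or_ge (branch G c b₂).ncard 2 with h_lt | h_ge
  · exact NarrowUpTo.of_ncard_lt_two (by omega)
  obtain ⟨l, hl, hlb, h_leaf, f, hf, hf_ne⟩ := hG.exists_isDeletionAut_of_branch h_ge
  have hcl : c ≠ l := (ne_of_mem_of_not_mem hl (notMem_branch hG.isTree h₂)).symm
  have h_insert : insert c (branch G c b₂) = branch G b₁ c := by
    have := ncard_branch_add_ncard_branch hG.isTree h₁
    exact insert_branch_eq hG.isTree h₁ h₂ h_ne.symm (by omega)
  have eq_or_eq : ∀ w, G.Adj c w → w = b₁ ∨ w = b₂ := fun _ =>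
    eq_or_eq_of_insert_branch_eq hG.isTree h₁ h₂ h_insert
  have hl₁ := notMem_branch_of_mem_branch hG.isTree h₂ h₁ h_ne hl
  have h_diff := Set.ncard_sdiff_singleton_add_one hl
  have h_lt : ∀ w, G.Adj c w → 2 * (branch G c w \ {l}).ncard < Nat.card V := fun w hw => by
    have := Set.ncard_sdiff_singleton_le (branch G c w) l
    rcases eq_or_eq w hw with rfl | rfl <;> omega
  have hfc : f c ≠ c := fun hfc => by
    have h_adj : G.Adj c (f b₂) := by rwa [← hfc, hf.adj_apply hcl hlb.symm]
    have h_card := hf.ncard_branch_diff hcl hlb.symm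
    rw [hfc, (eq_or_eq _ h_adj).resolve_right (hf_ne hfc), Set.sdiff_singleton_eq_self hl₁]
      at h_card
    omega
  obtain ⟨h_adj, hffc, h_half⟩ := (hf.apply_eq_or_swap hG.isTree h_leaf hcl h_lt).resolve_left hfc
  obtain hfc₁ : f c = b₁ := (eq_or_eq _ h_adj).resolve_right fun hfc₂ => by
    rw [hfc₂] at h_half
    omega
  have hb₁l : b₁ ≠ l := ne_of_mem_of_not_mem self_mem_branch hl₁
  rw [hfc₁] at hffc
  have h_narrow := h.insert h₂
  rw [h_insert] at h_narrow
  have h_image := (h_narrow.mono Set.sdiff_subset).apply_branch hf hb₁l hcl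
  rwa [hffc, hfc₁, Set.sdiff_singleton_eq_self hl₁] at h_image

theorem eq_of_two_mul_ncard_add_one_eq [Finite V] (hG : IsMinimalAutFreeTree G)
    (h₁ : G.Adj c b₁) (h₂ : G.Adj c b₂)
    (h_half₁ : 2 * (branch G c b₁).ncard + 1 = Nat.card V)
    (h_half₂ : 2 * (branch G c b₂).ncard + 1 = Nat.card V) : b₁ = b₂ := by
  by_contra h_ne
  have h_narrow : ∀ k, NarrowUpTo G b₁ (branch G c b₁) k ∧ NarrowUpTo G b₂ (branch G c b₂) k := by
    intro k
    induction k with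
    | zero => exact ⟨.zero hG.isTree.connected, .zero hG.isTree.connected⟩
    | succ k ih =>
      exact ⟨hG.narrowUpTo_of_two_mul_ncard_add_one_eq h₁ h₂ h_ne h_half₁ h_half₂ ih.2,
        hG.narrowUpTo_of_two_mul_ncard_add_one_eq h₂ h₁ (Ne.symm h_ne) h_half₂ h_half₁ ih.1⟩
  have h_narrow' : ∀ k, NarrowUpTo G c (branch G b₁ c) (k + 1) := fun k => by
    have := ncard_branch_add_ncard_branch hG.isTree h₁
    rw [← insert_branch_eq hG.isTree h₁ h₂ (Ne.symm h_ne) (by omega)]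
    exact (h_narrow k).2.insert h₂
  exact not_autFree_of_injOn_dist hG.isTree h₁ (NarrowUpTo.injOn fun k => (h_narrow k).1)
    (fun x hx y hy hxy => h_narrow' (G.dist c x) hx hy hxy (Nat.le_succ _)) hG.autFree

theorem exists_two_mul_ncard_add_one_eq [Finite V] [Nontrivial V] (hG : IsMinimalAutFreeTree G)
    (hc : IsCentroid G Set.univ c) :
    ∃ b, G.Adj c b ∧ 2 * (branch G c b).ncard + 1 = Nat.card V := by
  have h_lt : ∀ b, G.Adj c b → 2 * (branch G c b).ncard < Nat.card V := fun b hb =>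
    (hG.two_mul_ncard_branch_ne hb).lt_of_le (by simpa using hc b hb)
  have h_two : 2 ≤ (branch G c c).ncard := by
    rw [branch_self, Set.ncard_univ]
    exact Finite.one_lt_card
  obtain ⟨l, -, hlc, h_leaf, f, hf, h_ne⟩ := hG.exists_isDeletionAut_of_branch h_two
  have h_le := fun b => Set.ncard_sdiff_singleton_le (branch G c b) l
  obtain ⟨h_adj, -, h_half⟩ := (hf.apply_eq_or_swap hG.isTree h_leaf hlc.symm fun b hb => by
    have := h_lt b hb
    have := h_le b
    omega).resolve_left fun hfc => h_ne hfc hfc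
  have := h_lt _ h_adj
  have := h_le (f c)
  exact ⟨f c, h_adj, by omega⟩

end IsMinimalAutFreeTree

/-- The branch at `c` towards the neighbor `b` has `m` vertices, where `2 * m + 1` is the order of
`G`, and every other branch at `c` is smaller. -/
structure IsHeavyNeighbor (G : SimpleGraph V) (c b : V) : Prop where
  adj : G.Adj c b
  two_mul_ncard_add_one : 2 * (branch G c b).ncard + 1 = Nat.card V
  two_mul_ncard_add_one_lt : ∀ w, G.Adj c w → w ≠ b → 2 * (branch G c w).ncard + 1 < Nat.card V

theorem IsMinimalAutFreeTree.exists_isHeavyNeighbor [Finite V] [Nontrivial V]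
    (hG : IsMinimalAutFreeTree G) : ∃ c b, IsHeavyNeighbor G c b := by
  obtain ⟨c, hc⟩ := exists_isCentroid hG.isTree Set.univ
  obtain ⟨b, hcb, h_half⟩ := hG.exists_two_mul_ncard_add_one_eq hc
  refine ⟨c, b, hcb, h_half, fun w hw hwb => ?_⟩
  have h_le := hc w hw
  rw [Set.inter_univ, Set.ncard_univ] at h_le
  have h_ne : 2 * (branch G c w).ncard + 1 ≠ Nat.card V := fun h =>
    hwb (hG.eq_of_two_mul_ncard_add_one_eq hw hcb h h_half)
  omega

namespace IsHeavyNeighbor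

theorem ncard_branch [Finite V] (h : IsHeavyNeighbor G c b) (hG : G.IsTree) :
    (branch G b c).ncard = (branch G c b).ncard + 1 := by
  have := ncard_branch_add_ncard_branch hG h.adj
  have := h.two_mul_ncard_add_one
  omega

theorem apply_eq_or_swap [Finite V] (h : IsHeavyNeighbor G c b) (hG : G.IsTree)
    (hf : IsDeletionAut G l f) (hl : IsLeaf G l) (hcl : c ≠ l) :
    f c = c ∨ f c = b ∧ f b = c ∧ l ∉ branch G c b := by
  have h_half := h.two_mul_ncard_add_one
  have h_le := fun w => Set.ncard_sdiff_singleton_le (branch G c w) l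
  refine (hf.apply_eq_or_swap hG hl hcl fun w hw => ?_).imp_right
    fun ⟨h_adj, hffc, h_half'⟩ => ?_
  · have := h_le w
    rcases eq_or_ne w b with rfl | hwb
    · omega
    · have := h.two_mul_ncard_add_one_lt w hw hwb
      omega
  · have hfc : f c = b := by
      by_contra hfc
      have := h_le (f c)
      have := h.two_mul_ncard_add_one_lt _ h_adj hfc
      omega
    rw [hfc] at hffc h_half'
    refine ⟨hfc, hffc, fun hlb => ?_⟩
    have := Set.ncard_sdiff_singleton_add_one hlb
    omega

theorem two_le_ncard_branch [Finite V] (h : IsHeavyNeighbor G c b) (hG : G.IsTree) :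
    2 ≤ (branch G c b).ncard := by
  have h_pos : ∀ w, 0 < (branch G c w).ncard := fun w =>
    (Set.nonempty_of_mem self_mem_branch).ncard_pos
  by_contra h_lt
  have h_card := h.ncard_branch hG
  have := h_pos b
  obtain ⟨x, hx, hxc⟩ := Set.exists_ne_of_one_lt_ncard (by omega : 1 < (branch G b c).ncard) c
  obtain ⟨w, hcw, hxw⟩ := exists_adj_mem_branch_self hG.connected hxc
  have hwb : w ≠ b := by
    rintro rfl
    rw [← compl_branch hG hcw] at hx
    exact hx hxw
  have := h.two_mul_ncard_add_one_lt w hcw hwb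
  have := h.two_mul_ncard_add_one
  have := h_pos w
  omega

end IsHeavyNeighbor

/-- The vertex `c` has exactly three branches: a heavy one towards `b₁`, a single leaf `t`, and one
towards `b₂`, which then has one vertex less than the heavy branch. -/
structure IsTripod (G : SimpleGraph V) (c b₁ b₂ t : V) : Prop where
  heavy : IsHeavyNeighbor G c b₁
  adj_right : G.Adj c b₂
  adj_leaf : G.Adj c t
  right_ne_leaf : b₂ ≠ t
  branch_leaf : branch G c t = {t}
  insert_eq : insert t (insert c (branch G c b₂)) = branch G b₁ c

theorem IsHeavyNeighbor.exists_isTripod [Finite V] (h : IsHeavyNeighbor G c b₁) (hG : G.IsTree)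
    (h₂ : G.Adj c b₂) (h_ne : b₂ ≠ b₁)
    (h_card : (branch G c b₂).ncard + 1 = (branch G c b₁).ncard) :
    ∃ t, IsTripod G c b₁ b₂ t := by
  have h_sub : insert c (branch G c b₂) ⊆ branch G b₁ c :=
    Set.insert_subset self_mem_branch (branch_ssubset_branch hG h₂ h.adj h_ne).subset
  obtain ⟨t, ht, h_insert⟩ := (Set.exists_eq_insert_iff_ncard (Set.toFinite _)).2 ⟨h_sub, by
    rw [Set.ncard_insert_of_notMem (notMem_branch hG h₂), h_card, h.ncard_branch hG]⟩
  have ht₁ : t ∈ branch G b₁ c := h_insert.subset (Set.mem_insert _ _)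
  rw [Set.mem_insert_iff, not_or] at ht
  obtain ⟨w, hcw, htw⟩ := exists_adj_mem_branch_self hG.connected ht.1
  have hw₂ : w ≠ b₂ := fun h => ht.2 (h ▸ htw)
  have hw₁ : w ≠ b₁ := by
    rintro rfl
    rw [← compl_branch hG hcw] at ht₁
    exact ht₁ htw
  have h_branch : branch G c w = {t} := by
    refine Set.eq_singleton_iff_unique_mem.2 ⟨htw, fun x hx => ?_⟩
    have hx' := (branch_ssubset_branch hG hcw h.adj hw₁).subset hx
    rw [← h_insert] at hx'
    rcases hx' with rfl | rfl | hx₂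
    · rfl
    · exact absurd hx (notMem_branch hG hcw)
    · exact absurd hx (notMem_branch_of_mem_branch hG h₂ hcw hw₂ hx₂)
  obtain rfl : w = t := h_branch.subset self_mem_branch
  exact ⟨w, h, h₂, hcw, hw₂.symm, h_branch, h_insert⟩

theorem IsMinimalAutFreeTree.exists_isTripod [Finite V] (hG : IsMinimalAutFreeTree G)
    (h : IsHeavyNeighbor G c b₁) :
    ∃ b₂ t, IsTripod G c b₁ b₂ t ∧
      ∀ k, NarrowUpTo G b₁ (branch G c b₁) k → NarrowUpTo G b₂ (branch G c b₂) k := by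
  obtain ⟨l, hl, hlb, h_leaf, f, hf, h_ne⟩ :=
    hG.exists_isDeletionAut_of_branch (h.two_le_ncard_branch hG.isTree)
  have hcl : c ≠ l := (ne_of_mem_of_not_mem hl (notMem_branch hG.isTree h.adj)).symm
  have hfc : f c = c := (h.apply_eq_or_swap hG.isTree hf h_leaf hcl).resolve_right
    fun h_swap => h_swap.2.2 hl
  have h_adj : G.Adj c (f b₁) := by
    simpa only [hfc] using (hf.adj_apply hcl hlb.symm).2 h.adj
  have hl' := notMem_branch_of_mem_branch hG.isTree h.adj h_adj (h_ne hfc) hl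
  have h_card := hf.ncard_branch_diff hcl hlb.symm
  rw [hfc, Set.sdiff_singleton_eq_self hl'] at h_card
  obtain ⟨t, ht⟩ := h.exists_isTripod hG.isTree h_adj (h_ne hfc)
    (by rw [h_card, Set.ncard_sdiff_singleton_add_one hl])
  refine ⟨f b₁, t, ht, fun k h_narrow => ?_⟩
  have h_image := (h_narrow.mono Set.sdiff_subset).apply_branch hf hcl hlb.symm
  rwa [hfc, Set.sdiff_singleton_eq_self hl'] at h_image

namespace IsTripod

theorem isLeaf (h : IsTripod G c b₁ b₂ t) (hG : G.IsTree) : IsLeaf G t :=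
  isLeaf_of_branch_eq_singleton hG h.adj_leaf.ne h.branch_leaf

theorem leaf_notMem (h : IsTripod G c b₁ b₂ t) (hG : G.IsTree) : t ∉ branch G c b₂ := fun ht =>
  h.right_ne_leaf (eq_of_adj_of_mem_branch hG.connected h.adj_leaf h.adj_right ht).symm

theorem insert_eq_sdiff (h : IsTripod G c b₁ b₂ t) (hG : G.IsTree) :
    insert c (branch G c b₂) = branch G b₁ c \ {t} := by
  rw [← h.insert_eq, Set.insert_sdiff_self_of_notMem]
  rw [Set.mem_insert_iff, not_or]
  exact ⟨h.adj_leaf.ne', h.leaf_notMem hG⟩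

theorem ncard_branch_right [Finite V] (h : IsTripod G c b₁ b₂ t) (hG : G.IsTree) :
    (branch G c b₂).ncard + 1 = (branch G c b₁).ncard := by
  have ht : t ∈ branch G b₁ c := h.insert_eq.subset (Set.mem_insert _ _)
  rw [← Set.ncard_insert_of_notMem (notMem_branch hG h.adj_right), h.insert_eq_sdiff hG,
    Set.ncard_sdiff_singleton_of_mem ht, h.heavy.ncard_branch hG, Nat.add_sub_cancel]

theorem eq_or_eq_or_eq_of_adj (h : IsTripod G c b₁ b₂ t) (hG : G.IsTree) (hw : G.Adj c w) :
    w = b₁ ∨ w = b₂ ∨ w = t := by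
  refine or_iff_not_imp_left.2 fun hwb => ?_
  have hw_mem := mem_branch_of_adj_of_ne hG hw h.heavy.adj hwb
  rw [← h.insert_eq] at hw_mem
  rcases hw_mem with hwt | hwc | hw₂
  · exact .inr hwt
  · exact absurd hwc hw.ne'
  · exact .inl (eq_of_adj_of_mem_branch hG.connected hw h.adj_right hw₂)

theorem narrowUpTo_succ [Finite V] (h : IsTripod G c b₁ b₂ t) (hG : IsMinimalAutFreeTree G)
    (h_narrow : NarrowUpTo G b₂ (branch G c b₂) k) :
    NarrowUpTo G b₁ (branch G c b₁) (k + 1) := by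
  obtain ⟨f, hf, h_ne⟩ := hG.exists_isDeletionAut (h.isLeaf hG.isTree)
  obtain ⟨hfc, hfb₁, ht⟩ := (h.heavy.apply_eq_or_swap hG.isTree hf (h.isLeaf hG.isTree)
    h.adj_leaf.ne).resolve_left (h_ne c h.adj_leaf.symm)
  have hb₁t : b₁ ≠ t := ne_of_mem_of_not_mem self_mem_branch ht
  have h_insert := h_narrow.insert h.adj_right
  rw [h.insert_eq_sdiff hG.isTree] at h_insert
  have h_image := h_insert.apply_branch hf hb₁t h.adj_leaf.ne
  rwa [hfc, hfb₁, Set.sdiff_singleton_eq_self ht] at h_image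

theorem narrowUpTo [Finite V] (h : IsTripod G c b₁ b₂ t) (hG : IsMinimalAutFreeTree G)
    (h_right : ∀ k, NarrowUpTo G b₁ (branch G c b₁) k → NarrowUpTo G b₂ (branch G c b₂) k) (k : ℕ) :
    NarrowUpTo G b₁ (branch G c b₁) k := by
  induction k with
  | zero => exact .zero hG.isTree.connected
  | succ k ih => exact h.narrowUpTo_succ hG (h_right k ih)

theorem right_ne_left [Finite V] (h : IsTripod G c b₁ b₂ t) (hG : G.IsTree) : b₂ ≠ b₁ := by
  have := h.ncard_branch_right hG
  rintro rfl
  omega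

theorem two_le_ncard_branch_right [Finite V] (h : IsTripod G c b₁ b₂ t)
    (hG : IsMinimalAutFreeTree G) : 2 ≤ (branch G c b₂).ncard := by
  have h_card := h.ncard_branch_right hG.isTree
  have h_two := h.heavy.two_le_ncard_branch hG.isTree
  by_contra h_lt
  obtain ⟨x, hx⟩ := Set.ncard_eq_one.1 (by omega : (branch G c b₂).ncard = 1)
  obtain rfl : b₂ = x := hx.subset self_mem_branch
  exact not_autFree_of_isLeaf_of_isLeaf (isLeaf_of_branch_eq_singleton hG.isTree
    h.adj_right.ne hx) (h.isLeaf hG.isTree) h.right_ne_leaf h.adj_right h.adj_leaf hG.autFree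

theorem apply_center [Finite V] (h : IsTripod G c b₁ b₂ t) (hG : G.IsTree)
    (hf : IsDeletionAut G l f) (h_leaf : IsLeaf G l) (hl : l ∈ branch G c b₂) (hlb₂ : l ≠ b₂)
    (h_narrow : NarrowUpTo G b₁ (branch G c b₁) 1) : f c = c := by
  have hcl : c ≠ l := (ne_of_mem_of_not_mem hl (notMem_branch hG h.adj_right)).symm
  refine (h.heavy.apply_eq_or_swap hG hf h_leaf hcl).resolve_right fun ⟨hfc, hfb₁, _⟩ => ?_
  have hb₁l : b₁ ≠ l := ne_of_mem_of_not_mem self_mem_branch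
    (notMem_branch_of_mem_branch hG h.adj_right h.heavy.adj (h.right_ne_left hG).symm hl)
  have htl : t ≠ l := (ne_of_mem_of_not_mem hl (h.leaf_notMem hG)).symm
  have h_image := (h_narrow.mono Set.sdiff_subset).apply_branch hf hcl hb₁l
  rw [hfc, hfb₁] at h_image
  have hb₂ : b₂ ∈ branch G b₁ c \ {l} :=
    ⟨mem_branch_of_adj_of_ne hG h.adj_right h.heavy.adj (h.right_ne_left hG), hlb₂.symm⟩
  have ht : t ∈ branch G b₁ c \ {l} := ⟨h.insert_eq.subset (Set.mem_insert _ _), htl⟩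
  have dist_b₂ := dist_eq_one_iff_adj.2 h.adj_right
  have dist_t := dist_eq_one_iff_adj.2 h.adj_leaf
  exact h.right_ne_leaf (h_image hb₂ ht (dist_b₂.trans dist_t.symm) dist_b₂.le)

theorem ncard_branch_right_eq_two [Finite V] (h : IsTripod G c b₁ b₂ t)
    (hG : IsMinimalAutFreeTree G) (h_narrow : NarrowUpTo G b₁ (branch G c b₁) 1) :
    (branch G c b₂).ncard = 2 := by
  obtain ⟨l, hl, hlb₂, h_leaf, f, hf, h_ne⟩ :=
    hG.exists_isDeletionAut_of_branch (h.two_le_ncard_branch_right hG)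
  have hcl : c ≠ l := (ne_of_mem_of_not_mem hl (notMem_branch hG.isTree h.adj_right)).symm
  have hfc : f c = c := h.apply_center hG.isTree hf h_leaf hl hlb₂ h_narrow
  have h_adj : G.Adj c (f b₂) := by
    simpa only [hfc] using (hf.adj_apply hcl hlb₂.symm).2 h.adj_right
  have h_card := hf.ncard_branch_diff hcl hlb₂.symm
  rw [hfc] at h_card
  have h_diff := Set.ncard_sdiff_singleton_add_one hl
  rcases h.eq_or_eq_or_eq_of_adj hG.isTree h_adj with hf₁ | hf₂ | hft
  · have := h.ncard_branch_right hG.isTree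
    rw [hf₁, Set.sdiff_singleton_eq_self (notMem_branch_of_mem_branch hG.isTree h.adj_right
      h.heavy.adj (h.right_ne_left hG.isTree).symm hl)] at h_card
    omega
  · exact absurd hf₂ (h_ne hfc)
  · have htl : l ∉ ({t} : Set V) := ne_of_mem_of_not_mem hl (h.leaf_notMem hG.isTree)
    rw [hft, h.branch_leaf, Set.sdiff_singleton_eq_self htl, Set.ncard_singleton] at h_card
    omega

end IsTripod

theorem exists_branch_eq_insert [Finite V] (hG : G.Connected) (h : (branch G r v).InjOn (G.dist r))
    (h_card : 2 ≤ (branch G r v).ncard) :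
    ∃ w, G.Adj v w ∧ branch G r v = insert v (branch G r w) ∧
      (branch G r v).ncard = (branch G r w).ncard + 1 := by
  obtain ⟨x, hx, hxv⟩ := Set.exists_ne_of_one_lt_ncard h_card v
  obtain ⟨w, hvw, hw, -⟩ := exists_adj_mem_branch hG hx hxv
  have hv : v ∉ branch G r w := fun hv =>
    (branch_ssubset_branch_of_mem hG hvw hw).not_subset (branch_subset_branch hG hv)
  have h_eq : branch G r v = insert v (branch G r w) := by
    refine subset_antisymm (fun y hy => or_iff_not_imp_left.2 fun hyv => ?_)
      (Set.insert_subset self_mem_branch (branch_subset_branch hG hw))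
    obtain ⟨w', hvw', hw', hyw'⟩ := exists_adj_mem_branch hG hy hyv
    obtain rfl : w = w' := h hw hw' ((dist_add_one_of_adj_of_mem_branch hvw hw).trans
      (dist_add_one_of_adj_of_mem_branch hvw' hw').symm)
    exact hyw'
  exact ⟨w, hvw, h_eq, by rw [h_eq, Set.ncard_insert_of_notMem hv]⟩

theorem exists_branch_eq_pair [Finite V] (hG : G.Connected) (h : (branch G r v).InjOn (G.dist r))
    (h_card : (branch G r v).ncard = 2) : ∃ w, G.Adj v w ∧ branch G r v = {v, w} := by
  obtain ⟨w, hvw, h_eq, h_card'⟩ := exists_branch_eq_insert hG h h_card.ge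
  obtain ⟨x, hx⟩ := Set.ncard_eq_one.1 (by omega : (branch G r w).ncard = 1)
  obtain rfl : w = x := hx.subset self_mem_branch
  exact ⟨w, hvw, by rw [h_eq, hx]⟩

theorem exists_branch_eq_triple [Finite V] (hG : G.Connected) (h : (branch G r v).InjOn (G.dist r))
    (h_card : (branch G r v).ncard = 3) :
    ∃ w x, G.Adj v w ∧ G.Adj w x ∧ branch G r v = {v, w, x} := by
  obtain ⟨w, hvw, h_eq, h_card'⟩ := exists_branch_eq_insert hG h (by omega)
  obtain ⟨x, hwx, hx⟩ := exists_branch_eq_pair hG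
    (h.mono (h_eq ▸ Set.subset_insert _ _)) (by omega : (branch G r w).ncard = 2)
  exact ⟨w, x, hvw, hwx, by rw [h_eq, hx]⟩

theorem nonempty_iso_of_bijective {W : Type*} {H : SimpleGraph W} (hG : G.Connected)
    (hH : H.IsAcyclic) (f : G →g H) (hf : Function.Bijective f) : Nonempty (G ≃g H) := by
  have h_tree : (H.comap f).IsTree := by
    rw [isTree_iff]
    exact ⟨hG.mono f.le_comap, hH.comap (Hom.comap f H) hf.injective⟩
  have h_le : H.comap f ≤ G := (isTree_iff_minimal_connected.1 h_tree).le_of_le hG f.le_comap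
  exact ⟨⟨.ofBijective f hf, ⟨fun h => h_le h, f.map_adj⟩⟩⟩

theorem connected_E7 : E7.Connected := by
  have h₀₁ : E7.Adj 0 1 := by simp [E7]
  have h₀₂ : E7.Adj 0 2 := by simp [E7]
  have h₂₃ : E7.Adj 2 3 := by simp [E7]
  have h₀₄ : E7.Adj 0 4 := by simp [E7]
  have h₄₅ : E7.Adj 4 5 := by simp [E7]
  have h₅₆ : E7.Adj 5 6 := by simp [E7]
  have reachable_zero : ∀ i, E7.Reachable 0 i := by
    have h₅ := h₀₄.reachable.trans h₄₅.reachable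
    intro i
    fin_cases i
    exacts [.refl _, h₀₁.reachable, h₀₂.reachable, h₀₂.reachable.trans h₂₃.reachable,
      h₀₄.reachable, h₅, h₅.trans h₅₆.reachable]
  exact connected_iff_exists_forall_reachable _ |>.2 ⟨0, reachable_zero⟩

theorem IsTripod.nonempty_iso_E7 [Finite V] (h : IsTripod G c b₁ b₂ t) (hG : G.IsTree)
    (h_inj₁ : (branch G c b₁).InjOn (G.dist c)) (h_inj₂ : (branch G c b₂).InjOn (G.dist c))
    (h_card : (branch G c b₂).ncard = 2) : Nonempty (E7 ≃g G) := by
  have h_card₁ : (branch G c b₁).ncard = 3 := by rw [← h.ncard_branch_right hG, h_card]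
  obtain ⟨x, y, hx, hy, hxy⟩ := exists_branch_eq_triple hG.connected h_inj₁ h_card₁
  obtain ⟨z, hz, hz'⟩ := exists_branch_eq_pair hG.connected h_inj₂ h_card
  let g : Fin 7 → V := ![c, t, b₂, z, b₁, x, y]
  have g_surj : Function.Surjective g := fun v => by
    have hv : v ∈ branch G c b₁ ∨ v ∈ branch G b₁ c := by
      rw [← compl_branch hG h.heavy.adj]
      exact em _
    rw [hxy, ← h.insert_eq, hz'] at hv
    rcases hv with (rfl | rfl | rfl) | rfl | rfl | rfl | rfl
    exacts [⟨4, rfl⟩, ⟨5, rfl⟩, ⟨6, rfl⟩, ⟨1, rfl⟩, ⟨0, rfl⟩, ⟨2, rfl⟩, ⟨3, rfl⟩]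
  have h_order : Nat.card (Fin 7) = Nat.card V := by
    rw [← h.heavy.two_mul_ncard_add_one, h_card₁, Nat.card_fin]
  have g_adj : ∀ {i j}, E7.Adj i j → G.Adj (g i) (g j) := fun {i j} hij => by
    simp only [E7, fromEdgeSet_adj, Set.mem_insert_iff, Set.mem_singleton_iff] at hij
    rw [← mem_edgeSet, ← Sym2.map_mk]
    rcases hij.1 with h_eq | h_eq | h_eq | h_eq | h_eq | h_eq <;> rw [h_eq]
    exacts [h.adj_leaf, h.adj_right, hz, h.heavy.adj, hx, hy]
  exact nonempty_iso_of_bijective connected_E7 hG.isAcyclic ⟨g, g_adj⟩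
    ((Nat.bijective_iff_surjective_and_card g).2 ⟨g_surj, h_order⟩)

theorem IsMinimalAutFreeTree.nonempty_iso_E7 [Finite V] [Nontrivial V]
    (hG : IsMinimalAutFreeTree G) : Nonempty (E7 ≃g G) := by
  obtain ⟨c, b₁, h_heavy⟩ := hG.exists_isHeavyNeighbor
  obtain ⟨b₂, t, h, h_right⟩ := hG.exists_isTripod h_heavy
  have h_narrow₁ := h.narrowUpTo hG h_right
  have h_inj : ∀ {b}, G.Adj c b → (∀ k, NarrowUpTo G b (branch G c b) k) →
      (branch G c b).InjOn (G.dist c) := fun hcb h x hx y hy hxy =>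
    (h (G.dist c x)).insert hcb (.inr hx) (.inr hy) hxy (Nat.le_succ _)
  exact h.nonempty_iso_E7 hG.isTree (h_inj h_heavy.adj h_narrow₁)
    (h_inj h.adj_right fun k => h_right k (h_narrow₁ k))
    (h.ncard_branch_right_eq_two hG (h_narrow₁ 1))

end AsymmetricTree

/-- A finite automorphism-free tree with at least two vertices, such that deleting any leaf
destroys automorphism-freeness, is isomorphic to `E7`. -/
theorem stmt_0 {V : Type*} [Fintype V] (G : SimpleGraph V)
    (hT : G.IsTree) (h2 : 2 ≤ Fintype.card V)
    (hAF : AutFree G)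
    (hmin : ∀ l : V, IsLeaf G l → ¬ AutFree (G.induce {x : V | x ≠ l})) :
    Nonempty (G ≃g E7) := by
  have : Nontrivial V := Fintype.one_lt_card_iff_nontrivial.1 h2
  have h_min : AsymmetricTree.IsMinimalAutFreeTree G := ⟨hT, hAF, hmin⟩
  exact h_min.nonempty_iso_E7.map .symm
end

section
/- Every finite automorphism-free tree T can be obtained from the tree E7 by successively adjoining one leaf at a time in such a way that each intermediate tree is also automorphism-free; that is, there is a sequence of trees T_0, T_1, ..., T_k with T_0 isomorphic to E7, T_k = T, each T_{i+1} obtained from T_i by adding a new vertex joined to exactly one vertex of T_i, and every T_i automorphism-free. -/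
open SimpleGraph

/-!
A rooted tree is rigid if and only if the branches at its root are rigid and pairwise
nonisomorphic, so rigid rooted trees correspond to hereditarily finite sets, and deleting a leaf
is an operation on such sets. If an automorphism-free tree has two centroids, a leaf can be
deleted from one half of the tree so that the result is rigid when rooted at the end of the
central edge in the other half, which is then the only centroid. If there is only one centroid,
take it as the root. A leaf can always be deleted inside a smallest branch at the root without
creating two isomorphic branches, so the pruned rooted tree is again rigid. The unrooted tree is
automorphism-free as soon as the root is still a centroid and, if there is now a central edge, the
two halves are nonisomorphic. This can only go wrong if some branch at the root contains just
under half of the vertices; comparing it with the rest of the tree then gives another suitable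
leaf, except in `E7`.
-/

namespace RigidTree

/-! ### Codes of rigid rooted trees -/

section Code

/-- A rooted tree without nontrivial root-preserving automorphisms is determined by the set of
(pairwise distinct) codes of the branches at its root, so such trees correspond to hereditarily
finite sets. We code these by natural numbers (Ackermann's coding); `members n` is the finite set
of branch codes. -/
def members (n : ℕ) : Finset ℕ := Finset.equivBitIndices n

/-- The code of the rooted tree whose root has the branches coded by `s`. -/
def node (s : Finset ℕ) : ℕ := Finset.equivBitIndices.symm s

@[simp]
lemma members_node (s : Finset ℕ) : members (node s) = s := Equiv.apply_symm_apply _ _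

@[simp]
lemma node_members (n : ℕ) : node (members n) = n := Equiv.symm_apply_apply _ _

lemma members_injective : Function.Injective members := Finset.equivBitIndices.injective

lemma node_injective : Function.Injective node := Finset.equivBitIndices.symm.injective

lemma mem_members_iff_testBit {i n : ℕ} : i ∈ members n ↔ n.testBit i := by
  simp [members, Finset.equivBitIndices]

lemma lt_of_mem_members {i n : ℕ} (h : i ∈ members n) : i < n :=
  Nat.lt_two_pow_self.trans_le (Nat.ge_two_pow_of_testBit (mem_members_iff_testBit.1 h))

@[simp]
lemma node_empty : node ∅ = 0 := rfl

lemma node_ne_zero {s : Finset ℕ} (hs : s.Nonempty) : node s ≠ 0 :=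
  node_empty ▸ node_injective.ne hs.ne_empty

lemma members_nonempty {n : ℕ} (hn : n ≠ 0) : (members n).Nonempty :=
  Finset.nonempty_of_ne_empty fun h => hn (by rw [← node_members n, h, node_empty])

lemma exists_eq_node_insert {i n : ℕ} (h : i ∈ members n) :
    ∃ s, i ∉ s ∧ n = node (insert i s) :=
  ⟨(members n).erase i, Finset.notMem_erase _ _, by rw [Finset.insert_erase h, node_members]⟩

/-- The number of vertices of the rooted tree with the given code. -/
def size (n : ℕ) : ℕ := 1 + ∑ i ∈ (members n).attach, size i.1
termination_by n
decreasing_by exact lt_of_mem_members i.2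

lemma size_eq (n : ℕ) : size n = 1 + ∑ i ∈ members n, size i := by
  rw [size, Finset.sum_attach (members n) size]

lemma size_node (s : Finset ℕ) : size (node s) = 1 + ∑ i ∈ s, size i := by
  rw [size_eq, members_node]

lemma size_node_insert {i : ℕ} {s : Finset ℕ} (h : i ∉ s) :
    size (node (insert i s)) = size i + size (node s) := by
  simp only [size_node, Finset.sum_insert h]
  omega

lemma size_zero : size 0 = 1 := by simpa using size_node ∅

lemma size_node_singleton (i : ℕ) : size (node {i}) = size i + 1 := by
  rw [size_node, Finset.sum_singleton, add_comm]

lemma size_pos (n : ℕ) : 0 < size n := by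
  rw [size_eq]
  omega

lemma size_lt_of_mem {i n : ℕ} (h : i ∈ members n) : size i < size n := by
  obtain ⟨s, hi, rfl⟩ := exists_eq_node_insert h
  have := size_pos (node s)
  rw [size_node_insert hi]
  omega

lemma size_eq_one_iff {n : ℕ} : size n = 1 ↔ n = 0 := by
  refine ⟨fun h => ?_, fun h => h ▸ size_zero⟩
  by_contra hn
  obtain ⟨i, hi⟩ := members_nonempty hn
  have := size_lt_of_mem hi
  have := size_pos i
  omega

lemma eq_node_singleton_of_size_eq {i n : ℕ} (hi : i ∈ members n) (h : size n = size i + 1) :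
    n = node {i} := by
  obtain ⟨s, his, rfl⟩ := exists_eq_node_insert hi
  rw [size_node_insert his] at h
  have hs : node s = node ∅ := size_eq_one_iff.1 (by omega)
  rw [node_injective hs, insert_empty_eq]

lemma eq_node_singleton_zero {n : ℕ} (h : size n = 2) : n = node {0} := by
  have hn : n ≠ 0 := by
    rintro rfl
    simp [size_zero] at h
  obtain ⟨i, hi⟩ := members_nonempty hn
  have := size_pos i
  have := size_lt_of_mem hi
  obtain rfl : i = 0 := size_eq_one_iff.1 (by omega)
  exact eq_node_singleton_of_size_eq hi (by rw [h, size_zero])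

/-! ### Pruning a leaf of a rigid rooted tree -/

/-- `Prune n m`: deleting some leaf, other than the root, from the rooted tree coded by `n` leaves
the rigid rooted tree coded by `m`. -/
inductive Prune : ℕ → ℕ → Prop
  | leaf {s : Finset ℕ} (h : 0 ∉ s) : Prune (node (insert 0 s)) (node s)
  | branch {s : Finset ℕ} {i j : ℕ} (hi : i ∉ s) (hj : j ∉ s) (hij : Prune i j) :
      Prune (node (insert i s)) (node (insert j s))

lemma Prune.singleton {i j : ℕ} (h : Prune i j) : Prune (node {i}) (node {j}) := by
  simpa using Prune.branch (Finset.notMem_empty i) (Finset.notMem_empty j) h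

lemma Prune.size_eq {n m : ℕ} (h : Prune n m) : size n = size m + 1 := by
  induction h with
  | leaf h =>
    rw [size_node_insert h, size_zero, add_comm]
  | branch hi hj _ ih =>
    rw [size_node_insert hi, size_node_insert hj, ih]
    omega

lemma Prune.exists_size_le {n m i : ℕ} (h : Prune n m) (hi : i ∈ members m) :
    ∃ j ∈ members n, size i ≤ size j := by
  cases h with
  | leaf => exact ⟨i, by simp_all, le_rfl⟩
  | @branch s k l hk hl hkl =>
    rw [members_node, Finset.mem_insert] at hi
    obtain rfl | hi := hi
    · exact ⟨k, by simp, by have := hkl.size_eq; omega⟩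
    · exact ⟨i, by simp [hi], le_rfl⟩

-- Pruning inside a smallest branch produces a branch too small to be already present.
lemma exists_prune {n : ℕ} (hn : n ≠ 0) : ∃ m, Prune n m := by
  induction n using Nat.strong_induction_on with
  | _ n ih =>
    obtain ⟨i, hi, hmin⟩ := Finset.exists_min_image (members n) size (members_nonempty hn)
    have hin := lt_of_mem_members hi
    obtain ⟨s, his, rfl⟩ := exists_eq_node_insert hi
    obtain rfl | hi0 := eq_or_ne i 0
    · exact ⟨_, .leaf his⟩
    · obtain ⟨j, hij⟩ := ih i hin hi0
      refine ⟨_, .branch his (fun hj => ?_) hij⟩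
      have := hmin j (by simp [hj])
      have := hij.size_eq
      omega

-- If this fails, then `b` is a root with any pruning of `a` as its only branch, and conversely, and
-- the same failure occurs for the pair of prunings.
lemma exists_prune_notMem {a b : ℕ} (hsize : size a = size b) (hab : a ≠ b) :
    (∃ a', Prune a a' ∧ a' ∉ members b) ∨ (∃ b', Prune b b' ∧ b' ∉ members a) := by
  induction a using Nat.strong_induction_on generalizing b with
  | _ a ih =>
    by_contra! ⟨ha, hb⟩
    have ha0 : a ≠ 0 := by
      rintro rfl
      exact hab (size_eq_one_iff.1 (hsize.symm.trans size_zero)).symm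
    have hb0 : b ≠ 0 := by
      rintro rfl
      exact hab (size_eq_one_iff.1 (hsize.trans size_zero))
    obtain ⟨a', haa'⟩ := exists_prune ha0
    obtain ⟨b', hbb'⟩ := exists_prune hb0
    have hsa := haa'.size_eq
    have hsb := hbb'.size_eq
    have hb'a := hb b' hbb'
    have hea : a = node {b'} := eq_node_singleton_of_size_eq hb'a (by omega)
    have heb : b = node {a'} := eq_node_singleton_of_size_eq (ha a' haa') (by omega)
    have hne : b' ≠ a' := by
      rintro rfl
      exact hab (hea.trans heb.symm)
    obtain ⟨c, hc, hca'⟩ | ⟨c, hc, hcb'⟩ := ih b' (lt_of_mem_members hb'a) (by omega) hne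
    · have hmem := ha _ (hea ▸ hc.singleton)
      rw [heb, members_node, Finset.mem_singleton] at hmem
      simp [← hmem] at hca'
    · have hmem := hb _ (heb ▸ hc.singleton)
      rw [hea, members_node, Finset.mem_singleton] at hmem
      simp [← hmem] at hcb'

/-- The root is a centroid of the tree coded by `n` and the unrooted tree is asymmetric: either
every branch contains less than half of the vertices, or some branch is exactly half of the tree
and is not isomorphic to the other half. -/
def Balanced (n : ℕ) : Prop :=
  (∀ i ∈ members n, 2 * size i < size n) ∨
    ∃ i s, i ∉ s ∧ n = node (insert i s) ∧ size i = size (node s) ∧ i ≠ node s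

/-- The code of `E7` rooted at its vertex of degree three. -/
def e7Code : ℕ := node {node {node {0}}, node {0}, 0}

lemma exists_prune_balanced_of_two_mul_size_add_one_lt {n : ℕ} (hn : n ≠ 0)
    (h : ∀ i ∈ members n, 2 * size i + 1 < size n) : ∃ m, Prune n m ∧ Balanced m := by
  obtain ⟨m, hm⟩ := exists_prune hn
  refine ⟨m, hm, Or.inl fun i hi => ?_⟩
  obtain ⟨j, hj, hij⟩ := hm.exists_size_le hi
  have := h j hj
  have := hm.size_eq
  omega

lemma exists_prune_balanced_of_pair {a b : ℕ} (hsize : size a = size b) (hab : a ≠ b) :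
    ∃ m, Prune (node {a, b}) m ∧ Balanced m := by
  wlog h : ∃ a', Prune a a' ∧ a' ∉ members b generalizing a b
  · rw [Finset.pair_comm]
    exact this hsize.symm hab.symm ((exists_prune_notMem hsize hab).resolve_left h)
  obtain ⟨a', haa', ha'b⟩ := h
  have hs := haa'.size_eq
  have ha'_ne : a' ≠ b := by
    rintro rfl
    omega
  refine ⟨_, .branch (by simpa using hab) (by simpa using ha'_ne) haa',
    Or.inr ⟨b, {a'}, by simpa using ha'_ne.symm, by rw [Finset.pair_comm], ?_, ?_⟩⟩
  · rw [size_node_singleton]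
    omega
  · rintro rfl
    simp at ha'b

-- Deleting the leaf at the root works unless `a = {a'}`, in which case `a' = {z}` with `z` the only
-- pruning of `a'`. Then pruning the branch `a'` works, provided that `z` can be pruned.
lemma exists_prune_balanced_of_triple {a a' : ℕ} (haa' : Prune a a') (ha' : a' ≠ 0)
    (huniq : ∀ b, Prune a b → b = a') :
    (∃ m, Prune (node {a, a', 0}) m ∧ Balanced m) ∨ node {a, a', 0} = e7Code := by
  have hs := haa'.size_eq
  have haa'_ne : a ≠ a' := by
    rintro rfl
    omega
  have ha0 : a ≠ 0 := by
    rintro rfl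
    have := size_pos a'
    have := size_zero
    omega
  by_cases haa'_single : a = node {a'}
  swap
  · have hrot : ({a, a', 0} : Finset ℕ) = insert 0 {a, a'} := by grind
    exact .inl ⟨node {a, a'}, hrot ▸ .leaf (by simp [ha0.symm, ha'.symm]),
      .inr ⟨a, {a'}, by simpa using haa'_ne, rfl, by rw [size_node_singleton, hs], haa'_single⟩⟩
  obtain ⟨z, ha'z⟩ := exists_prune ha'
  have ha'_single : node {z} = a' := huniq _ (haa'_single ▸ ha'z.singleton)
  obtain rfl | hz := eq_or_ne z 0
  · exact .inr (by rw [haa'_single, ← ha'_single, e7Code])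
  obtain ⟨y, hzy⟩ := exists_prune hz
  have ha'y : Prune a' (node {y}) := ha'_single ▸ hzy.singleton
  have hsy := ha'y.size_eq
  have hy0 : node {y} ≠ 0 := node_ne_zero (Finset.singleton_nonempty y)
  have hay : a ≠ node {y} := by
    rintro rfl
    omega
  have hrot (b : ℕ) : ({a, b, 0} : Finset ℕ) = insert b {a, 0} := Finset.insert_comm a b {0}
  refine .inl ⟨node {a, node {y}, 0}, ?_, .inr ⟨a, {node {y}, 0}, ?_, rfl, ?_, ?_⟩⟩
  · rw [hrot, hrot]
    exact .branch (by simp [haa'_ne.symm, ha']) (by simp [hay.symm, hy0]) ha'y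
  · simp [hay, ha0]
  · rw [size_node_insert (by simpa using hy0), size_node_singleton 0, size_zero]
    omega
  · rw [haa'_single]
    refine fun h => absurd (congrArg Finset.card (node_injective h)) ?_
    rw [Finset.card_singleton, Finset.card_pair hy0]
    decide

-- Pruning `a` works if the result is a new branch; otherwise the branches are `a`, its only
-- pruning, and a single leaf.
lemma exists_prune_balanced_of_dominant {a : ℕ} {s : Finset ℕ} (hs : size (node s) = size a + 1)
    (hlt : ∀ b ∈ s, size b < size a) :
    (∃ m, Prune (node (insert a s)) m ∧ Balanced m) ∨ node (insert a s) = e7Code := by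
  have has : a ∉ s := fun h => (hlt a h).false
  have ha0 : a ≠ 0 := by
    rintro rfl
    have hs0 : s = {0} := node_injective (eq_node_singleton_zero (by rw [hs, size_zero]))
    simp [hs0] at has
  by_cases hnew : ∃ a', Prune a a' ∧ a' ∉ s
  · obtain ⟨a', haa', ha's⟩ := hnew
    have hsa := haa'.size_eq
    refine .inl ⟨_, .branch has ha's haa', .inl fun i hi => ?_⟩
    rw [members_node, Finset.mem_insert] at hi
    rw [size_node_insert ha's]
    obtain rfl | hi := hi
    · omega
    · have := hlt i hi
      omega
  push Not at hnew
  obtain ⟨a', haa'⟩ := exists_prune ha0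
  have hsa := haa'.size_eq
  obtain ⟨t, ha't, hst⟩ := exists_eq_node_insert (members_node s ▸ hnew a' haa')
  obtain rfl := node_injective hst
  rw [size_node_insert ha't] at hs
  obtain rfl : t = {0} := node_injective (eq_node_singleton_zero (by omega))
  have ha'0 : a' ≠ 0 := by simpa using ha't
  refine exists_prune_balanced_of_triple haa' ha'0 fun b hab => ?_
  obtain rfl | hb := Finset.mem_insert.1 (hnew b hab)
  · rfl
  · obtain rfl := Finset.mem_singleton.1 hb
    have := hab.size_eq
    exact absurd (size_eq_one_iff.1 (by rw [← size_zero]; omega)) ha'0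

lemma exists_prune_balanced_or_eq_e7Code {n : ℕ} (hn : n ≠ 0)
    (h : ∀ i ∈ members n, 2 * size i < size n) :
    (∃ m, Prune n m ∧ Balanced m) ∨ n = e7Code := by
  by_cases hhalf : ∀ i ∈ members n, 2 * size i + 1 < size n
  · exact .inl (exists_prune_balanced_of_two_mul_size_add_one_lt hn hhalf)
  push Not at hhalf
  obtain ⟨a, han, ha⟩ := hhalf
  have ha_lt := h a han
  obtain ⟨s, has, rfl⟩ := exists_eq_node_insert han
  rw [size_node_insert has] at ha ha_lt
  have hs : size (node s) = size a + 1 := by omega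
  by_cases hbig : ∀ b ∈ s, size b < size a
  · exact exists_prune_balanced_of_dominant hs hbig
  push Not at hbig
  obtain ⟨b, hb, hab⟩ := hbig
  have hb' : b ∈ members (node s) := (members_node s).symm ▸ hb
  have hab_eq : size a = size b := by
    have := size_lt_of_mem hb'
    omega
  obtain rfl : s = {b} := node_injective (eq_node_singleton_of_size_eq hb' (by omega))
  exact .inl (exists_prune_balanced_of_pair hab_eq (by simpa using has))

end Code

/-! ### Branches of a tree -/

section Branch

variable {V : Type*} {G : SimpleGraph V} {p v w x y u : V}

/-- For adjacent `p` and `v` in a tree, the vertex set of the component of `v` after deleting the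
edge `pv`. For `p = v` it is the whole tree, so that a tree rooted at `v` is the branch `v v`. -/
def branch (G : SimpleGraph V) (p v : V) : Set V := {u | G.dist v u ≤ G.dist p u}

/-- The pairs `p v` for which `branch G p v` is considered. -/
def IsStem (G : SimpleGraph V) (p v : V) : Prop := p = v ∨ G.Adj p v

/-- The children of the root `v` of `branch G p v`. -/
def children (G : SimpleGraph V) (p v : V) : Set V := G.neighborSet v \ {p}

@[simp]
lemma branch_self (v : V) : branch G v v = Set.univ := by
  ext
  simp [branch]

lemma mem_branch_self : v ∈ branch G p v := by simp [branch]

lemma IsStem.of_mem_children (h : w ∈ children G p v) : IsStem G v w := .inr h.1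

lemma mem_branch_iff (hT : G.IsTree) (h : G.Adj p v) :
    u ∈ branch G p v ↔ G.dist p u = G.dist v u + 1 := by
  have := hT.dist_eq_dist_add_one_of_adj u h
  rw [G.dist_comm (u := u) (v := v), G.dist_comm (u := u) (v := p)] at this
  rw [branch, Set.mem_ofPred_eq]
  omega

lemma notMem_branch (hT : G.IsTree) (h : G.Adj p v) : p ∉ branch G p v := by
  simp [mem_branch_iff hT h]

lemma ne_of_mem_branch (hT : G.IsTree) (h : G.Adj p v) (hu : u ∈ branch G p v) : u ≠ p :=
  fun hup => notMem_branch hT h (hup ▸ hu)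

lemma compl_branch (hT : G.IsTree) (h : G.Adj p v) : (branch G p v)ᶜ = branch G v p := by
  ext u
  have := hT.dist_eq_dist_add_one_of_adj u h
  rw [G.dist_comm (u := u) (v := v), G.dist_comm (u := u) (v := p)] at this
  rw [Set.mem_compl_iff, mem_branch_iff hT h, mem_branch_iff hT h.symm]
  omega

lemma exists_adj_mem_branch (hT : G.IsTree) (h : v ≠ u) : ∃ w, G.Adj v w ∧ u ∈ branch G v w := by
  obtain ⟨walk, hlen⟩ := hT.connected.exists_walk_length_eq_dist v u
  cases walk with
  | nil => exact absurd rfl h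
  | @cons _ w _ hvw tail =>
    refine ⟨w, hvw, ?_⟩
    have := G.dist_le tail
    rw [Walk.length_cons] at hlen
    rw [branch, Set.mem_ofPred_eq]
    omega

-- Both neighbors are the second vertex of the unique path from `v` to `u`.
lemma eq_of_mem_branch (hT : G.IsTree) (hx : G.Adj v x) (hy : G.Adj v y)
    (hux : u ∈ branch G v x) (huy : u ∈ branch G v y) : x = y := by
  have exists_path {w : V} (hw : G.Adj v w) (huw : u ∈ branch G v w) :
      ∃ walk : G.Walk v u, walk.IsPath ∧ walk.snd = w := by
    obtain ⟨tail, htail⟩ := hT.connected.exists_walk_length_eq_dist w u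
    refine ⟨.cons hw tail, Walk.isPath_of_length_eq_dist _ ?_, Walk.snd_cons _ _⟩
    rw [Walk.length_cons, htail, (mem_branch_iff hT hw).1 huw]
  obtain ⟨walk, hwalk, rfl⟩ := exists_path hx hux
  obtain ⟨walk', hwalk', rfl⟩ := exists_path hy huy
  rw [(hT.existsUnique_path v u).unique hwalk hwalk']

lemma branch_subset (hT : G.IsTree) (hpv : IsStem G p v) (hw : w ∈ children G p v) :
    branch G v w ⊆ branch G p v := by
  obtain rfl | hpv := hpv
  · simp
  · rw [← compl_branch hT hpv.symm]
    exact fun u huw hup => hw.2 (eq_of_mem_branch hT hw.1 hpv.symm huw hup)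

lemma exists_child_of_mem_branch (hT : G.IsTree) (hpv : IsStem G p v) (hu : u ∈ branch G p v)
    (huv : u ≠ v) : ∃ w ∈ children G p v, u ∈ branch G v w := by
  obtain ⟨w, hw, huw⟩ := exists_adj_mem_branch hT huv.symm
  refine ⟨w, ⟨hw, ?_⟩, huw⟩
  rintro rfl
  obtain rfl | hwv := hpv
  · exact hw.ne rfl
  · exact (compl_branch hT hwv ▸ huw : u ∈ (branch G w v)ᶜ) hu

lemma eq_of_adj_of_mem_branch (hT : G.IsTree) (hw : G.Adj v w) (hu : G.Adj v u)
    (huw : u ∈ branch G v w) : u = w :=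
  eq_of_mem_branch hT hu hw mem_branch_self huw

-- The endpoint of `xy` farther from `v` lies in the same branch at `v` as the nearer one.
lemma mem_branch_of_adj (hT : G.IsTree) (hw : G.Adj v w) (hx : x ∈ branch G v w) (hxy : G.Adj x y)
    (hy : y ≠ v) : y ∈ branch G v w := by
  wlog hdist : G.dist v y = G.dist v x + 1 generalizing w x y
  · obtain ⟨w', hw', hyw'⟩ := exists_adj_mem_branch hT hy.symm
    have hxw' := this hw' hyw' hxy.symm (ne_of_mem_branch hT hw hx)
      ((hT.dist_eq_dist_add_one_of_adj v hxy).resolve_right hdist)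
    rwa [eq_of_mem_branch hT hw hw' hx hxw']
  have := hT.connected.dist_triangle (u := w) (v := x) (w := y)
  rw [dist_eq_one_iff_adj.2 hxy] at this
  rw [mem_branch_iff hT hw] at hx
  rw [branch, Set.mem_ofPred_eq]
  omega

end Branch

/-! ### Isomorphisms of branches -/

section BranchIso

variable {V W : Type*} {G : SimpleGraph V} {G' : SimpleGraph W} {p' v' : W} {p v : V}

/-- A branch consists of its root and of the branches at the children of the root. -/
noncomputable def branchEquiv (hT : G.IsTree) (hpv : IsStem G p v) :
    Option (Σ w : children G p v, branch G v w) ≃ branch G p v :=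
  Equiv.ofBijective
    (fun x => x.elim ⟨v, mem_branch_self⟩ fun y => ⟨y.2, branch_subset hT hpv y.1.2 y.2.2⟩) <| by
    refine ⟨?_, fun ⟨u, hu⟩ => ?_⟩
    · rintro (_ | ⟨⟨w, hw⟩, u, hu⟩) (_ | ⟨⟨w', hw'⟩, u', hu'⟩) h <;>
        simp only [Option.elim, Subtype.mk.injEq] at h
      · rfl
      · exact absurd h.symm (ne_of_mem_branch hT hw'.1 hu')
      · exact absurd h (ne_of_mem_branch hT hw.1 hu)
      · subst h
        obtain rfl := eq_of_mem_branch hT hw.1 hw'.1 hu hu'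
        rfl
    · by_cases huv : u = v
      · exact ⟨none, by simp [huv]⟩
      · obtain ⟨w, hw, huw⟩ := exists_child_of_mem_branch hT hpv hu huv
        exact ⟨some ⟨⟨w, hw⟩, u, huw⟩, rfl⟩

@[simp]
lemma branchEquiv_none (hT : G.IsTree) (hpv : IsStem G p v) :
    (branchEquiv hT hpv none : V) = v := rfl

@[simp]
lemma branchEquiv_some (hT : G.IsTree) (hpv : IsStem G p v)
    (x : Σ w : children G p v, branch G v w) : (branchEquiv hT hpv (some x) : V) = x.2 := rfl

lemma adj_root_iff (hT : G.IsTree) {w : children G p v} (u : branch G v w) :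
    G.Adj v u ↔ (u : V) = w :=
  ⟨fun h => eq_of_adj_of_mem_branch hT w.2.1 h u.2, fun h => by rw [h]; exact w.2.1⟩

lemma adj_branch_iff (hT : G.IsTree) {w w' : children G p v} (x : branch G v w)
    (y : branch G v w') : G.Adj x y ↔ w = w' ∧ G.Adj x y := by
  refine ⟨fun h => ⟨Subtype.ext ?_, h⟩, And.right⟩
  exact eq_of_mem_branch hT w.2.1 w'.2.1
    (mem_branch_of_adj hT w.2.1 x.2 h (ne_of_mem_branch hT w'.2.1 y.2)) y.2

/-- Two branches, possibly of different trees, are isomorphic as rooted trees. -/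
def BranchIso (G : SimpleGraph V) (G' : SimpleGraph W) (p v : V) (p' v' : W) : Prop :=
  ∃ e : G.induce (branch G p v) ≃g G'.induce (branch G' p' v'),
    e ⟨v, mem_branch_self⟩ = ⟨v', mem_branch_self⟩

lemma BranchIso.refl (G : SimpleGraph V) (p v : V) : BranchIso G G p v p v := ⟨.refl, rfl⟩

lemma BranchIso.symm (h : BranchIso G G' p v p' v') : BranchIso G' G p' v' p v := by
  obtain ⟨e, he⟩ := h
  exact ⟨e.symm, by rw [← he, RelIso.symm_apply_apply]⟩

lemma exists_branch_iso_extending (hT : G.IsTree) (hT' : G'.IsTree) (hpv : IsStem G p v)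
    (hpv' : IsStem G' p' v') (σ : children G p v ≃ children G' p' v')
    (hσ : ∀ w : children G p v, BranchIso G G' v w v' (σ w)) :
    ∃ e : G.induce (branch G p v) ≃g G'.induce (branch G' p' v'),
      e ⟨v, mem_branch_self⟩ = ⟨v', mem_branch_self⟩ ∧
      ∀ w : children G p v, (e ⟨w, branch_subset hT hpv w.2 mem_branch_self⟩ : W) = σ w := by
  choose ψ hψ using hσ
  let F : branch G p v ≃ branch G' p' v' := (branchEquiv hT hpv).symm.trans <|
    (Equiv.optionCongr (Equiv.sigmaCongr σ fun w => (ψ w).toEquiv)).trans (branchEquiv hT' hpv')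
  have F_none : F (branchEquiv hT hpv none) = branchEquiv hT' hpv' none := by simp [F]
  have F_some (w : children G p v) (u : branch G v w) :
      F (branchEquiv hT hpv (some ⟨w, u⟩)) = branchEquiv hT' hpv' (some ⟨σ w, ψ w u⟩) := by
    simp [F, Equiv.sigmaCongr]
  have adj_root {w : children G p v} (u : branch G v w) : G'.Adj v' (ψ w u) ↔ G.Adj v u := by
    rw [adj_root_iff hT', adj_root_iff hT]
    simpa only [Subtype.ext_iff] using (ψ w).injective.eq_iff' (a := u) (hψ w)
  refine ⟨⟨F, fun {x y} => ?_⟩, F_none, fun w => ?_⟩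
  · obtain ⟨x, rfl⟩ := (branchEquiv hT hpv).surjective x
    obtain ⟨y, rfl⟩ := (branchEquiv hT hpv).surjective y
    simp only [comap_adj, Function.Embedding.subtype_apply]
    obtain _ | ⟨w, x⟩ := x <;> obtain _ | ⟨w', y⟩ := y <;>
      simp only [F_none, F_some, branchEquiv_none, branchEquiv_some]
    · simp
    · exact adj_root y
    · rw [adj_comm, adj_root, adj_comm]
    · rw [adj_branch_iff hT', adj_branch_iff hT, σ.apply_eq_iff_eq]
      refine and_congr_right ?_
      rintro rfl
      exact (ψ w).map_adj_iff
  · have := congrArg Subtype.val (F_some w ⟨w, mem_branch_self⟩)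
    rwa [hψ] at this

/-- The branch `v v` is the whole tree. -/
def wholeBranchIso (G : SimpleGraph V) (v : V) : G.induce (branch G v v) ≃g G where
  toEquiv := Equiv.subtypeUnivEquiv fun u => by simp
  map_rel_iff' := Iff.rfl

lemma BranchIso.exists_iso {v : V} {v' : W} (h : BranchIso G G' v v v' v') :
    ∃ φ : G ≃g G', φ v = v' := by
  obtain ⟨e, he⟩ := h
  refine ⟨(wholeBranchIso G v).symm.trans (e.trans (wholeBranchIso G' v')), ?_⟩
  exact congrArg Subtype.val he

end BranchIso

/-! ### Branches with a code -/

section HasCode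

variable {V W : Type*} {G : SimpleGraph V} {G' : SimpleGraph W} {p v w : V} {p' v' : W} {n m : ℕ}

/-- `HasCode G p v n`: the branch of `G` rooted at `v` away from `p` is a rigid rooted tree with
code `n`. -/
inductive HasCode (G : SimpleGraph V) : V → V → ℕ → Prop
  | intro {p v : V} {n : ℕ} (f : V → ℕ) (hf : Set.BijOn f (children G p v) (members n))
      (h : ∀ w ∈ children G p v, HasCode G v w (f w)) : HasCode G p v n

lemma HasCode.unique (h : HasCode G p v n) (h' : HasCode G p v m) : n = m := by
  induction h generalizing m with
  | intro f hf _ ih =>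
    obtain ⟨g, hg, h'⟩ := h'
    refine members_injective (Finset.coe_injective ?_)
    rw [← hf.image_eq, ← hg.image_eq]
    exact Set.image_congr fun w hw => ih w hw (h' w hw)

lemma HasCode.of_mem_children (h : HasCode G p v n) (hw : w ∈ children G p v) :
    ∃ i ∈ members n, HasCode G v w i := by
  obtain ⟨f, hf, h⟩ := h
  exact ⟨f w, hf.mapsTo hw, h w hw⟩

lemma HasCode.exists_child (h : HasCode G p v n) {i : ℕ} (hi : i ∈ members n) :
    ∃ w ∈ children G p v, HasCode G v w i := by
  obtain ⟨f, hf, h⟩ := h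
  obtain ⟨w, hw, rfl⟩ := hf.surjOn hi
  exact ⟨w, hw, h w hw⟩

lemma HasCode.child_injective (h : HasCode G p v n) {w' : V} {i : ℕ} (hw : w ∈ children G p v)
    (hw' : w' ∈ children G p v) (hwi : HasCode G v w i) (hwi' : HasCode G v w' i) : w = w' := by
  obtain ⟨f, hf, h⟩ := h
  exact hf.injOn hw hw' (((h w hw).unique hwi).trans (hwi'.unique (h w' hw')))

lemma HasCode.comap (e : G' ↪g G) (he : ∀ a b, G.Adj (e a) b → b ∈ Set.range e)
    (h : HasCode G (e p') (e v') n) : HasCode G' p' v' n := by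
  generalize hp : e p' = p, hv : e v' = v at h
  induction h generalizing p' v' with
  | intro f hf _ ih =>
    subst hp hv
    have mem_children_iff {w : W} : e w ∈ children G (e p') (e v') ↔ w ∈ children G' p' v' := by
      simp [children]
    refine .intro (f ∘ e) ⟨fun w hw => hf.mapsTo (mem_children_iff.2 hw), ?_, fun i hi => ?_⟩
      fun w hw => ih (e w) (mem_children_iff.2 hw) rfl rfl
    · exact hf.injOn.comp e.injective.injOn fun w hw => mem_children_iff.2 hw
    · obtain ⟨b, hb, rfl⟩ := hf.surjOn hi
      obtain ⟨w, rfl⟩ := he _ _ hb.1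
      exact ⟨w, mem_children_iff.1 hb, rfl⟩

lemma HasCode.map_iso (φ : G ≃g G') (h : HasCode G p v n) : HasCode G' (φ p) (φ v) n :=
  .comap φ.symm.toEmbedding (fun _ b _ => φ.symm.surjective b) (by simpa using h)

lemma HasCode.fixes_branch (hT : G.IsTree) (φ : G ≃g G) (h : HasCode G p v n) (hpv : IsStem G p v)
    (hp : φ p = p) (hv : φ v = v) : ∀ u ∈ branch G p v, φ u = u := by
  induction h with
  | @intro p v n f hf h ih =>
    intro u hu
    obtain rfl | huv := eq_or_ne u v
    · exact hv
    obtain ⟨w, hw, huw⟩ := exists_child_of_mem_branch hT hpv hu huv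
    have hφw : φ w ∈ children G p v :=
      ⟨hv ▸ φ.map_adj_iff.2 hw.1, fun hφw => hw.2 (φ.injective (hφw.trans hp.symm))⟩
    have hw_fix : φ w = w := (HasCode.intro f hf h).child_injective hφw hw
      (hv ▸ (h w hw).map_iso φ) (h w hw)
    exact ih w hw (.of_mem_children hw) hv hw_fix u huw

lemma HasCode.ncard_branch [Finite V] (hT : G.IsTree) (h : HasCode G p v n) (hpv : IsStem G p v) :
    (branch G p v).ncard = size n := by
  induction h with
  | @intro p v n f hf _ ih =>
    have := Fintype.ofFinite (children G p v)
    rw [← Nat.card_coe_set_eq, ← Nat.card_congr (branchEquiv hT hpv), Finite.card_option,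
      Nat.card_sigma, size_eq, add_comm, ← Finset.sum_coe_sort (members n) size]
    congr 1
    refine Fintype.sum_equiv (hf.equiv f) _ _ fun w => ?_
    exact ih w w.2 (.of_mem_children w.2)

lemma HasCode.branchIso (hT : G.IsTree) (hT' : G'.IsTree) (hpv : IsStem G p v)
    (hpv' : IsStem G' p' v') (h : HasCode G p v n) (h' : HasCode G' p' v' n) :
    BranchIso G G' p v p' v' := by
  induction h generalizing p' v' with
  | @intro p v n f hf _ ih =>
    obtain ⟨g, hg, h'⟩ := h'
    let σ := (hf.equiv f).trans (hg.equiv g).symm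
    have hσ (w : children G p v) : g (σ w) = f w :=
      congrArg Subtype.val ((hg.equiv g).apply_symm_apply (hf.equiv f w))
    obtain ⟨e, he, -⟩ := exists_branch_iso_extending hT hT' hpv hpv' σ fun w =>
      ih w w.2 (.of_mem_children w.2) (.of_mem_children (σ w).2) (hσ w ▸ h' (σ w) (σ w).2)
    exact ⟨e, he⟩

lemma HasCode.exists_iso (hT : G.IsTree) (hT' : G'.IsTree) {v : V} {v' : W}
    (h : HasCode G v v n) (h' : HasCode G' v' v' n) : ∃ φ : G ≃g G', φ v = v' :=
  (h.branchIso hT hT' (.inl rfl) (.inl rfl) h').exists_iso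

end HasCode

/-! ### Deleting a leaf from a branch -/

section Leaf

variable {V : Type*} {G : SimpleGraph V} {p v w x : V} {n m i : ℕ} {S : Set V} {s : Finset ℕ}

/-- The branches at `v` towards the vertices of `S` are rigid and pairwise nonisomorphic, with set
of codes `s`. -/
def HasCodes (G : SimpleGraph V) (v : V) (S : Set V) (s : Finset ℕ) : Prop :=
  ∃ f : V → ℕ, Set.BijOn f S s ∧ ∀ w ∈ S, HasCode G v w (f w)

lemma hasCode_node_iff : HasCode G p v (node s) ↔ HasCodes G v (children G p v) s := by
  refine ⟨fun ⟨f, hf, h⟩ => ⟨f, by rwa [members_node] at hf, h⟩, fun ⟨f, hf, h⟩ => ?_⟩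
  exact .intro f (by rwa [members_node]) h

lemma HasCodes.insert_branch (h : HasCodes G v S s) (hw : w ∉ S) (hi : i ∉ s)
    (hwi : HasCode G v w i) : HasCodes G v (insert w S) (insert i s) := by
  classical
  obtain ⟨f, hf, h⟩ := h
  have hf_update : Set.EqOn f (Function.update f w i) S := fun u hu =>
    (Function.update_of_ne (ne_of_mem_of_not_mem hu hw) i f).symm
  refine ⟨Function.update f w i, ?_, ?_⟩
  · have := (hf.congr hf_update).insert (a := w) (by simpa using hi)
    simpa using this
  · rintro u (rfl | hu)
    · simpa using hwi
    · exact hf_update hu ▸ h u hu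

lemma HasCodes.exists_eq_insert (h : HasCodes G v S (insert i s)) (hi : i ∉ s) :
    ∃ w S', w ∉ S' ∧ S = insert w S' ∧ HasCode G v w i ∧ HasCodes G v S' s := by
  obtain ⟨f, hf, h⟩ := h
  obtain ⟨w, hw, rfl⟩ := hf.surjOn (Finset.mem_coe.2 (Finset.mem_insert_self i s))
  refine ⟨w, S \ {w}, by simp, (Set.insert_sdiff_self_of_mem hw).symm, h w hw, f, ?_,
    fun u hu => h u hu.1⟩
  have := hf.sdiff_singleton hw
  simpa [hi] using this

lemma children_eq_insert (h : G.Adj p v) : children G p p = insert v (children G v p) := by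
  rw [children, children, Set.insert_sdiff_singleton, Set.sdiff_singleton_eq_self (by simp),
    Set.insert_eq_of_mem (by simpa using h)]

lemma HasCode.join {a b : ℕ} (hpv : G.Adj p v) (ha : HasCode G v p a) (hb : HasCode G p v b)
    (hba : b ∉ members a) : HasCode G p p (node (insert b (members a))) := by
  rw [← node_members a, hasCode_node_iff] at ha
  rw [hasCode_node_iff, children_eq_insert hpv]
  exact ha.insert_branch (by simp [children]) hba hb

lemma HasCode.split (hi : i ∉ s) (h : HasCode G v v (node (insert i s))) :
    ∃ w, G.Adj v w ∧ HasCode G v w i ∧ HasCode G w v (node s) := by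
  obtain ⟨w, S, hw, hS, hwi, hSs⟩ := (hasCode_node_iff.1 h).exists_eq_insert hi
  have hvw : w ∈ children G v v := hS ▸ Set.mem_insert w S
  refine ⟨w, hvw.1, hwi, hasCode_node_iff.2 ?_⟩
  rw [children_eq_insert hvw.1] at hS
  have : children G w v = S := by
    rw [← Set.insert_sdiff_self_of_notMem hw, ← hS,
      Set.insert_sdiff_self_of_notMem (by simp [children])]
  rwa [this]

lemma children_deleteIncidenceSet (hxv : x ≠ v) :
    children (G.deleteIncidenceSet x) p v = children G p v \ {x} := by
  ext w
  simp only [children, Set.mem_sdiff, mem_neighborSet, deleteIncidenceSet_adj,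
    Set.mem_singleton_iff]
  tauto

lemma HasCode.deleteIncidenceSet (hT : G.IsTree) (hpv : IsStem G p v) (h : HasCode G p v n)
    (hx : x ∉ branch G p v) : HasCode (G.deleteIncidenceSet x) p v n := by
  induction h with
  | @intro p v n f hf _ ih =>
    have hxv : x ≠ v := fun hxv => hx (hxv ▸ mem_branch_self)
    have hchildren : children (G.deleteIncidenceSet x) p v = children G p v := by
      rw [children_deleteIncidenceSet hxv, Set.sdiff_singleton_eq_self]
      exact fun hxc => hx (branch_subset hT hpv hxc mem_branch_self)
    refine .intro f (hchildren ▸ hf) fun w hw => ?_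
    rw [hchildren] at hw
    exact ih w hw (.of_mem_children hw) fun hxw => hx (branch_subset hT hpv hw hxw)

lemma HasCodes.deleteIncidenceSet (hT : G.IsTree) (hS : S ⊆ G.neighborSet v)
    (h : HasCodes G v S s) (hx : ∀ w ∈ S, x ∉ branch G v w) :
    HasCodes (G.deleteIncidenceSet x) v S s := by
  obtain ⟨f, hf, h⟩ := h
  exact ⟨f, hf, fun w hw => (h w hw).deleteIncidenceSet hT (.inr (hS hw)) (hx w hw)⟩

lemma HasCode.existsUnique_adj (hpv : G.Adj p v) (h : HasCode G p v 0) : ∃! y, G.Adj v y := by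
  refine ⟨p, hpv.symm, fun y hy => ?_⟩
  by_contra hyp
  obtain ⟨i, hi, -⟩ := h.of_mem_children ⟨hy, hyp⟩
  simp [members] at hi

lemma exists_leaf_of_prune (hT : G.IsTree) (hnm : Prune n m) (hpv : IsStem G p v)
    (h : HasCode G p v n) :
    ∃ x ∈ branch G p v, x ≠ v ∧ (∃! y, G.Adj x y) ∧ HasCode (G.deleteIncidenceSet x) p v m := by
  induction hnm generalizing p v with
  | leaf hs =>
    obtain ⟨w, S, hwS, hS, hw, hSs⟩ := (hasCode_node_iff.1 h).exists_eq_insert hs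
    have hwc : w ∈ children G p v := hS ▸ Set.mem_insert w S
    have hSc : S ⊆ children G p v := hS ▸ Set.subset_insert w S
    refine ⟨w, branch_subset hT hpv hwc mem_branch_self, hwc.1.ne', hw.existsUnique_adj hwc.1, ?_⟩
    rw [hasCode_node_iff, children_deleteIncidenceSet hwc.1.ne', hS,
      Set.insert_sdiff_self_of_notMem hwS]
    refine hSs.deleteIncidenceSet hT (fun u hu => (hSc hu).1) fun u hu hwu => hwS ?_
    rwa [eq_of_adj_of_mem_branch hT (hSc hu).1 hwc.1 hwu]
  | branch hi hj _ ih =>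
    obtain ⟨w, S, hwS, hS, hw, hSs⟩ := (hasCode_node_iff.1 h).exists_eq_insert hi
    have hwc : w ∈ children G p v := hS ▸ Set.mem_insert w S
    have hSc : S ⊆ children G p v := hS ▸ Set.subset_insert w S
    obtain ⟨x, hxw, hxw_ne, hx, hx_code⟩ := ih (.of_mem_children hwc) hw
    have hxv := ne_of_mem_branch hT hwc.1 hxw
    refine ⟨x, branch_subset hT hpv hwc hxw, hxv, hx, ?_⟩
    rw [hasCode_node_iff, children_deleteIncidenceSet hxv, Set.sdiff_singleton_eq_self, hS]
    · refine HasCodes.insert_branch ?_ hwS hj hx_code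
      refine hSs.deleteIncidenceSet hT (fun u hu => (hSc hu).1) fun u hu hxu => hwS ?_
      rwa [← eq_of_mem_branch hT (hSc hu).1 hwc.1 hxu hxw]
    · exact fun hxc => hxw_ne (eq_of_adj_of_mem_branch hT hwc.1 hxc.1 hxw)

lemma HasCode.induce_compl_singleton (hp : p ≠ x) (hv : v ≠ x)
    (h : HasCode (G.deleteIncidenceSet x) p v n) :
    HasCode (G.induce {x}ᶜ) ⟨p, hp⟩ ⟨v, hv⟩ n := by
  let e : G.induce {x}ᶜ ↪g G.deleteIncidenceSet x :=
    ⟨.subtype _, fun {a b} => by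
      simpa [deleteIncidenceSet_adj] using fun _ => ⟨a.2, b.2⟩⟩
  refine .comap e (fun a b hab => ?_) h
  exact ⟨⟨b, (deleteIncidenceSet_adj.1 hab).2.2⟩, rfl⟩

lemma exists_leaf_induce_hasCode (hT : G.IsTree) (hnm : Prune n m) (h : HasCode G v v n) :
    ∃ x, (∃! y, G.Adj x y) ∧ ∃ r, HasCode (G.induce {x}ᶜ) r r m := by
  obtain ⟨x, -, hxv, hx, hcode⟩ := exists_leaf_of_prune hT hnm (.inl rfl) h
  exact ⟨x, hx, _, hcode.induce_compl_singleton hxv.symm hxv.symm⟩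

lemma isTree_induce_compl_singleton [Finite V] (hT : G.IsTree) (hx : ∃! y, G.Adj x y) :
    (G.induce {x}ᶜ).IsTree := by
  classical
  have := Fintype.ofFinite V
  exact ⟨hT.connected.induce_compl_singleton_of_degree_eq_one
    (degree_eq_one_iff_existsUnique_adj.2 hx), hT.isAcyclic.induce _⟩

end Leaf

/-! ### Codes and automorphisms -/

section AutFree

variable {V : Type*} {G : SimpleGraph V} {p v w w' : V} {n i : ℕ}

lemma eq_of_autFree_of_hasCode (hT : G.IsTree) (hG : AutFree G) (hp : HasCode G p p n)
    (hv : HasCode G v v n) : p = v := by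
  obtain ⟨φ, hφ⟩ := hp.exists_iso hT hT hv
  rw [← hφ, hG φ]

-- Otherwise the branches at `w` and `w'` can be swapped.
lemma eq_of_autFree_of_hasCode_branch (hT : G.IsTree) (hG : AutFree G) (hw : G.Adj v w)
    (hw' : G.Adj v w') (hwi : HasCode G v w i) (hwi' : HasCode G v w' i) : w = w' := by
  classical
  let child : children G v v := ⟨w, hw, hw.ne'⟩
  let child' : children G v v := ⟨w', hw', hw'.ne'⟩
  have branchIso : BranchIso G G v w v w' := hwi.branchIso hT hT (.inr hw) (.inr hw') hwi'
  have hswap (u : children G v v) : BranchIso G G v u v (Equiv.swap child child' u) := by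
    obtain rfl | hu := eq_or_ne u child
    · simpa using branchIso
    obtain rfl | hu' := eq_or_ne u child'
    · simpa using branchIso.symm
    · rw [Equiv.swap_apply_of_ne_of_ne hu hu']
      exact .refl G v u
  obtain ⟨e, -, he⟩ := exists_branch_iso_extending hT hT (.inl rfl) (.inl rfl) _ hswap
  have e_fix := hG ((wholeBranchIso G v).symm.trans (e.trans (wholeBranchIso G v))) w
  exact e_fix.symm.trans ((he child).trans (by rw [Equiv.swap_apply_left]))

lemma ncard_branch_lt [Finite V] (hT : G.IsTree) (hpv : IsStem G p v) (hw : w ∈ children G p v) :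
    (branch G v w).ncard < (branch G p v).ncard :=
  Set.ncard_lt_ncard ⟨branch_subset hT hpv hw, fun h => notMem_branch hT hw.1 (h mem_branch_self)⟩

lemma exists_hasCode [Finite V] (hT : G.IsTree) (hG : AutFree G) (hpv : IsStem G p v) :
    ∃ n, HasCode G p v n := by
  induction hk : (branch G p v).ncard using Nat.strong_induction_on generalizing p v with
  | _ k ih =>
    have hchild (w : V) : ∃ i, w ∈ children G p v → HasCode G v w i := by
      by_cases hw : w ∈ children G p v
      · obtain ⟨i, hi⟩ := ih _ (hk ▸ ncard_branch_lt hT hpv hw) (.of_mem_children hw) rfl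
        exact ⟨i, fun _ => hi⟩
      · exact ⟨0, fun h => absurd h hw⟩
    choose f hf using hchild
    refine ⟨node ((children G p v).toFinite.image f).toFinset, hasCode_node_iff.2 ⟨f, ?_, hf⟩⟩
    rw [Set.Finite.coe_toFinset]
    refine Set.InjOn.bijOn_image fun w hw w' hw' hww' => ?_
    exact eq_of_autFree_of_hasCode_branch hT hG hw.1 hw'.1 (hf w hw) (hww' ▸ hf w' hw')

end AutFree

/-! ### Centroids -/

section Centroid

variable {V : Type*} {G : SimpleGraph V} {p v q w c x y : V} {n : ℕ}

lemma eq_of_adj_of_notMem_branch (hT : G.IsTree) (hpv : G.Adj p v) (hxy : G.Adj x y)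
    (hx : x ∈ branch G p v) (hy : y ∉ branch G p v) : x = v := by
  by_contra hxv
  obtain ⟨w, hw, hxw⟩ := exists_child_of_mem_branch hT (.inr hpv) hx hxv
  refine hy (branch_subset hT (.inr hpv) hw (mem_branch_of_adj hT hw.1 hxw hxy ?_))
  rintro rfl
  exact hy mem_branch_self

lemma branch_inj (hT : G.IsTree) (hpv : G.Adj p v) (hqw : G.Adj q w) :
    branch G p v = branch G q w ↔ p = q ∧ v = w := by
  refine ⟨fun h => ⟨?_, ?_⟩, fun ⟨hpq, hvw⟩ => by rw [hpq, hvw]⟩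
  · refine eq_of_adj_of_notMem_branch hT hqw.symm hpv ?_ ?_ <;>
      rw [← compl_branch hT hqw, ← h]
    · exact notMem_branch hT hpv
    · exact fun hv => hv mem_branch_self
  · exact eq_of_adj_of_notMem_branch hT hqw hpv.symm (h ▸ mem_branch_self)
      (h ▸ notMem_branch hT hpv)

-- The path from `v` to a vertex of `branch p v` stays in that branch, hence avoids `q`.
lemma branch_subset_branch (hT : G.IsTree) (hpv : G.Adj p v) (hqw : G.Adj q w)
    (hq : q ∉ branch G p v) (hv : v ∈ branch G q w) : branch G p v ⊆ branch G q w := by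
  intro u hu
  induction hk : G.dist v u generalizing u with
  | zero =>
    rwa [← hT.connected.dist_eq_zero_iff.1 hk]
  | succ k ih =>
    have huv : u ≠ v := by
      rintro rfl
      simp at hk
    obtain ⟨u', huu', hvu'⟩ := exists_adj_mem_branch hT huv
    rw [mem_branch_iff hT huu', G.dist_comm, G.dist_comm (u := u')] at hvu'
    have hpu := (mem_branch_iff hT hpv).1 hu
    have hu' : u' ∈ branch G p v := by
      have := hT.connected.dist_triangle (u := p) (v := u') (w := u)
      rw [dist_eq_one_iff_adj.2 huu'.symm] at this
      rw [branch, Set.mem_ofPred_eq]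
      omega
    exact mem_branch_of_adj hT hqw (ih hu' (by omega)) huu'.symm (ne_of_mem_of_not_mem hu hq)

/-- `c` is the only centroid of the tree: every branch at `c` contains less than half of the
vertices. -/
def IsCentroid (G : SimpleGraph V) (c : V) : Prop :=
  ∀ w, G.Adj c w → 2 * (branch G c w).ncard < Nat.card V

/-- `pv` is the central edge of a tree with two centroids: it divides the tree into halves with the
same number of vertices. -/
def IsHalvingEdge (G : SimpleGraph V) (p v : V) : Prop :=
  G.Adj p v ∧ (branch G p v).ncard = (branch G v p).ncard

lemma IsHalvingEdge.symm (h : IsHalvingEdge G p v) : IsHalvingEdge G v p := ⟨h.1.symm, h.2.symm⟩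

variable [Finite V]

lemma ncard_branch_add (hT : G.IsTree) (hpv : G.Adj p v) :
    (branch G p v).ncard + (branch G v p).ncard = Nat.card V := by
  rw [← compl_branch hT hpv, Set.ncard_add_ncard_compl]

lemma HasCode.size_eq (hT : G.IsTree) (h : HasCode G v v n) : size n = Nat.card V := by
  rw [← h.ncard_branch hT (.inl rfl), branch_self, Set.ncard_univ]

-- The root of a smallest branch containing at least half of the vertices is the centroid
-- unless that branch is exactly half of the tree.
lemma exists_isCentroid_or_isHalvingEdge (hT : G.IsTree) :
    (∃ c, IsCentroid G c) ∨ ∃ p v, IsHalvingEdge G p v := by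
  obtain ⟨r⟩ := hT.connected.nonempty
  let big : Set (V × V) := {e | IsStem G e.1 e.2 ∧ Nat.card V ≤ 2 * (branch G e.1 e.2).ncard}
  have hbig : (r, r) ∈ big := ⟨.inl rfl, by
    rw [branch_self, Set.ncard_univ]
    omega⟩
  obtain ⟨⟨p, v⟩, ⟨hpv, hlarge⟩, hmin⟩ :=
    Set.exists_min_image big (fun e => (branch G e.1 e.2).ncard) big.toFinite ⟨_, hbig⟩
  by_cases hhalf : IsHalvingEdge G p v
  · exact .inr ⟨p, v, hhalf⟩
  refine .inl ⟨v, fun w hw => ?_⟩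
  obtain rfl | hwp := eq_or_ne w p
  · have := ncard_branch_add hT hw
    have : (branch G w v).ncard ≠ (branch G v w).ncard := fun h => hhalf ⟨hw.symm, h⟩
    dsimp only at hlarge
    omega
  · have hwc : w ∈ children G p v := ⟨hw, hwp⟩
    by_contra! hle
    exact (ncard_branch_lt hT hpv hwc).not_ge (hmin (v, w) ⟨.inr hw, hle⟩)

lemma IsCentroid.unique (hT : G.IsTree) (hp : IsCentroid G p) (hq : IsCentroid G q) : p = q := by
  by_contra hpq
  obtain ⟨v, hpv, hqv⟩ := exists_adj_mem_branch hT hpq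
  obtain ⟨w, hqw, hpw⟩ := exists_adj_mem_branch hT (Ne.symm hpq)
  rw [← compl_branch hT hpv.symm] at hqv
  have := Set.ncard_le_ncard (branch_subset_branch hT hpv.symm hqw hqv hpw)
  have := ncard_branch_add hT hpv
  have := hp v hpv
  have := hq w hqw
  omega

lemma IsHalvingEdge.unique (hT : G.IsTree) (hpv : IsHalvingEdge G p v)
    (hqw : IsHalvingEdge G q w) : s(p, v) = s(q, w) := by
  wlog hq : q ∉ branch G p v generalizing p v
  · rw [← compl_branch hT hpv.1.symm, not_not] at hq
    rw [Sym2.eq_swap]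
    exact this hpv.symm hq
  wlog hv : v ∈ branch G q w generalizing q w
  · rw [Sym2.eq_swap (a := q)]
    refine this hqw.symm (fun hw => hv ?_) (compl_branch hT hqw.1 ▸ hv)
    rw [eq_of_adj_of_notMem_branch hT hpv.1 hqw.1.symm hw hq]
    exact mem_branch_self
  have hsub := branch_subset_branch hT hpv.1 hqw.1 hq hv
  have heq : branch G p v = branch G q w := by
    refine Set.eq_of_subset_of_ncard_le hsub ?_
    have := ncard_branch_add hT hpv.1
    have := ncard_branch_add hT hqw.1
    have := hpv.2
    have := hqw.2
    omega
  obtain ⟨rfl, rfl⟩ := (branch_inj hT hpv.1 hqw.1).1 heq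
  rfl

lemma HasCode.isCentroid_iff (hT : G.IsTree) (h : HasCode G c c n) :
    IsCentroid G c ↔ ∀ i ∈ members n, 2 * size i < size n := by
  rw [h.size_eq hT]
  constructor
  · intro hc i hi
    obtain ⟨w, hw, hwi⟩ := h.exists_child hi
    rw [← hwi.ncard_branch hT (.of_mem_children hw)]
    exact hc w hw.1
  · intro hn w hw
    obtain ⟨i, hi, hwi⟩ := h.of_mem_children ⟨hw, hw.ne'⟩
    rw [hwi.ncard_branch hT (.inr hw)]
    exact hn i hi

lemma HasCode.isHalvingEdge_iff (hT : G.IsTree) {a b : ℕ} (hpv : G.Adj p v) (hb : HasCode G p v b)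
    (ha : HasCode G v p a) : IsHalvingEdge G p v ↔ size b = size a := by
  rw [IsHalvingEdge, hb.ncard_branch hT (.inr hpv), ha.ncard_branch hT (.inr hpv.symm),
    and_iff_right hpv]

-- Every automorphism fixes the centroid, or the halving edge, whose ends it cannot exchange.
lemma autFree_of_balanced (hT : G.IsTree) (h : HasCode G c c n) (hn : Balanced n) :
    AutFree G := by
  intro φ v
  suffices hφ : φ c = c from h.fixes_branch hT φ (.inl rfl) hφ hφ v (by simp)
  obtain hcentroid | ⟨i, s, his, rfl, hsize, hne⟩ := hn
  · exact ((h.map_iso φ).isCentroid_iff hT).2 hcentroid |>.unique hT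
      ((h.isCentroid_iff hT).2 hcentroid)
  · obtain ⟨w, hcw, hw, hc⟩ := h.split his
    have hedge := (hw.isHalvingEdge_iff hT hcw hc).2 hsize
    have hedge_φ := ((hw.map_iso φ).isHalvingEdge_iff hT (φ.map_adj_iff.2 hcw)
      (hc.map_iso φ)).2 hsize
    obtain ⟨hφc, -⟩ | ⟨hφc, hφw⟩ := Sym2.eq_iff.1 (hedge_φ.unique hT hedge)
    · exact hφc
    · have hw_φ := hw.map_iso φ
      rw [hφc, hφw] at hw_φ
      exact absurd (hw_φ.unique hc) hne

/-! ### Deleting a leaf from an automorphism-free tree -/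

-- Of the two ends of the halving edge, take as root the one at which pruning the other half
-- does not create two isomorphic branches; it is the centroid of the pruned tree.
lemma exists_prune_balanced_of_isHalvingEdge (hT : G.IsTree) {a b : ℕ} (hpv : IsHalvingEdge G p v)
    (ha : HasCode G v p a) (hb : HasCode G p v b) (hab : a ≠ b) :
    ∃ c n m, HasCode G c c n ∧ Prune n m ∧ Balanced m := by
  have hsize := (hb.isHalvingEdge_iff hT hpv.1 ha).1 hpv
  wlog h : ∃ a', Prune a a' ∧ a' ∉ members b generalizing a b p v
  · exact this hpv.symm hb ha hab.symm hsize.symm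
      ((exists_prune_notMem hsize.symm hab).resolve_left h)
  obtain ⟨a', haa', ha'⟩ := h
  have ha_notMem : a ∉ members b := fun h => (size_lt_of_mem h).ne hsize.symm
  refine ⟨v, _, _, hb.join hpv.1.symm ha ha_notMem, .branch ha_notMem ha' haa', .inl fun i hi => ?_⟩
  have := haa'.size_eq
  rw [size_node_insert ha', node_members]
  rw [members_node, Finset.mem_insert] at hi
  obtain rfl | hi := hi
  · omega
  · have := size_lt_of_mem hi
    omega

lemma exists_prune_balanced_or_hasCode_e7Code (hT : G.IsTree) (hG : AutFree G)
    (hV : 2 ≤ Nat.card V) :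
    (∃ c n m, HasCode G c c n ∧ Prune n m ∧ Balanced m) ∨ ∃ c, HasCode G c c e7Code := by
  obtain ⟨c, hc⟩ | ⟨p, v, hpv⟩ := exists_isCentroid_or_isHalvingEdge hT
  · obtain ⟨n, hn⟩ := exists_hasCode hT hG (.inl (Eq.refl c))
    have hn0 : n ≠ 0 := by
      rintro rfl
      rw [← hn.size_eq hT, size_zero] at hV
      omega
    obtain ⟨m, hnm, hm⟩ | rfl :=
      exists_prune_balanced_or_eq_e7Code hn0 ((hn.isCentroid_iff hT).1 hc)
    · exact .inl ⟨c, n, m, hn, hnm, hm⟩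
    · exact .inr ⟨c, hn⟩
  · obtain ⟨b, hb⟩ := exists_hasCode hT hG (.inr hpv.1)
    obtain ⟨a, ha⟩ := exists_hasCode hT hG (.inr hpv.1.symm)
    refine .inl (exists_prune_balanced_of_isHalvingEdge hT hpv ha hb ?_)
    rintro rfl
    have ha_notMem : a ∉ members a := fun h => (size_lt_of_mem h).false
    exact hpv.1.ne (eq_of_autFree_of_hasCode hT hG (ha.join hpv.1 hb ha_notMem)
      (hb.join hpv.1.symm ha ha_notMem))

lemma exists_leaf_autFree_or_hasCode_e7Code (hT : G.IsTree) (hG : AutFree G)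
    (hV : 2 ≤ Nat.card V) :
    (∃ x, (∃! y, G.Adj x y) ∧ AutFree (G.induce {x}ᶜ)) ∨ ∃ c, HasCode G c c e7Code := by
  refine (exists_prune_balanced_or_hasCode_e7Code hT hG hV).imp_left ?_
  rintro ⟨c, n, m, hn, hnm, hm⟩
  obtain ⟨x, hx, r, hr⟩ := exists_leaf_induce_hasCode hT hnm hn
  exact ⟨x, hx, autFree_of_balanced (isTree_induce_compl_singleton hT hx) hr hm⟩

end Centroid

/-! ### The tree `E7` -/

section E7

instance : DecidableRel E7.Adj :=
  inferInstanceAs (DecidableRel (fromEdgeSet _).Adj)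

lemma isTree_E7 : E7.IsTree := by
  rw [isTree_iff_connected_and_card]
  constructor
  · have exists_adj_lt : ∀ v ≠ 0, ∃ u < v, E7.Adj u v := by decide
    refine connected_iff_exists_forall_reachable _ |>.2 ⟨0, fun v => ?_⟩
    induction v using WellFoundedLT.induction with
    | _ v ih =>
      obtain rfl | hv := eq_or_ne v 0
      · rfl
      · obtain ⟨u, huv, hadj⟩ := exists_adj_lt v hv
        exact (ih u huv).trans hadj.reachable
  · rw [Nat.card_eq_fintype_card, Nat.card_eq_fintype_card]
    decide

/-- The code of the branch of `E7` at `v` away from the vertex `0`. -/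
def e7BranchCode : Fin 7 → ℕ := ![e7Code, 0, node {0}, 0, node {node {0}}, node {0}, 0]

lemma bijOn_e7BranchCode {p v : Fin 7} (h : p = 0 ∧ v = 0 ∨ p < v ∧ E7.Adj p v) :
    Set.BijOn e7BranchCode (children E7 p v) (members (e7BranchCode v)) := by
  refine ⟨fun w hw => ?_, fun w hw w' hw' => ?_, fun i hi => ?_⟩
  · obtain ⟨hvw, hwp⟩ := hw
    rw [mem_neighborSet] at hvw
    rw [Set.mem_singleton_iff] at hwp
    rw [Finset.mem_coe]
    revert p v w
    decide
  · obtain ⟨hvw, hwp⟩ := hw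
    obtain ⟨hvw', hwp'⟩ := hw'
    rw [mem_neighborSet] at hvw hvw'
    rw [Set.mem_singleton_iff] at hwp hwp'
    revert p v w w'
    decide
  · change ∃ w, (E7.Adj v w ∧ w ≠ p) ∧ e7BranchCode w = i
    rw [Finset.mem_coe] at hi
    revert p v i
    decide

lemma hasCode_E7 : HasCode E7 0 0 e7Code := by
  suffices ∀ p v, p = 0 ∧ v = 0 ∨ p < v ∧ E7.Adj p v → HasCode E7 p v (e7BranchCode v) from
    this 0 0 (.inl ⟨rfl, rfl⟩)
  have lt_of_child : ∀ p v, p = 0 ∧ v = 0 ∨ p < v ∧ E7.Adj p v → ∀ w, E7.Adj v w → w ≠ p →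
      v < w := by decide
  intro p v h
  induction v using WellFoundedGT.induction generalizing p with
  | _ v ih =>
    refine .intro e7BranchCode (bijOn_e7BranchCode h) fun w ⟨hvw, hwp⟩ => ?_
    have hlt := lt_of_child p v h w hvw hwp
    exact ih w hlt v (.inr ⟨hlt, hvw⟩)

lemma nonempty_iso_E7 {V : Type*} {G : SimpleGraph V} (hT : G.IsTree) {c : V}
    (h : HasCode G c c e7Code) : Nonempty (G ≃g E7) :=
  let ⟨φ, _⟩ := h.exists_iso hT isTree_E7 hasCode_E7
  ⟨φ⟩

end E7

/-! ### Leaf extensions -/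

section LeafExtension

variable {V W : Type*} {G : SimpleGraph V} {G' : SimpleGraph W} {S : Set V}

lemma autFree_of_iso (e : G ≃g G') (h : AutFree G) : AutFree G' := fun φ v => by
  simpa using h ((e.trans φ).trans e.symm) (e.symm v)

lemma card_ne_two_of_autFree (h : AutFree G) : Nat.card V ≠ 2 := by
  classical
  intro hV
  obtain ⟨a, b, hab, huniv⟩ := Nat.card_eq_two_iff.1 hV
  have eq_or_eq (z : V) : z = a ∨ z = b := by
    simpa using huniv.ge (Set.mem_univ z)
  let swap : G ≃g G := ⟨Equiv.swap a b, fun {x y} => by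
    obtain rfl | rfl := eq_or_eq x <;> obtain rfl | rfl := eq_or_eq y <;> simp [G.adj_comm]⟩
  have hswap : Equiv.swap a b a = a := h swap a
  rw [Equiv.swap_apply_left] at hswap
  exact hab hswap.symm

/-- An induced subgraph of an induced subgraph is an induced subgraph. -/
noncomputable def induceInduceIso (G : SimpleGraph V) (A : Set V) (S : Set A) :
    (G.induce A).induce S ≃g G.induce (Subtype.val '' S) where
  toEquiv := Equiv.Set.image Subtype.val S Subtype.val_injective
  map_rel_iff' := Iff.rfl

/-- The subgraph induced by `S'` arises from the one induced by `S` by adjoining a leaf. -/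
def IsLeafExtension (G : SimpleGraph V) (S S' : Set V) : Prop :=
  ∃ x ∉ S, S' = insert x S ∧ (G.neighborSet x ∩ S).ncard = 1

lemma isLeafExtension_of_existsUnique_adj {x : S} (h : ∃! y, (G.induce S).Adj x y) :
    IsLeafExtension G (Subtype.val '' {x}ᶜ) S := by
  obtain ⟨y, hxy, hy⟩ := h
  have himage : Subtype.val '' ({x}ᶜ : Set S) = S \ {x.1} := by
    rw [Set.compl_eq_univ_sdiff, Set.image_sdiff Subtype.val_injective]
    simp
  refine ⟨x, by simp, by simp [himage], Set.ncard_eq_one.2 ⟨y, ?_⟩⟩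
  ext z
  rw [himage, Set.mem_singleton_iff]
  constructor
  · rintro ⟨hxz, hz, -⟩
    exact congrArg Subtype.val (hy ⟨z, hz⟩ hxz)
  · rintro rfl
    exact ⟨hxy, y.2, fun h => hxy.ne' (Subtype.ext h)⟩

lemma IsLeafExtension.ncard_eq [Finite V] {S S' : Set V} (h : IsLeafExtension G S S') :
    S'.ncard = S.ncard + 1 := by
  obtain ⟨x, hx, rfl, -⟩ := h
  exact Set.ncard_insert_of_notMem hx

lemma exists_isLeafExtension_or_nonempty_iso_E7 [Finite V] (hT : (G.induce S).IsTree)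
    (hG : AutFree (G.induce S)) (hS : 2 ≤ S.ncard) :
    (∃ S', IsLeafExtension G S' S ∧ (G.induce S').IsTree ∧ AutFree (G.induce S')) ∨
      Nonempty (G.induce S ≃g E7) := by
  obtain ⟨x, hx, hG'⟩ | ⟨c, hc⟩ := exists_leaf_autFree_or_hasCode_e7Code hT hG hS
  · let e := induceInduceIso G S {x}ᶜ
    exact .inl ⟨_, isLeafExtension_of_existsUnique_adj hx,
      e.isTree_iff.1 (isTree_induce_compl_singleton hT hx), autFree_of_iso e hG'⟩
  · exact .inr (nonempty_iso_E7 hT hc)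

lemma exists_chain_isLeafExtension [Finite V] (hT : (G.induce S).IsTree)
    (hG : AutFree (G.induce S)) (hS : 2 ≤ S.ncard) :
    ∃ (k : ℕ) (C : ℕ → Set V), Nonempty (G.induce (C 0) ≃g E7) ∧ C k = S ∧
      (∀ i < k, IsLeafExtension G (C i) (C (i + 1))) ∧ ∀ i ≤ k, AutFree (G.induce (C i)) := by
  induction hn : S.ncard generalizing S with
  | zero => omega
  | succ n ih =>
    obtain ⟨S', hS', hT', hG'⟩ | hE7 := exists_isLeafExtension_or_nonempty_iso_E7 hT hG hS
    · have hcard := hS'.ncard_eq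
      have hne : S.ncard ≠ 2 := card_ne_two_of_autFree hG
      obtain ⟨k, C, hC0, rfl, hstep, haut⟩ := ih hT' hG' (by omega) (by omega)
      have hC {i : ℕ} (hi : i ≤ k) : Function.update C (k + 1) S i = C i :=
        Function.update_of_ne (by omega) _ _
      refine ⟨k + 1, Function.update C (k + 1) S, ?_, Function.update_self .., ?_, ?_⟩
      · rwa [hC k.zero_le]
      · intro i hi
        obtain hik | rfl := (Nat.le_of_lt_succ hi).lt_or_eq
        · rw [hC hik.le, hC hik]
          exact hstep i hik
        · rwa [hC le_rfl, Function.update_self]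
      · intro i hi
        obtain hik | rfl := hi.lt_or_eq
        · rw [hC (Nat.le_of_lt_succ hik)]
          exact haut i (Nat.le_of_lt_succ hik)
        · rwa [Function.update_self]
    · exact ⟨0, fun _ => S, hE7, rfl, by simp, fun _ _ => hG⟩

end LeafExtension

end RigidTree

/-- Every finite automorphism-free tree `T` can be obtained from `E7` by successively
adjoining one leaf at a time (a new vertex joined to exactly one existing vertex),
with every intermediate tree automorphism-free.  This is expressed by a chain of
vertex subsets `S 0 ⊆ S 1 ⊆ ⋯ ⊆ S k = V(T)` of `T`, whose induced subgraphs are the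
intermediate trees: the first is isomorphic to `E7`, the last is `T` itself. -/
theorem stmt_1 {V : Type*} [Fintype V] (G : SimpleGraph V)
    (hT : G.IsTree) (h2 : 2 ≤ Fintype.card V) (hAF : AutFree G) :
    ∃ (k : ℕ) (S : ℕ → Set V),
      Nonempty ((G.induce (S 0)) ≃g E7) ∧
      S k = Set.univ ∧
      (∀ i < k, ∃ x ∉ S i, S (i + 1) = insert x (S i) ∧
        (G.neighborSet x ∩ S i).ncard = 1) ∧
      (∀ i ≤ k, AutFree (G.induce (S i))) := by
  have hcard : 2 ≤ (Set.univ : Set V).ncard := by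
    rwa [Set.ncard_univ, Nat.card_eq_fintype_card]
  exact RigidTree.exists_chain_isLeafExtension ((induceUnivIso G).symm.isTree_iff.1 hT)
    (RigidTree.autFree_of_iso (induceUnivIso G).symm hAF) hcard
end

section
/- Every finite automorphism-free tree T with |V(T)| ≥ 8 has a leaf l such that the tree T \ l obtained by deleting l is also automorphism-free. -/
open SimpleGraph

/-!
Root the tree at a centroid, a vertex no branch of which contains more than half of the tree. A
symmetry of the tree either fixes the root, and then exchanges two equal branches somewhere, or
reverses an edge at the root whose two sides are equal. Hence having no symmetry is a condition on
the multiset of branches at the root, and a leaf can be searched for recursively inside one branch.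

Take a smallest branch `s` at the root. By recursion it loses a leaf and stays without symmetry;
being smaller than before, it cannot coincide with another branch. This fails only if another
branch `b` now is half of the tree and equal to the other half. In that case prune `b` instead. This
fails only if `s = b`, which is excluded, or if the root has just three branches, namely a single
vertex, a branch `t`, and `b`, which is `t` planted on a new root; then `t` can be pruned, provided
that the tree has at least eight vertices. If `b` is half of the tree from the start, there are two
centroids; when pruning fails on both sides of the edge between them, each side is the other one
pruned and planted on a new root, so both are the same path and the tree is symmetric.
-/

lemma exists_equiv_of_map_univ_eq {α β γ : Type*} [Fintype α] [Fintype β] {f : α → γ} {g : β → γ}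
    (h : Finset.univ.val.map f = Finset.univ.val.map g) : ∃ e : α ≃ β, ∀ a, g (e a) = f a := by
  classical
  have hcard (c : γ) : Fintype.card {a // f a = c} = Fintype.card {b // g b = c} := by
    have hcount := congrArg (Multiset.count c) h
    simp only [Multiset.count_map] at hcount
    simpa only [Fintype.card_subtype, Finset.card, Finset.filter_val, eq_comm] using hcount
  exact ⟨.ofFiberEquiv fun c => Fintype.equivOfCardEq (hcard c), Equiv.ofFiberEquiv_map _⟩

/-! ### Shapes of rooted trees -/

/-- An isomorphism type of finite rooted trees. Such a type amounts to the finite multiset of the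
types of the branches at the root; Mathlib's bijection `Multiset ℕ ≃ ℕ`, under which the elements of
a multiset are smaller than its code, makes the natural numbers a model. -/
def TreeShape : Type := ℕ

namespace TreeShape

/-- The branches at the root, as a bijection. -/
def children : TreeShape ≃ Multiset TreeShape := (Denumerable.eqv (Multiset ℕ)).symm

/-- The tree with a given multiset of branches at its root. -/
def node (m : Multiset TreeShape) : TreeShape := children.symm m

@[simp] lemma children_node (m : Multiset TreeShape) : (node m).children = m :=
  children.apply_symm_apply m

@[simp] lemma node_inj {m m' : Multiset TreeShape} : node m = node m' ↔ m = m' :=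
  children.symm.injective.eq_iff

lemma exists_eq_node (t : TreeShape) : ∃ m, t = node m :=
  ⟨t.children, (children.symm_apply_apply t).symm⟩

lemma le_sum_of_mem_raise {x : ℕ} : ∀ {l : List ℕ} {k : ℕ},
    x ∈ Denumerable.raise l k → x ≤ k + l.sum
  | a :: l, k, h => by
    rw [List.sum_cons]
    rcases List.mem_cons.1 h with rfl | h
    · omega
    · have := le_sum_of_mem_raise h
      omega

lemma sum_add_length_le_encode : ∀ l : List ℕ, l.sum + l.length ≤ Encodable.encode l
  | [] => le_rfl
  | a :: l => by
    have hpair := Nat.add_le_pair a (Encodable.encode l)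
    have hl := sum_add_length_le_encode l
    simp only [List.sum_cons, List.length_cons, Encodable.encode_list_cons, Encodable.encode_nat]
    omega

lemma lt_of_mem_children {s t : TreeShape} (h : s ∈ t.children) : @LT.lt ℕ _ s t := by
  let l := Denumerable.ofNat (List ℕ) t
  have hl : Encodable.encode l = (t : ℕ) := Denumerable.encode_ofNat t
  obtain ⟨x, hx, rfl⟩ : ∃ x ∈ (Denumerable.raise l 0 : Multiset ℕ), Denumerable.ofNat ℕ x = s :=
    Multiset.mem_map.1 h
  have hsum := le_sum_of_mem_raise (Multiset.mem_coe.1 hx)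
  have hlen := sum_add_length_le_encode l
  have hpos : 0 < l.length := by
    refine List.length_pos_of_ne_nil fun hnil => ?_
    simp [hnil, Denumerable.raise] at hx
  simp only [Denumerable.ofNat_nat]
  omega

lemma wellFounded_mem_children : WellFounded fun s t : TreeShape => s ∈ t.children :=
  Subrelation.wf lt_of_mem_children (wellFounded_lt (α := ℕ))

instance : WellFoundedRelation TreeShape := ⟨_, wellFounded_mem_children⟩

/-- The number of vertices. -/
def size (t : TreeShape) : ℕ := 1 + (t.children.attach.map fun s => size s.1).sum
termination_by t
decreasing_by exact s.2

/-- The number of vertices of a forest of rooted trees. -/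
def totalSize (m : Multiset TreeShape) : ℕ := (m.map size).sum

@[simp] lemma totalSize_zero : totalSize 0 = 0 := rfl

@[simp] lemma totalSize_cons (s : TreeShape) (m : Multiset TreeShape) :
    totalSize (s ::ₘ m) = s.size + totalSize m := by simp [totalSize]

@[simp] lemma totalSize_add (m m' : Multiset TreeShape) :
    totalSize (m + m') = totalSize m + totalSize m' := by simp [totalSize]

@[simp] lemma totalSize_singleton (s : TreeShape) : totalSize {s} = s.size := by simp [totalSize]

@[simp] lemma size_node (m : Multiset TreeShape) : (node m).size = 1 + totalSize m := by
  rw [size, Multiset.attach_map_val', children_node, totalSize]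

lemma size_pos (t : TreeShape) : 0 < t.size := by
  obtain ⟨m, rfl⟩ := t.exists_eq_node
  simp

lemma size_le_totalSize {s : TreeShape} {m : Multiset TreeShape} (h : s ∈ m) :
    s.size ≤ totalSize m :=
  Multiset.single_le_sum (fun _ _ => Nat.zero_le _) _ (Multiset.mem_map_of_mem _ h)

lemma eq_zero_of_totalSize_eq_zero {m : Multiset TreeShape} (h : totalSize m = 0) : m = 0 :=
  Multiset.eq_zero_of_forall_notMem fun s hs => by
    have := size_le_totalSize hs
    have := s.size_pos
    omega

/-! ### Pruning rigid trees -/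

/-- No nontrivial automorphism fixes the root: at every vertex the branches are distinct. -/
inductive IsRigid : TreeShape → Prop
  | intro {m : Multiset TreeShape} (nodup : m.Nodup) (of_mem : ∀ s ∈ m, IsRigid s) :
      IsRigid (node m)

lemma isRigid_node {m : Multiset TreeShape} : IsRigid (node m) ↔ m.Nodup ∧ ∀ s ∈ m, IsRigid s := by
  refine ⟨fun h => ?_, fun h => .intro h.1 h.2⟩
  generalize ht : node m = t at h
  cases h with
  | intro nodup of_mem =>
    obtain rfl := node_inj.1 ht
    exact ⟨nodup, of_mem⟩

/-- `Prune t p` says that deleting some childless vertex of `t` leaves the forest `p`, which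
consists of one tree, or of none when `t` is a single vertex. -/
inductive Prune : TreeShape → Multiset TreeShape → Prop
  | root : Prune (node 0) 0
  | branch {s : TreeShape} {p r : Multiset TreeShape} (h : Prune s p) :
      Prune (node (s ::ₘ r)) {node (p + r)}

lemma Prune.totalSize_add_one {t : TreeShape} {p : Multiset TreeShape} (h : Prune t p) :
    totalSize p + 1 = t.size := by
  induction h with
  | root => simp
  | branch _ ih =>
    simp only [totalSize_singleton, size_node, totalSize_add, totalSize_cons, ← ih]
    ring

lemma Prune.card_le_one {t : TreeShape} {p : Multiset TreeShape} (h : Prune t p) :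
    p.card ≤ 1 := by
  cases h <;> simp

lemma Prune.eq_singleton {s t : TreeShape} {p : Multiset TreeShape} (h : Prune t p) (hs : s ∈ p) :
    p = {s} := by
  obtain ⟨q, rfl⟩ := Multiset.exists_cons_of_mem hs
  have := h.card_le_one
  simp_all

lemma Prune.nodup {t : TreeShape} {p : Multiset TreeShape} (h : Prune t p) : p.Nodup := by
  cases h <;> simp

lemma Prune.exists_of_singleton {t : TreeShape} {q : Multiset TreeShape}
    (h : Prune (node {t}) q) : ∃ p, Prune t p ∧ q = {node p} := by
  generalize hs : node {t} = s at h
  cases h with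
  | root => simp at hs
  | branch h =>
    obtain ⟨rfl, rfl⟩ := (Multiset.singleton_eq_cons_iff _).1 (node_inj.1 hs)
    exact ⟨_, h, by rw [add_zero]⟩

/-- Two trees, each of which is the other one pruned and planted on a new root, are the same
path. -/
lemma Prune.eq_of_prune_node {p q : Multiset TreeShape} (hq : Prune (node q) p)
    (hp : Prune (node p) q) : p = q := by
  generalize hs : node q = s at hq
  induction hq generalizing q with
  | root => exact (node_inj.1 hs).symm
  | @branch t p r ht ih =>
    obtain rfl := node_inj.1 hs
    obtain rfl : r = 0 := by simpa using hp.card_le_one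
    rw [add_zero] at hp
    obtain ⟨p', hp', hpt⟩ := hp.exists_of_singleton
    obtain rfl : t = node p' := by simpa using hpt
    simp [ih hp' rfl]

lemma Prune.isRigid_node_add {s : TreeShape} {p r : Multiset TreeShape} (hp : Prune s p)
    (hp_rigid : ∀ t ∈ p, IsRigid t) (h : IsRigid (node (s ::ₘ r))) (hdisj : Disjoint p r) :
    IsRigid (node (p + r)) := by
  simp only [isRigid_node, Multiset.nodup_cons, Multiset.nodup_add, Multiset.mem_add,
    Multiset.mem_cons] at h ⊢
  exact ⟨⟨hp.nodup, h.1.2, hdisj⟩, fun x hx => hx.elim (hp_rigid x) fun hx => h.2 x (.inr hx)⟩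

lemma exists_eq_cons_forall_size_le {m : Multiset TreeShape} (h : m ≠ 0) :
    ∃ s r, m = s ::ₘ r ∧ ∀ x ∈ r, s.size ≤ x.size := by
  classical
  obtain ⟨s, hs, hmin⟩ := m.toFinset.exists_min_image size (Multiset.toFinset_nonempty.2 h)
  obtain ⟨r, hr⟩ := Multiset.exists_cons_of_mem (Multiset.mem_toFinset.1 hs)
  exact ⟨s, r, hr, fun x hx => hmin x (by simp [hr, hx])⟩

/-- Pruning a smallest branch keeps all branches at the root distinct. -/
lemma IsRigid.exists_prune {t : TreeShape} (h : IsRigid t) :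
    ∃ p, Prune t p ∧ ∀ s ∈ p, IsRigid s := by
  induction h with
  | @intro m nodup of_mem ih =>
    rcases eq_or_ne m 0 with rfl | hm
    · exact ⟨0, .root, by simp⟩
    obtain ⟨s, r, rfl, hmin⟩ := exists_eq_cons_forall_size_le hm
    obtain ⟨p, hp, hp_rigid⟩ := ih s (Multiset.mem_cons_self s r)
    have hdisj : Disjoint p r := Multiset.disjoint_left.2 fun {x} hxp hxr => by
      have := size_le_totalSize hxp
      have := hp.totalSize_add_one
      have := hmin x hxr
      omega
    refine ⟨_, .branch hp, fun x hx => ?_⟩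
    obtain rfl := Multiset.mem_singleton.1 hx
    exact hp.isRigid_node_add hp_rigid (.intro nodup of_mem) hdisj

/-- The root is a centroid: no branch at it contains more than half of the vertices. -/
def IsCentroidal (t : TreeShape) : Prop := ∀ m, t = node m → ∀ s ∈ m, 2 * s.size ≤ t.size

/-- The tree is rigid and no edge at the root cuts it into two halves of the same shape. When the
root is a centroid this is equivalent to having no nontrivial automorphism at all, since an
automorphism moving the root then swaps two adjacent centroids. -/
def IsAsymmetric (t : TreeShape) : Prop := t.IsRigid ∧ ∀ s r, t = node (s ::ₘ r) → s ≠ node r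

/-- Some childless vertex of `t` can be deleted so that the root is a centroid of the remaining
tree, which has no nontrivial automorphism. -/
def HasAsymmetricPruning (t : TreeShape) : Prop :=
  ∃ t', Prune t {t'} ∧ t'.IsCentroidal ∧ t'.IsAsymmetric

/-- In the second case the remaining tree is symmetric: its edge from the root to the branch
`node (p + r')` cuts it into two equal halves. -/
lemma Prune.exists_obstruction {s : TreeShape} {p r : Multiset TreeShape} (hp : Prune s p)
    (hp_rigid : ∀ t ∈ p, IsRigid t) (h : IsRigid (node (s ::ₘ r)))
    (hs : 2 * s.size ≤ (node (s ::ₘ r)).size) (hr : ∀ x ∈ r, 2 * x.size < (node (s ::ₘ r)).size)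
    (hnot : ¬HasAsymmetricPruning (node (s ::ₘ r))) :
    (∃ t ∈ r, p = {t}) ∨
      ∃ r', r = node (p + r') ::ₘ r' ∧ 2 * (node (p + r')).size + 1 = (node (s ::ₘ r)).size := by
  have hp_size := hp.totalSize_add_one
  rw [size_node, totalSize_cons] at hs
  simp only [size_node, totalSize_cons] at hr
  by_cases hdisj : Disjoint p r
  swap
  · simp only [Multiset.disjoint_left, not_forall, not_not] at hdisj
    obtain ⟨t, htp, htr⟩ := hdisj
    exact .inl ⟨t, htr, hp.eq_singleton htp⟩
  right
  have hcentroidal : IsCentroidal (node (p + r)) := by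
    intro m hm x hx
    rw [← node_inj.1 hm, Multiset.mem_add] at hx
    rw [size_node, totalSize_add]
    rcases hx with hx | hx
    · have := size_le_totalSize hx
      omega
    · have := hr x hx
      omega
  have hsymm : ¬IsAsymmetric (node (p + r)) := fun hasymm =>
    hnot ⟨_, .branch hp, hcentroidal, hasymm⟩
  simp only [IsAsymmetric, hp.isRigid_node_add hp_rigid h hdisj, true_and, not_forall, not_not,
    node_inj, exists_prop] at hsymm
  obtain ⟨_, r₁, hcons, rfl⟩ := hsymm
  have hcons_size := congrArg totalSize hcons
  rw [totalSize_add, totalSize_cons, size_node] at hcons_size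
  have hmem : node r₁ ∈ p + r := by simp [hcons]
  rcases Multiset.mem_add.1 hmem with hmem | hmem
  · have := size_le_totalSize hmem
    rw [size_node] at this
    omega
  · obtain ⟨r', rfl⟩ := Multiset.exists_cons_of_mem hmem
    obtain rfl : p + r' = r₁ := by simpa using hcons
    refine ⟨r', rfl, ?_⟩
    simp only [size_node, totalSize_cons, totalSize_add] at hcons_size ⊢
    omega

lemma IsRigid.prune_of_not_hasAsymmetricPruning {a b : Multiset TreeShape}
    (ha : IsRigid (node a)) (hb : IsRigid (node b)) (hab : totalSize a = totalSize b)
    (hnot : ¬HasAsymmetricPruning (node (node a ::ₘ b))) : Prune (node a) b := by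
  obtain ⟨p, hp, hp_rigid⟩ := ha.exists_prune
  have hp_size := hp.totalSize_add_one
  rw [isRigid_node] at hb
  have hrigid : IsRigid (node (node a ::ₘ b)) := by
    refine .intro (Multiset.nodup_cons.2 ⟨fun hmem => ?_, hb.1⟩) ?_
    · have := size_le_totalSize hmem
      rw [size_node] at this
      omega
    · simpa using ⟨ha, hb.2⟩
  have hsmall : ∀ x ∈ b, 2 * x.size < (node (node a ::ₘ b)).size := fun x hx => by
    have := size_le_totalSize hx
    simp only [size_node, totalSize_cons]
    omega
  have hhalf : 2 * (node a).size ≤ (node (node a ::ₘ b)).size := by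
    simp only [size_node, totalSize_cons]
    omega
  rcases hp.exists_obstruction hp_rigid hrigid hhalf hsmall hnot with ⟨t, ht, rfl⟩ | ⟨r, -, hr⟩
  · obtain ⟨b', rfl⟩ := Multiset.exists_cons_of_mem ht
    simp only [size_node, totalSize_cons, totalSize_singleton] at hp_size hab
    obtain rfl := eq_zero_of_totalSize_eq_zero (m := b') (by omega)
    exact hp
  · rw [size_node, size_node, totalSize_cons, size_node] at hr
    omega

lemma hasAsymmetricPruning_or_of_ne {a b : Multiset TreeShape}
    (ha : IsRigid (node a)) (hb : IsRigid (node b)) (hab : totalSize a = totalSize b)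
    (hne : a ≠ b) :
    HasAsymmetricPruning (node (node a ::ₘ b)) ∨ HasAsymmetricPruning (node (node b ::ₘ a)) := by
  by_contra! hnot
  exact hne <| Prune.eq_of_prune_node
    (hb.prune_of_not_hasAsymmetricPruning ha hab.symm hnot.2)
    (ha.prune_of_not_hasAsymmetricPruning hb hab hnot.1)

lemma IsRigid.exists_obstruction {s : TreeShape} {r : Multiset TreeShape}
    (h : IsRigid (node (s ::ₘ r))) (hsmall : ∀ x ∈ s ::ₘ r, 2 * x.size < (node (s ::ₘ r)).size)
    (hnot : ¬HasAsymmetricPruning (node (s ::ₘ r))) :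
    ∃ p, Prune s p ∧ ((∃ t ∈ r, p = {t}) ∨
      ∃ r', r = node (p + r') ::ₘ r' ∧ 2 * (node (p + r')).size + 1 = (node (s ::ₘ r)).size) := by
  obtain ⟨p, hp, hp_rigid⟩ := ((isRigid_node.1 h).2 s (Multiset.mem_cons_self s r)).exists_prune
  exact ⟨p, hp, hp.exists_obstruction hp_rigid h (hsmall s (Multiset.mem_cons_self s r)).le
    (fun x hx => hsmall x (Multiset.mem_cons_of_mem hx)) hnot⟩

/-- Pruning a smallest branch `s` cannot produce a copy of another branch, which would be larger. -/
lemma IsRigid.exists_large_branch {m : Multiset TreeShape} (h : IsRigid (node m)) (hm : m ≠ 0)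
    (hsmall : ∀ x ∈ m, 2 * x.size < (node m).size) (hnot : ¬HasAsymmetricPruning (node m)) :
    ∃ s p r, Prune s p ∧ m = node (p + r) ::ₘ s ::ₘ r ∧ ∀ x ∈ r, s.size ≤ x.size := by
  obtain ⟨s, r, rfl, hmin⟩ := exists_eq_cons_forall_size_le hm
  obtain ⟨p, hp, ⟨t, ht, rfl⟩ | ⟨r', rfl, -⟩⟩ := h.exists_obstruction hsmall hnot
  · have hp_size := hp.totalSize_add_one
    have := hmin t ht
    rw [totalSize_singleton] at hp_size
    omega
  · exact ⟨s, p, r', hp, Multiset.cons_swap _ _ _, fun x hx => hmin x (by simp [hx])⟩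

lemma IsRigid.hasAsymmetricPruning_of_three_branches {s t : TreeShape}
    (h : IsRigid (node (node {t} ::ₘ s ::ₘ {t}))) (hs : s.size = 1) (ht : 3 ≤ t.size) :
    HasAsymmetricPruning (node (node {t} ::ₘ s ::ₘ {t})) := by
  have hperm : node {t} ::ₘ s ::ₘ {t} = t ::ₘ node {t} ::ₘ {s} := by
    rw [← Multiset.cons_zero t, ← Multiset.cons_zero s, Multiset.cons_swap s,
      Multiset.cons_swap _ t]
  rw [hperm] at h ⊢
  by_contra hnot
  have hsmall : ∀ x ∈ t ::ₘ node {t} ::ₘ {s},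
      2 * x.size < (node (t ::ₘ node {t} ::ₘ {s})).size := by
    simp only [Multiset.mem_cons, Multiset.mem_singleton, forall_eq_or_imp, forall_eq, size_node,
      totalSize_cons, totalSize_singleton, hs]
    omega
  obtain ⟨p, hp, ⟨x, hx, rfl⟩ | ⟨r, hr, hhalf⟩⟩ := h.exists_obstruction hsmall hnot
  · have hp_size := hp.totalSize_add_one
    rw [totalSize_singleton] at hp_size
    rcases Multiset.mem_cons.1 hx with rfl | hx
    · rw [size_node, totalSize_singleton] at hp_size
      omega
    · obtain rfl := Multiset.mem_singleton.1 hx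
      omega
  · simp only [size_node, totalSize_cons, totalSize_singleton, hs] at hhalf
    have hmem : node (p + r) ∈ node {t} ::ₘ {s} := hr ▸ Multiset.mem_cons_self _ _
    rcases Multiset.mem_cons.1 hmem with hb | hb
    · obtain rfl : {s} = r := by rwa [hb, Multiset.cons_inj_right] at hr
      obtain rfl : s = t := Multiset.mem_singleton.1 (by simp [← node_inj.1 hb])
      omega
    · rw [← size_node, Multiset.mem_singleton.1 hb] at hhalf
      omega

/-- The smallest branch is `s`, and pruning it turned the branch `b = node (p + r)` into half of the
tree. If pruning `b` likewise turns another branch into half of the tree, this is `s`, and `s = b`.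
If pruning `b` yields another branch, then `b` has a single branch and `s` is a single vertex. -/
lemma IsRigid.hasAsymmetricPruning_of_large_branch {s : TreeShape} {p r : Multiset TreeShape}
    (hp : Prune s p) (h : IsRigid (node (node (p + r) ::ₘ s ::ₘ r)))
    (hsmall : ∀ x ∈ node (p + r) ::ₘ s ::ₘ r,
      2 * x.size < (node (node (p + r) ::ₘ s ::ₘ r)).size)
    (hmin : ∀ x ∈ r, s.size ≤ x.size) (h8 : 8 ≤ (node (node (p + r) ::ₘ s ::ₘ r)).size) :
    HasAsymmetricPruning (node (node (p + r) ::ₘ s ::ₘ r)) := by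
  by_contra hnot
  have hp_size := hp.totalSize_add_one
  simp only [size_node, totalSize_cons, totalSize_add] at h8
  obtain ⟨q, hq, ⟨t, ht, rfl⟩ | ⟨r', hr, hhalf⟩⟩ := h.exists_obstruction hsmall hnot
  all_goals
    have hq_size := hq.totalSize_add_one
    simp only [size_node, totalSize_add] at hq_size
  · rw [totalSize_singleton] at hq_size
    rcases Multiset.mem_cons.1 ht with rfl | ht
    · obtain ⟨x, hx⟩ : ∃ x, x ∈ r := Multiset.exists_mem_of_ne_zero fun hr => by
        rw [hr, totalSize_zero] at hq_size
        omega
      have := hmin x hx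
      have := size_le_totalSize hx
      omega
    · obtain ⟨r, rfl⟩ := Multiset.exists_cons_of_mem ht
      rw [totalSize_cons] at hq_size h8
      obtain rfl := eq_zero_of_totalSize_eq_zero (m := p) (by have := s.size_pos; omega)
      obtain rfl := eq_zero_of_totalSize_eq_zero (m := r) (by have := s.size_pos; omega)
      simp only [zero_add, Multiset.cons_zero, totalSize_zero] at h h8 hnot hp_size hq_size
      exact hnot (h.hasAsymmetricPruning_of_three_branches hp_size.symm (by omega))
  · have hr_size := congrArg totalSize hr
    simp only [size_node, totalSize_cons, totalSize_add] at hr_size hhalf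
    obtain rfl := eq_zero_of_totalSize_eq_zero (m := r') (by omega)
    obtain ⟨rfl, rfl⟩ := (Multiset.singleton_eq_cons_iff _).1 hr.symm
    rw [add_zero] at h hq hp
    obtain rfl := hp.eq_of_prune_node hq
    simpa using (isRigid_node.1 h).1

theorem IsRigid.hasAsymmetricPruning {t : TreeShape} (h : IsRigid t) (h8 : 8 ≤ t.size)
    (hsmall : ∀ m, t = node m → ∀ s ∈ m, 2 * s.size < t.size) : HasAsymmetricPruning t := by
  obtain ⟨m, rfl⟩ := t.exists_eq_node
  by_contra hnot
  obtain ⟨s, p, r, hp, rfl, hmin⟩ := h.exists_large_branch (by rintro rfl; simp at h8)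
    (hsmall m rfl) hnot
  exact hnot (h.hasAsymmetricPruning_of_large_branch hp (hsmall _ rfl) hmin h8)

/-- If the centroid is not unique, the leaf may have to be taken on the other side of the edge
joining the two centroids; the tree is then rooted at its other centroid. -/
theorem IsAsymmetric.hasAsymmetricPruning_or {t : TreeShape} (h : IsAsymmetric t)
    (hcentroidal : IsCentroidal t) (h8 : 8 ≤ t.size) :
    HasAsymmetricPruning t ∨
      ∃ a b, t = node (node a ::ₘ b) ∧ HasAsymmetricPruning (node (node b ::ₘ a)) := by
  by_cases hsmall : ∀ m, t = node m → ∀ s ∈ m, 2 * s.size < t.size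
  · exact .inl (h.1.hasAsymmetricPruning h8 hsmall)
  push Not at hsmall
  obtain ⟨m, rfl, s, hs, hlarge⟩ := hsmall
  have hhalf := hlarge.antisymm (hcentroidal m rfl s hs)
  obtain ⟨b, rfl⟩ := Multiset.exists_cons_of_mem hs
  obtain ⟨a, rfl⟩ := s.exists_eq_node
  have hrigid := isRigid_node.1 h.1
  have hne : a ≠ b := fun hab => h.2 _ _ rfl (congrArg node hab)
  refine (hasAsymmetricPruning_or_of_ne (hrigid.2 _ hs) (.intro (Multiset.nodup_cons.1 hrigid.1).2
    fun x hx => hrigid.2 x (Multiset.mem_cons_of_mem hx)) ?_ hne).imp_right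
    fun hb => ⟨a, b, rfl, hb⟩
  simp only [size_node, totalSize_cons] at hhalf
  omega

end TreeShape

/-! ### Branches of a tree and their shapes -/

/-- The vertices on the side of `v` of the edge `s(u, v)`. As `s(v, v)` is never an edge,
`branch G v v` is the component of `v`. -/
def branch {V : Type*} (G : SimpleGraph V) (u v : V) : Set V :=
  {x | (G.deleteEdges {s(u, v)}).Reachable v x}

section Branch

variable {V : Type*} {G : SimpleGraph V} {u v w w' x y : V}

lemma self_mem_branch : v ∈ branch G u v := Reachable.refl v

lemma mem_branch_of_adj (hx : x ∈ branch G u v) (hxy : G.Adj x y) (hne : s(x, y) ≠ s(u, v)) :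
    y ∈ branch G u v :=
  Reachable.trans hx (Adj.reachable (deleteEdges_adj.2 ⟨hxy, hne⟩))

lemma branch_subset {S : Set V} (hv : v ∈ S)
    (hS : ∀ x ∈ S, ∀ y, G.Adj x y → s(x, y) ≠ s(u, v) → y ∈ S) : branch G u v ⊆ S := by
  intro x hx
  rw [branch, Set.mem_ofPred_eq, reachable_iff_reflTransGen] at hx
  induction hx with
  | refl => exact hv
  | tail _ hxy ih => exact hS _ ih _ (deleteEdges_adj.1 hxy).1 (deleteEdges_adj.1 hxy).2

lemma branch_self (hG : G.Connected) (v : V) : branch G v v = Set.univ := by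
  have hdel : G.deleteEdges {s(v, v)} = G := by simp
  exact Set.eq_univ_of_forall fun x => by
    rw [branch, Set.mem_ofPred_eq, hdel]
    exact hG.preconnected v x

lemma left_notMem_branch (hG : G.IsAcyclic) (h : G.Adj u v) : u ∉ branch G u v := fun hu =>
  isBridge_iff.1 (isAcyclic_iff_forall_adj_isBridge.1 hG h) (Reachable.symm hu)

lemma branch_subset_branch (hG : G.IsAcyclic) (hw : G.Adj v w) (hwu : w ≠ u) :
    branch G v w ⊆ branch G u v := by
  have hvw := left_notMem_branch hG hw
  suffices h : branch G v w ⊆ branch G u v ∩ branch G v w from fun x hx => (h hx).1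
  refine branch_subset ⟨?_, self_mem_branch⟩ ?_
  · refine mem_branch_of_adj self_mem_branch hw ?_
    simpa using ⟨fun _ => hw.ne', hwu⟩
  · rintro x ⟨hxu, hxv⟩ y hxy hne
    refine ⟨mem_branch_of_adj hxu hxy fun he => ?_, mem_branch_of_adj hxv hxy hne⟩
    rcases Sym2.eq_iff.1 he with ⟨rfl, rfl⟩ | ⟨rfl, rfl⟩
    · exact left_notMem_branch hG hxy hxu
    · exact hvw hxv

lemma disjoint_branch (hG : G.IsAcyclic) (hw : G.Adj v w) (hw' : G.Adj v w') (hne : w ≠ w') :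
    Disjoint (branch G v w) (branch G v w') := by
  have hvw := left_notMem_branch hG hw
  have hvw' := left_notMem_branch hG hw'
  have hsub : branch G v w ⊆ branch G v w \ branch G v w' := by
    refine branch_subset ⟨self_mem_branch, fun h => hvw' ?_⟩ ?_
    · exact mem_branch_of_adj h hw.symm (by simp [hne, hw.ne'])
    · rintro x ⟨hxw, hxw'⟩ y hxy hxy_ne
      refine ⟨mem_branch_of_adj hxw hxy hxy_ne, fun hy => hxw' ?_⟩
      refine mem_branch_of_adj hy hxy.symm fun he => ?_
      rcases Sym2.eq_iff.1 he with ⟨rfl, rfl⟩ | ⟨rfl, rfl⟩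
      · exact hvw' hy
      · exact hvw hxw
  exact Set.disjoint_left.2 fun x hx => (hsub hx).2

lemma isAcyclic_deleteIncidenceSet (hG : G.IsAcyclic) (l : V) :
    (G.deleteIncidenceSet l).IsAcyclic :=
  hG.anti (G.deleteIncidenceSet_le l)

end Branch

section Code

variable {V W : Type*} [Finite V] [Finite W] {G : SimpleGraph V} {H : SimpleGraph W}
  {u v w w' l : V}

/-- The neighbours of `v` other than `u`, that is, the roots of the branches at `v` inside
`branch G u v`. -/
noncomputable def onward (G : SimpleGraph V) (u v : V) : Finset V :=
  (Set.toFinite (G.neighborSet v \ {u})).toFinset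

@[simp] lemma mem_onward : w ∈ onward G u v ↔ G.Adj v w ∧ w ≠ u := by simp [onward]

lemma branch_eq_insert_biUnion (hG : G.IsAcyclic) (u v : V) :
    branch G u v = insert v (⋃ w ∈ onward G u v, branch G v w) := by
  simp only [mem_onward]
  refine subset_antisymm (branch_subset (Set.mem_insert _ _) ?_) (Set.insert_subset self_mem_branch
    (Set.iUnion₂_subset fun w hw => branch_subset_branch hG hw.1 hw.2))
  simp only [Set.mem_insert_iff, Set.mem_iUnion, exists_prop]
  rintro x (rfl | ⟨w, hw, hx⟩) y hxy hne
  · exact .inr ⟨y, ⟨hxy, fun hyu => hne (by rw [hyu, Sym2.eq_swap])⟩, self_mem_branch⟩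
  · by_cases he : s(x, y) = s(v, w)
    · rcases Sym2.eq_iff.1 he with ⟨rfl, rfl⟩ | ⟨rfl, rfl⟩
      · exact (left_notMem_branch hG hxy hx).elim
      · exact .inl rfl
    · exact .inr ⟨w, hw, mem_branch_of_adj hx hxy he⟩

lemma eq_or_exists_mem_branch (hG : G.IsAcyclic) {x : V} (hx : x ∈ branch G u v) :
    x = v ∨ ∃ w ∈ onward G u v, x ∈ branch G v w := by
  simpa [branch_eq_insert_biUnion hG u v] using hx

lemma branch_ssubset_branch (hG : G.IsAcyclic) (hw : w ∈ onward G u v) :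
    branch G v w ⊂ branch G u v := by
  rw [mem_onward] at hw
  exact ⟨branch_subset_branch hG hw.1 hw.2, fun h => left_notMem_branch hG hw.1 (h self_mem_branch)⟩

lemma branch_induction (hG : G.IsAcyclic) {P : V → V → Prop}
    (step : ∀ u v, (∀ w ∈ onward G u v, P v w) → P u v) (u v : V) : P u v :=
  step u v fun w _ => branch_induction hG step v w
termination_by (branch G u v).ncard
decreasing_by exact Set.ncard_lt_ncard (branch_ssubset_branch hG ‹_›)

/-- The shape of `branch G u v` rooted at `v`. In a tree, `code hG v v` is the shape of the whole
tree rooted at `v`. -/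
noncomputable def code (hG : G.IsAcyclic) (u v : V) : TreeShape :=
  .node ((onward G u v).attach.val.map fun w : onward G u v => code hG v w)
termination_by (branch G u v).ncard
decreasing_by exact Set.ncard_lt_ncard (branch_ssubset_branch hG w.2)

lemma code_eq_node (hG : G.IsAcyclic) (u v : V) :
    code hG u v = .node ((onward G u v).val.map (code hG v)) := by
  rw [code]
  exact congrArg _ (Multiset.attach_map_val' _ (code hG v))

lemma code_eq_node_cons [DecidableEq V] (hG : G.IsAcyclic) (hw : w ∈ onward G u v) :
    code hG u v = .node (code hG v w ::ₘ ((onward G u v).erase w).val.map (code hG v)) := by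
  rw [code_eq_node, Finset.erase_val, ← Multiset.map_cons, Multiset.cons_erase hw]

lemma size_code (hG : G.IsAcyclic) (u v : V) : (code hG u v).size = (branch G u v).ncard := by
  induction u, v using branch_induction hG with
  | step u v ih =>
    have hdisj : (onward G u v : Set V).PairwiseDisjoint (branch G v) := fun w hw w' hw' hne =>
      disjoint_branch hG (mem_onward.1 hw).1 (mem_onward.1 hw').1 hne
    have hnotMem : v ∉ ⋃ w ∈ onward G u v, branch G v w := by
      simp only [mem_onward, Set.mem_iUnion, not_exists]
      exact fun w hw => left_notMem_branch hG hw.1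
    have hncard : (⋃ w ∈ onward G u v, branch G v w).ncard =
        ∑ w ∈ onward G u v, (branch G v w).ncard := by
      rw [← finsum_mem_coe_finset]
      exact (Finset.finite_toSet _).ncard_biUnion (fun _ _ => Set.toFinite _) hdisj
    rw [code_eq_node, branch_eq_insert_biUnion hG, Set.ncard_insert_of_notMem hnotMem, hncard,
      TreeShape.size_node, TreeShape.totalSize, Multiset.map_map, add_comm,
      ← Finset.sum_congr rfl ih]
    rfl

lemma code_map (hG : G.IsAcyclic) (hH : H.IsAcyclic)
    (f : V ↪ W) (hf : ∀ x y, H.Adj (f x) y ↔ ∃ w, G.Adj x w ∧ f w = y) (u v : V) :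
    code hH (f u) (f v) = code hG u v := by
  induction u, v using branch_induction hG with
  | step u v ih =>
    have hmap : onward H (f u) (f v) = (onward G u v).map f := by
      ext y
      simp only [mem_onward, Finset.mem_map, hf]
      constructor
      · rintro ⟨⟨w, hw, rfl⟩, hne⟩
        exact ⟨w, ⟨hw, fun h => hne (h ▸ rfl)⟩, rfl⟩
      · rintro ⟨w, ⟨hw, hne⟩, rfl⟩
        exact ⟨⟨w, hw, rfl⟩, f.injective.ne hne⟩
    rw [code_eq_node, code_eq_node, hmap, Finset.map_val, Multiset.map_map]
    exact congrArg _ (Multiset.map_congr rfl ih)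

lemma code_apply_iso (hG : G.IsAcyclic) (φ : G ≃g G) (u v : V) :
    code hG (φ u) (φ v) = code hG u v :=
  code_map hG hG φ.toEquiv.toEmbedding (fun x y => by
    refine ⟨fun h => ⟨φ.symm y, ?_, φ.apply_symm_apply y⟩, ?_⟩
    · simpa using φ.symm.map_adj_iff.2 h
    · rintro ⟨w, hw, rfl⟩
      exact φ.map_adj_iff.2 hw) u v

lemma code_self_eq_node_cons (hG : G.IsAcyclic) (h : G.Adj v w) {b : Multiset TreeShape}
    (hb : code hG w v = .node b) : code hG v v = .node (code hG v w ::ₘ b) := by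
  classical
  have hw : w ∈ onward G v v := mem_onward.2 ⟨h, h.ne'⟩
  have honward : onward G w v = (onward G v v).erase w := by
    ext x
    simp only [mem_onward, Finset.mem_erase]
    exact ⟨fun hx => ⟨hx.2, hx.1, hx.1.ne'⟩, fun hx => ⟨hx.2.1, hx.1⟩⟩
  rw [code_eq_node, TreeShape.node_inj] at hb
  rw [code_eq_node_cons hG hw, ← honward, hb]

lemma size_code_add_size_code (hG : G.IsAcyclic) (h : G.Adj v w) :
    (code hG v w).size + (code hG w v).size = (code hG v v).size := by
  obtain ⟨b, hb⟩ := (code hG w v).exists_eq_node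
  simp only [hb, code_self_eq_node_cons hG h hb, TreeShape.size_node, TreeShape.totalSize_cons]
  ring

lemma size_code_self (hG : G.IsTree) (v : V) :
    (code hG.isAcyclic v v).size = Nat.card V := by
  rw [size_code, branch_self hG.connected, Set.ncard_univ]

lemma size_code_lt (hG : G.IsAcyclic) (hw : w ∈ onward G u v) :
    (code hG v w).size < (code hG u v).size := by
  rw [size_code, size_code]
  exact Set.ncard_lt_ncard (branch_ssubset_branch hG hw)

lemma exists_mem_onward_of_code_eq {hG : G.IsAcyclic} {s : TreeShape} {m : Multiset TreeShape}
    (h : code hG u v = .node m) (hs : s ∈ m) : ∃ w ∈ onward G u v, code hG v w = s := by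
  rw [code_eq_node, TreeShape.node_inj] at h
  exact Multiset.mem_map.1 (h ▸ hs)

lemma exists_code_self_eq_of_reroot {hG : G.IsAcyclic} {a b : Multiset TreeShape}
    (h : code hG v v = .node (.node a ::ₘ b)) : ∃ w, code hG w w = .node (.node b ::ₘ a) := by
  obtain ⟨w, hw, ha⟩ := exists_mem_onward_of_code_eq h (Multiset.mem_cons_self _ _)
  replace hw := (mem_onward.1 hw).1
  obtain ⟨b', hb'⟩ := (code hG w v).exists_eq_node
  obtain rfl : b' = b := by
    rwa [code_self_eq_node_cons _ hw hb', ha, TreeShape.node_inj, Multiset.cons_inj_right] at h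
  exact ⟨w, hb' ▸ code_self_eq_node_cons _ hw.symm ha⟩

/-! ### Shapes determine trees up to isomorphism -/

lemma exists_surjOn_onward {hG : G.IsAcyclic} {hH : H.IsAcyclic} {u' v' : W}
    (h : code hG u v = code hH u' v') : ∃ e : V → W, Set.SurjOn e (onward G u v) (onward H u' v') ∧
      ∀ w ∈ onward G u v, H.Adj v' (e w) ∧ code hH v' (e w) = code hG v w := by
  classical
  rw [code_eq_node, code_eq_node, TreeShape.node_inj] at h
  obtain ⟨e, he⟩ := exists_equiv_of_map_univ_eq (α := onward G u v) (β := onward H u' v')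
    (f := fun w => code hG v w) (g := fun w => code hH v' w) (by
      exact (Multiset.attach_map_val' _ _).trans (h.trans (Multiset.attach_map_val' _ _).symm))
  refine ⟨fun w => if hw : w ∈ onward G u v then e ⟨w, hw⟩ else v', fun w' hw' => ?_,
    fun w hw => ?_⟩
  · exact ⟨e.symm ⟨w', hw'⟩, (e.symm ⟨w', hw'⟩).2, by simp⟩
  · simp only [hw, dite_true]
    exact ⟨(mem_onward.1 (e ⟨w, hw⟩).2).1, he ⟨w, hw⟩⟩

lemma exists_eqOn_branch {α : Type*} (hG : G.IsAcyclic) (u v : V) (a : α) (F : V → V → α) :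
    ∃ f : V → α, f v = a ∧ ∀ w ∈ onward G u v, Set.EqOn f (F w) (branch G v w) := by
  classical
  refine ⟨fun x => if hx : ∃ w ∈ onward G u v, x ∈ branch G v w then F hx.choose x else a, ?_, ?_⟩
  · refine dif_neg ?_
    rintro ⟨w, hw, hv⟩
    exact left_notMem_branch hG (mem_onward.1 hw).1 hv
  · intro w hw x hx
    have hex : ∃ w ∈ onward G u v, x ∈ branch G v w := ⟨w, hw, hx⟩
    have huniq : hex.choose = w := by
      by_contra hne
      exact Set.disjoint_left.1 (disjoint_branch hG (mem_onward.1 hex.choose_spec.1).1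
        (mem_onward.1 hw).1 hne) hex.choose_spec.2 hx
    simp only [hex, dite_true, huniq]

lemma adj_cases_of_mem_branch (hG : G.IsAcyclic) {x y : V} (hx : x ∈ branch G u v)
    (hy : y ∈ branch G u v) (hxy : G.Adj x y) :
    (x = v ∧ y ∈ onward G u v) ∨ (y = v ∧ x ∈ onward G u v) ∨
      ∃ w ∈ onward G u v, x ∈ branch G v w ∧ y ∈ branch G v w := by
  have hne {z : V} (hz : z ∈ branch G u v) (hvz : G.Adj v z) : z ∈ onward G u v :=
    mem_onward.2 ⟨hvz, by rintro rfl; exact left_notMem_branch hG hvz.symm hz⟩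
  rcases eq_or_exists_mem_branch hG hx with rfl | ⟨w, hw, hxw⟩
  · exact .inl ⟨rfl, hne hy hxy⟩
  rcases eq_or_ne y v with rfl | hyv
  · exact .inr (.inl ⟨rfl, hne hx hxy.symm⟩)
  · have hxv : x ≠ v := fun h => left_notMem_branch hG (mem_onward.1 hw).1 (h ▸ hxw)
    exact .inr (.inr ⟨w, hw, hxw, mem_branch_of_adj hxw hxy (by simp [hxv, hyv])⟩)

lemma exists_hom_of_code_eq {hG : G.IsAcyclic} {hH : H.IsAcyclic} {u' v' : W}
    (h : code hG u v = code hH u' v') : ∃ f : V → W, f v = v' ∧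
      Set.SurjOn f (branch G u v) (branch H u' v') ∧
      ∀ x ∈ branch G u v, ∀ y ∈ branch G u v, G.Adj x y → H.Adj (f x) (f y) := by
  induction u, v using branch_induction hG generalizing u' v' with
  | step u v ih =>
    obtain ⟨e, he_surj, he⟩ := exists_surjOn_onward h
    have : Nonempty W := ⟨v'⟩
    choose! F hF hF_surj hF_adj using fun w hw => ih w hw (he w hw).2.symm
    obtain ⟨f, rfl, hf⟩ := exists_eqOn_branch hG u v v' F
    have hfe : ∀ w ∈ onward G u v, f w = e w := fun w hw =>
      (hf w hw self_mem_branch).trans (hF w hw)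
    refine ⟨f, rfl, fun y hy => ?_, fun x hx y hy hxy => ?_⟩
    · rcases eq_or_exists_mem_branch hH hy with rfl | ⟨w', hw', hy⟩
      · exact ⟨v, self_mem_branch, rfl⟩
      · obtain ⟨w, hw, rfl⟩ := he_surj hw'
        obtain ⟨x, hx, rfl⟩ := hF_surj w hw hy
        exact ⟨x, (branch_ssubset_branch hG hw).1 hx, hf w hw hx⟩
    · rcases adj_cases_of_mem_branch hG hx hy hxy with ⟨rfl, hy⟩ | ⟨rfl, hx⟩ | ⟨w, hw, hx, hy⟩
      · exact hfe y hy ▸ (he y hy).1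
      · exact hfe x hx ▸ (he x hx).1.symm
      · rw [hf w hw hx, hf w hw hy]
        exact hF_adj w hw x hx y hy hxy

lemma exists_iso_of_surjective (f : G →g G) (hf : Function.Surjective f) :
    ∃ φ : G ≃g G, ∀ v, φ v = f v := by
  have hinj := Finite.injective_iff_surjective.2 hf
  have hedge := Finite.surjective_of_injective (Hom.mapEdgeSet.injective f hinj)
  refine ⟨⟨.ofBijective f ⟨hinj, hf⟩, fun {x y} => ⟨fun h => ?_, f.map_adj⟩⟩, fun _ => rfl⟩
  obtain ⟨⟨e, he⟩, hexy⟩ := hedge ⟨s(f x, f y), h⟩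
  have hmap : e.map f = s(x, y).map f := congrArg Subtype.val hexy
  rwa [Sym2.map.injective hinj hmap] at he

lemma exists_iso_of_code_eq (hG : G.IsTree) {c c' : V}
    (h : code hG.isAcyclic c c = code hG.isAcyclic c' c') : ∃ φ : G ≃g G, φ c = c' := by
  obtain ⟨f, hf, hsurj, hadj⟩ := exists_hom_of_code_eq h
  simp only [branch_self hG.connected, Set.surjOn_univ, Set.mem_univ, true_implies] at hsurj hadj
  obtain ⟨φ, hφ⟩ := exists_iso_of_surjective ⟨f, hadj _ _⟩ hsurj
  exact ⟨φ, (hφ c).trans hf⟩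

/-! ### Asymmetry and centroids -/

lemma isCentroidal_code {hG : G.IsAcyclic} : (code hG v v).IsCentroidal ↔
    ∀ w, G.Adj v w → 2 * (code hG v w).size ≤ (code hG v v).size := by
  refine ⟨fun h w hw => h _ (code_eq_node hG v v) _ ?_, fun h m hm s hs => ?_⟩
  · exact Multiset.mem_map_of_mem _ (mem_onward.2 ⟨hw, hw.ne'⟩)
  · obtain ⟨w, hw, rfl⟩ := exists_mem_onward_of_code_eq hm hs
    exact h w (mem_onward.1 hw).1

namespace AutFree

lemma eq_of_code_eq (h : AutFree G) (hG : G.IsTree)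
    (hcode : code hG.isAcyclic v v = code hG.isAcyclic w w) : v = w := by
  obtain ⟨φ, rfl⟩ := exists_iso_of_code_eq hG hcode
  exact (h φ v).symm

lemma code_ne_code_symm (h : AutFree G) (hG : G.IsTree) (hvw : G.Adj v w) :
    code hG.isAcyclic v w ≠ code hG.isAcyclic w v := fun hcode => by
  obtain ⟨b, hb⟩ := (code hG.isAcyclic w v).exists_eq_node
  refine hvw.ne (h.eq_of_code_eq hG ?_)
  rw [code_self_eq_node_cons _ hvw hb, code_self_eq_node_cons _ hvw.symm (hcode.trans hb), hcode]

/-- If the branches at two neighbours of `v` have the same shape, then so has the whole tree rooted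
at either of them. -/
lemma injOn_code (h : AutFree G) (hG : G.IsTree) (v : V) :
    Set.InjOn (code hG.isAcyclic v) (G.neighborSet v) := fun w hw w' hw' hcode => by
  obtain ⟨a, ha⟩ := (code hG.isAcyclic v w).exists_eq_node
  obtain ⟨b, hb⟩ := (code hG.isAcyclic w v).exists_eq_node
  obtain ⟨b', hb'⟩ := (code hG.isAcyclic w' v).exists_eq_node
  have hbb' : b = b' := by
    have := code_self_eq_node_cons _ hw hb
    rwa [code_self_eq_node_cons _ hw' hb', hcode, TreeShape.node_inj, Multiset.cons_inj_right,
      eq_comm] at this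
  refine h.eq_of_code_eq hG ?_
  rw [code_self_eq_node_cons _ hw.symm ha, code_self_eq_node_cons _ hw'.symm (hcode ▸ ha), hb,
    hb', hbb']

lemma isRigid_code (h : AutFree G) (hG : G.IsTree) (u v : V) :
    (code hG.isAcyclic u v).IsRigid := by
  induction u, v using branch_induction hG.isAcyclic with
  | step u v ih =>
    rw [code_eq_node]
    refine .intro ((onward G u v).nodup.map_on fun w hw w' hw' => ?_) fun s hs => ?_
    · exact h.injOn_code hG v (mem_onward.1 hw).1 (mem_onward.1 hw').1
    · obtain ⟨w, hw, rfl⟩ := Multiset.mem_map.1 hs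
      exact ih w hw

lemma isAsymmetric_code (h : AutFree G) (hG : G.IsTree) (c : V) :
    (code hG.isAcyclic c c).IsAsymmetric := by
  refine ⟨h.isRigid_code hG c c, fun s r hsr hs => ?_⟩
  obtain ⟨w, hw, rfl⟩ := exists_mem_onward_of_code_eq hsr (Multiset.mem_cons_self s r)
  replace hw := (mem_onward.1 hw).1
  obtain ⟨b, hb⟩ := (code hG.isAcyclic w c).exists_eq_node
  rw [code_self_eq_node_cons _ hw hb, TreeShape.node_inj, Multiset.cons_inj_right] at hsr
  exact h.code_ne_code_symm hG hw (hs.trans (hsr ▸ hb.symm))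

end AutFree

lemma exists_isCentroidal_code (hG : G.IsTree) : ∃ c, (code hG.isAcyclic c c).IsCentroidal := by
  suffices h : ∀ u v, (G.Adj u v → 2 * (code hG.isAcyclic v u).size ≤ Nat.card V) →
      ∃ c, (code hG.isAcyclic c c).IsCentroidal by
    obtain ⟨v⟩ := hG.connected.nonempty
    exact h v v fun h => h.ne rfl |>.elim
  intro u v
  induction u, v using branch_induction hG.isAcyclic with
  | step u v ih =>
    intro hu
    by_cases hv : (code hG.isAcyclic v v).IsCentroidal
    · exact ⟨v, hv⟩
    simp only [isCentroidal_code, not_forall, not_le, exists_prop] at hv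
    obtain ⟨w, hw, hlt⟩ := hv
    have hsum := size_code_add_size_code hG.isAcyclic hw
    rw [size_code_self hG] at hlt hsum
    refine ih w (mem_onward.2 ⟨hw, ?_⟩) fun _ => by omega
    rintro rfl
    have := hu hw.symm
    omega

lemma eq_or_exists_adj_of_mem_branch (hG : G.IsAcyclic) {x : V} (hx : x ∈ branch G u v) :
    x = v ∨ ∃ y, G.Adj y x ∧ (code hG y x).size < (code hG u v).size := by
  induction u, v using branch_induction hG with
  | step u v ih =>
    refine (eq_or_exists_mem_branch hG hx).imp_right fun ⟨w, hw, hxw⟩ => ?_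
    rcases ih w hw hxw with rfl | ⟨y, hy, hlt⟩
    · exact ⟨v, (mem_onward.1 hw).1, size_code_lt hG hw⟩
    · exact ⟨y, hy, hlt.trans (size_code_lt hG hw)⟩

lemma adj_of_isCentroidal_code (hG : G.IsTree) {c c' : V}
    (hc : (code hG.isAcyclic c c).IsCentroidal) (hc' : (code hG.isAcyclic c' c').IsCentroidal)
    (hne : c' ≠ c) : G.Adj c c' := by
  simp only [isCentroidal_code, size_code_self hG] at hc hc'
  have hmem : c' ∈ branch G c c := branch_self hG.connected c ▸ Set.mem_univ c'
  obtain ⟨w, hw, hcw⟩ := (eq_or_exists_mem_branch hG.isAcyclic hmem).resolve_left hne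
  replace hw := (mem_onward.1 hw).1
  rcases eq_or_exists_adj_of_mem_branch hG.isAcyclic hcw with rfl | ⟨y, hy, hlt⟩
  · exact hw
  · have hhalf := hc w hw
    have hhalf' := hc' y hy.symm
    have hsum := size_code_add_size_code hG.isAcyclic hy
    rw [size_code_self hG] at hsum
    omega

/-- If `φ` moved `c`, then `φ c` would be a centroid adjacent to `c`. The side of `c` of the edge
between them is the `φ`-image of a branch at `c`; by its size this branch is not a part of it, so it
is the other side of the edge, and both sides have the same shape. -/
lemma apply_eq_of_isAsymmetric_code (hG : G.IsTree) {c : V}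
    (hc : (code hG.isAcyclic c c).IsCentroidal) (hasymm : (code hG.isAcyclic c c).IsAsymmetric)
    (φ : G ≃g G) : φ c = c := by
  by_contra hne
  have hcode := code_apply_iso hG.isAcyclic φ
  have hadj : G.Adj c (φ c) := adj_of_isCentroidal_code hG hc ((hcode c c).symm ▸ hc) hne
  obtain ⟨w, hw⟩ := φ.surjective c
  have hcw : code hG.isAcyclic (φ c) c = code hG.isAcyclic c w := by rw [← hcode c w, hw]
  rcases eq_or_ne w (φ c) with rfl | hwc
  · obtain ⟨b, hb⟩ := (code hG.isAcyclic (φ c) c).exists_eq_node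
    exact hasymm.2 _ b (code_self_eq_node_cons hG.isAcyclic hadj hb) (hcw ▸ hb)
  · have hadj' : G.Adj c w := φ.map_adj_iff.1 (hw.symm ▸ hadj.symm)
    exact (size_code_lt hG.isAcyclic (mem_onward.2 ⟨hadj', hwc⟩)).ne (congrArg _ hcw.symm)

lemma apply_eq_of_isRigid_code (hG : G.IsAcyclic) (φ : G ≃g G) (h : (code hG u v).IsRigid)
    (hu : φ u = u) (hv : φ v = v) : ∀ x ∈ branch G u v, φ x = x := by
  induction u, v using branch_induction hG with
  | step u v ih =>
    rw [code_eq_node, TreeShape.isRigid_node] at h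
    intro x hx
    rcases eq_or_exists_mem_branch hG hx with rfl | ⟨w, hw, hxw⟩
    · exact hv
    have hφw : φ w ∈ onward G u v := by
      rw [mem_onward] at hw ⊢
      exact ⟨hv ▸ φ.map_adj_iff.2 hw.1, hu ▸ φ.injective.ne hw.2⟩
    have hcode : code hG v (φ w) = code hG v w := by
      conv_lhs => rw [← hv, code_apply_iso]
    refine ih w hw (h.2 _ (Multiset.mem_map_of_mem _ hw)) hv ?_ x hxw
    exact Multiset.inj_on_of_nodup_map h.1 _ hφw _ hw hcode

lemma autFree_of_isAsymmetric_code (hG : G.IsTree) {c : V}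
    (hc : (code hG.isAcyclic c c).IsCentroidal)
    (hasymm : (code hG.isAcyclic c c).IsAsymmetric) : AutFree G := fun φ x => by
  have hφc := apply_eq_of_isAsymmetric_code hG hc hasymm φ
  exact apply_eq_of_isRigid_code hG.isAcyclic φ hasymm.1 hφc hφc x
    (branch_self hG.connected c ▸ Set.mem_univ x)

/-! ### Deleting a leaf -/

lemma onward_deleteIncidenceSet [DecidableEq V] (u : V) (hv : v ≠ l) :
    onward (G.deleteIncidenceSet l) u v = (onward G u v).erase l := by
  ext x
  simp only [mem_onward, deleteIncidenceSet_adj, Finset.mem_erase]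
  tauto

lemma code_deleteIncidenceSet_of_notMem (hG : G.IsAcyclic) (hl : l ∉ branch G u v) :
    code (isAcyclic_deleteIncidenceSet hG l) u v = code hG u v := by
  classical
  induction u, v using branch_induction hG with
  | step u v ih =>
    have hne {w : V} (hw : w ∈ branch G u v) : w ≠ l := fun h => hl (h ▸ hw)
    have hsub {w : V} (hw : w ∈ onward G u v) : branch G v w ⊆ branch G u v :=
      (branch_ssubset_branch hG hw).1
    rw [code_eq_node, code_eq_node, onward_deleteIncidenceSet u (hne self_mem_branch),
      Finset.erase_eq_of_notMem fun h => hne (hsub h self_mem_branch) rfl]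
    exact congrArg _ (Multiset.map_congr rfl fun w hw => ih w hw fun h => hl (hsub hw h))

/-- Here `p` is what the deletion of `l` leaves of the branch at `w`. -/
lemma code_deleteIncidenceSet_of_mem [DecidableEq V] (hG : G.IsAcyclic) (hw : w ∈ onward G u v)
    (hl : l ∈ branch G v w) {p : Multiset TreeShape}
    (hp : l = w ∧ p = 0 ∨ l ≠ w ∧ p = {code (isAcyclic_deleteIncidenceSet hG l) v w}) :
    code (isAcyclic_deleteIncidenceSet hG l) u v =
      .node (p + ((onward G u v).erase w).val.map (code hG v)) := by
  have hadj := (mem_onward.1 hw).1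
  have hvl : v ≠ l := fun h => left_notMem_branch hG hadj (h ▸ hl)
  have hl' {x : V} (hx : x ∈ (onward G u v).erase w) : l ∉ branch G v x := by
    rw [Finset.mem_erase, mem_onward] at hx
    exact Set.disjoint_left.1 (disjoint_branch hG hadj hx.2.1 hx.1.symm) hl
  have hrest : ((onward G u v).erase w).val.map (code (isAcyclic_deleteIncidenceSet hG l) v) =
      ((onward G u v).erase w).val.map (code hG v) :=
    Multiset.map_congr rfl fun x hx => code_deleteIncidenceSet_of_notMem hG (hl' hx)
  have honward := onward_deleteIncidenceSet (G := G) u hvl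
  rcases hp with ⟨rfl, rfl⟩ | ⟨hlw, rfl⟩
  · rw [code_eq_node, honward, hrest, zero_add]
  · have hnotMem : l ∉ onward G u v := fun h =>
      hl' (Finset.mem_erase.2 ⟨hlw, h⟩) self_mem_branch
    rw [Finset.erase_eq_of_notMem hnotMem] at honward
    rw [code_eq_node_cons _ (honward ▸ hw), honward, hrest, Multiset.singleton_add]

lemma isLeaf_of_code_eq_node_zero {hG : G.IsAcyclic} (huv : G.Adj u v)
    (h : code hG u v = .node 0) : IsLeaf G v := by
  rw [code_eq_node, TreeShape.node_inj, Multiset.map_eq_zero, Finset.val_eq_zero] at h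
  refine Set.ncard_eq_one.2 ⟨u, Set.eq_singleton_iff_unique_mem.2 ⟨huv.symm, fun w hw => ?_⟩⟩
  by_contra hne
  exact Finset.notMem_empty w (h ▸ mem_onward.2 ⟨hw, hne⟩)

lemma exists_isLeaf_of_prune (hG : G.IsAcyclic) {p : Multiset TreeShape}
    (h : TreeShape.Prune (code hG u v) p) (huv : p = 0 → G.Adj u v) :
    ∃ l ∈ branch G u v, IsLeaf G l ∧
      (l = v ∧ p = 0 ∨ l ≠ v ∧ p = {code (isAcyclic_deleteIncidenceSet hG l) u v}) := by
  classical
  generalize ht : code hG u v = t at h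
  induction h generalizing u v with
  | root => exact ⟨v, self_mem_branch, isLeaf_of_code_eq_node_zero (huv rfl) ht, .inl ⟨rfl, rfl⟩⟩
  | branch _ ih =>
    obtain ⟨w, hw, rfl⟩ := exists_mem_onward_of_code_eq ht (Multiset.mem_cons_self _ _)
    have hvw := (mem_onward.1 hw).1
    rw [code_eq_node_cons hG hw, TreeShape.node_inj, Multiset.cons_inj_right] at ht
    obtain ⟨l, hl, hleaf, hp⟩ := ih (fun _ => hvw) rfl
    refine ⟨l, (branch_ssubset_branch hG hw).1 hl, hleaf, .inr ⟨?_, ?_⟩⟩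
    · rintro rfl
      exact left_notMem_branch hG hvw hl
    · rw [code_deleteIncidenceSet_of_mem hG hw hl hp, ht]

lemma isTree_induce_ne_of_isLeaf (hG : G.IsTree) (hl : IsLeaf G l) :
    (G.induce {x | x ≠ l}).IsTree := by
  have := Fintype.ofFinite (G.neighborSet l)
  refine ⟨?_, hG.isAcyclic.induce _⟩
  refine hG.connected.induce_compl_singleton_of_degree_eq_one (v := l) ?_
  exact (Set.ncard_eq_toFinset_card' _).symm.trans hl

lemma code_induce_ne (hG : G.IsAcyclic) (u v : {x | x ≠ l}) :
    code (hG.induce {x | x ≠ l}) u v = code (isAcyclic_deleteIncidenceSet hG l) u v := by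
  refine (code_map _ _ (.subtype (· ≠ l)) (fun x y => ?_) u v).symm
  simp only [Function.Embedding.subtype_apply, deleteIncidenceSet_adj, comap_adj]
  exact ⟨fun ⟨hxy, _, hy⟩ => ⟨⟨y, hy⟩, hxy, rfl⟩, by rintro ⟨w, hw, rfl⟩; exact ⟨hw, x.2, w.2⟩⟩

lemma exists_isLeaf_autFree_induce (hG : G.IsTree) {c : V}
    (h : (code hG.isAcyclic c c).HasAsymmetricPruning) :
    ∃ l, IsLeaf G l ∧ AutFree (G.induce {x | x ≠ l}) := by
  obtain ⟨_, hprune, hcentroidal, hasymm⟩ := h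
  have hne := Multiset.singleton_ne_zero (α := TreeShape)
  obtain ⟨l, -, hl, ⟨-, h0⟩ | ⟨hlc, hcode⟩⟩ := exists_isLeaf_of_prune hG.isAcyclic hprune
    fun h0 => (hne _ h0).elim
  · exact (hne _ h0).elim
  · obtain rfl := Multiset.singleton_inj.1 hcode
    have hinduce := code_induce_ne hG.isAcyclic (l := l) ⟨c, hlc.symm⟩ ⟨c, hlc.symm⟩
    exact ⟨l, hl, autFree_of_isAsymmetric_code (isTree_induce_ne_of_isLeaf hG hl)
      (hinduce ▸ hcentroidal) (hinduce ▸ hasymm)⟩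

end Code

/-- Every finite automorphism-free tree with at least 8 vertices has a leaf whose deletion
leaves an automorphism-free tree. -/
theorem stmt_12 {V : Type*} [Fintype V] (G : SimpleGraph V)
    (hT : G.IsTree) (h8 : 8 ≤ Fintype.card V) (hAF : AutFree G) :
    ∃ l : V, IsLeaf G l ∧ AutFree (G.induce {x : V | x ≠ l}) := by
  obtain ⟨c, hc⟩ := exists_isCentroidal_code hT
  have hsize : 8 ≤ (code hT.isAcyclic c c).size := by
    rwa [size_code_self hT, Nat.card_eq_fintype_card]
  rcases (hAF.isAsymmetric_code hT c).hasAsymmetricPruning_or hc hsize with h | ⟨a, b, hab, h⟩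
  · exact exists_isLeaf_autFree_induce hT h
  · obtain ⟨w, hw⟩ := exists_code_self_eq_of_reroot hab
    exact exists_isLeaf_autFree_induce hT (hw ▸ h)
end
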